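/- arXiv:1910.02434 — 2 statements merged into one kernel-verified Lean document; each statement's English description precedes it below -/
import Mathlib

section
/- Let d ≥ 2, 1 ≤ p ≤ ∞, and let η be a filter in C^κ(R₊) with κ ≥ ⌊(d+3)/2⌋ such that η is constant on [0,a] for some 0 < a < 2. Then for every x ∈ S^d and every n ≥ 1, the filtered kernel satisfies ‖K_n(x · ·)‖_{L_p(S^d)} ≤ c₁ n^{d(1−1/p)}, where c₁ is a constant depending only on d, η, κ and p. -/
/-!
# `L_p` bounds for filtered zonal kernels on the sphere

Write `d = k + 2` and `λ = (d - 1) / 2`. Since `Z_{d,l} P_l = (l + λ) / λ · C_l^λ`, the filtered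
kernel is a constant times the zonal polynomial `P_n = ∑_{l ≤ 2n} η(l/n) (l + λ) C_l^λ`. The
theorem follows by interpolation (`eLpNorm_le_of_sup_of_lintegral`) from two bounds, uniform in the
centre `x`: the kernel is `O(n^d)` in the supremum norm and `O(1)` in `L¹`.

The supremum bound (`zonalSum_sup_bound`) is `|C_l^λ| ≤ C_l^λ(1) = O(l^{d-2})` summed over
`l ≤ 2n`; the first inequality is Sonin's monotonicity argument (`abs_gegenbauer_le`).

The `L¹` bound (`zonalSum_L1_bound`) rests on weighted `L²` bounds. By the three-term recurrence,
multiplication by `1 - t` acts on the coefficients of such a sum as a second-difference operator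
(`coefOp`). The coefficients `η(l/n)` are samples at step `1/n` of a `C^κ` function which vanish
for `l < n/2`, so each application gains a factor `n^{-2}` and costs two derivatives
(`diffBound_coefOp_iterate`). Orthogonality of the Gegenbauer polynomials then gives
`∫ (1 - t)^s P_n² w = O(n^{d - 2s})` for `s ≤ κ` (`zonalInt_weighted_bound`), where `w` is the zonal
weight; when `s` is odd the last factor `1 - t` is used through its Dirichlet form
(`zonalInt_one_sub_mul_sq`), which costs only one derivative. For `s = ⌊k/2⌋ + 2 = ⌊d/2⌋ + 1`,
pairing `P_n² (1 + (n² (1 - t))^s)` with the reciprocal weight, whose integral is `O(n^{-d})`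
because `2s > d`, bounds `∫ |P_n| w` uniformly in `n`; this `s` is at most `⌊(d+3)/2⌋ ≤ κ`.

It remains to bound integrals of zonal functions for the Hausdorff measure on the sphere by
integrals in `θ` (`sphere_lintegral_le`). Only an upper bound is needed, so the exact value of the
Hausdorff measure plays no part: stereographic projection from a pole maps a disc of radius `2` onto
the opposite hemisphere without increasing distances, and polar coordinates evaluate the
integral over the disc.
-/

open MeasureTheory ProbabilityTheory Real Filter
open scoped BigOperators ENNReal RealInnerProductSpace

noncomputable section

/-- The unit sphere `S^d ⊂ ℝ^{d+1}`. -/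
abbrev UnitSphere (d : ℕ) : Type := Metric.sphere (0 : EuclideanSpace ℝ (Fin (d + 1))) 1

/-- Euclidean inner product of two points on the sphere. -/
def sdot {d : ℕ} (x y : UnitSphere d) : ℝ :=
  ⟪(x : EuclideanSpace ℝ (Fin (d + 1))), (y : EuclideanSpace ℝ (Fin (d + 1)))⟫

/-- Geodesic distance on the sphere. -/
def geoDist {d : ℕ} (x y : UnitSphere d) : ℝ := Real.arccos (sdot x y)

/-- Surface (Lebesgue) measure on `S^d`: the `d`-dimensional Hausdorff measure. -/
def sphereMeasure (d : ℕ) : Measure (UnitSphere d) := μH[d]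

/-- Spherical polynomials of degree at most `n`: restrictions to the sphere of
polynomials on `ℝ^{d+1}` of total degree at most `n`. -/
def sphPoly (d n : ℕ) : Set (UnitSphere d → ℝ) :=
  {f | ∃ p : MvPolynomial (Fin (d + 1)) ℝ, p.totalDegree ≤ n ∧
    ∀ x : UnitSphere d, f x = MvPolynomial.eval (fun i => (x : EuclideanSpace ℝ (Fin (d + 1))) i) p}

/-- The space of spherical harmonics of degree `ℓ`: restrictions to the sphere of
homogeneous harmonic polynomials of degree `ℓ` on `ℝ^{d+1}`. -/
def sphHarmonic (d ℓ : ℕ) : Set (UnitSphere d → ℝ) :=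
  {f | ∃ p : MvPolynomial (Fin (d + 1)) ℝ, p.IsHomogeneous ℓ ∧
    (∑ i : Fin (d + 1), MvPolynomial.pderiv i (MvPolynomial.pderiv i p)) = 0 ∧
    ∀ x : UnitSphere d, f x = MvPolynomial.eval (fun i => (x : EuclideanSpace ℝ (Fin (d + 1))) i) p}

/-- A filter of smoothness `κ`: `η ∈ C^κ(ℝ₊)`, `supp η ⊆ [1/2,2]`, and
`η(t)² + η(2t)² = 1` on `[1/2,1]`. -/
structure IsFilter (η : ℝ → ℝ) (κ : ℕ) : Prop where
  smooth : ContDiffOn ℝ κ η (Set.Ici 0)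
  supp : ∀ t : ℝ, 0 ≤ t → t ∉ Set.Icc (1/2 : ℝ) 2 → η t = 0
  partition : ∀ t ∈ Set.Icc (1/2 : ℝ) 1, (η t) ^ 2 + (η (2 * t)) ^ 2 = 1

/-- Gegenbauer polynomials `C_ℓ^λ` via the three-term recurrence. -/
def gegenbauer (lam : ℝ) : ℕ → Polynomial ℝ
  | 0 => 1
  | 1 => Polynomial.C (2 * lam) * Polynomial.X
  | (n + 2) =>
      Polynomial.C (2 * ((n : ℝ) + 1 + lam) / ((n : ℝ) + 2)) * Polynomial.X *
          gegenbauer lam (n + 1) -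
        Polynomial.C (((n : ℝ) + 2 * lam) / ((n : ℝ) + 2)) * gegenbauer lam n

/-- The normalized Gegenbauer polynomial `P_ℓ^{(d+1)}` with `P_ℓ^{(d+1)}(1) = 1`. -/
def normGegenbauer (d ℓ : ℕ) (t : ℝ) : ℝ :=
  (gegenbauer (((d : ℝ) - 1) / 2) ℓ).eval t / (gegenbauer (((d : ℝ) - 1) / 2) ℓ).eval 1

/-- `Z_{d,ℓ}`, the dimension of the space of spherical harmonics of degree `ℓ` on `S^d`. -/
def harmDim (d ℓ : ℕ) : ℝ :=
  if ℓ = 0 then 1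
  else (2 * (ℓ : ℝ) + d - 1) / ((ℓ : ℝ) + d - 1) * (Nat.choose (ℓ + d - 1) ℓ : ℝ)

/-- The volume `|S^d| = 2 π^{(d+1)/2} / Γ((d+1)/2)`. -/
def sphereVol (d : ℕ) : ℝ :=
  2 * Real.pi ^ (((d : ℝ) + 1) / 2) / Real.Gamma (((d : ℝ) + 1) / 2)

/-- The filtered kernel `K_n(t) = Σ_ℓ η(ℓ/n) (Z_{d,ℓ}/|S^d|) P_ℓ^{(d+1)}(t)`. -/
def filteredKernel (d : ℕ) (η : ℝ → ℝ) (n : ℕ) (t : ℝ) : ℝ :=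
  ∑' ℓ : ℕ, η ((ℓ : ℝ) / (n : ℝ)) * (harmDim d ℓ / sphereVol d) * normGegenbauer d ℓ t

/-- Mesh norm (covering radius) of a finite point configuration on the sphere. -/
def meshNorm {d : ℕ} {ι : Type*} [Fintype ι] (x : ι → UnitSphere d) : ℝ :=
  ⨆ y : UnitSphere d, ⨅ i : ι, geoDist y (x i)

/-- Separation radius of a finite point configuration on the sphere. -/
def sepRadius {d : ℕ} {ι : Type*} [Fintype ι] (x : ι → UnitSphere d) : ℝ :=
  (1 / 2) * ⨅ p : {q : ι × ι // q.1 ≠ q.2}, geoDist (x p.val.1) (x p.val.2)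

/-- Mesh ratio `ρ = h/δ ≥ 1`. -/
def meshRatio {d : ℕ} {ι : Type*} [Fintype ι] (x : ι → UnitSphere d) : ℝ :=
  meshNorm x / sepRadius x

/-- `g` is a spherical-harmonic decomposition of `f` witnessing membership of the
Sobolev space `W₂^r(S^d)`. -/
structure SobolevData (d : ℕ) (r : ℝ) (f : UnitSphere d → ℝ) (g : ℕ → UnitSphere d → ℝ) :
    Prop where
  harmonic : ∀ ℓ, g ℓ ∈ sphHarmonic d ℓ
  hasSum : ∀ x, HasSum (fun ℓ => g ℓ x) (f x)
  summable : Summable (fun ℓ : ℕ =>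
    (1 + (ℓ : ℝ) * ((ℓ : ℝ) + d - 1)) ^ r * ∫ x, (g ℓ x) ^ 2 ∂(sphereMeasure d))

/-- The squared Sobolev norm `‖f‖²_{W₂^r}` computed from a harmonic decomposition `g`. -/
def sobNormSq (d : ℕ) (r : ℝ) (g : ℕ → UnitSphere d → ℝ) : ℝ :=
  ∑' ℓ : ℕ, (1 + (ℓ : ℝ) * ((ℓ : ℝ) + d - 1)) ^ r * ∫ x, (g ℓ x) ^ 2 ∂(sphereMeasure d)

end

/-! ### Gegenbauer polynomials -/

open Polynomial in
lemma gegenbauer_rec (lam : ℝ) (n : ℕ) (t : ℝ) :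
    ((n : ℝ) + 2) * (gegenbauer lam (n + 2)).eval t =
      2 * ((n : ℝ) + 1 + lam) * t * (gegenbauer lam (n + 1)).eval t -
        ((n : ℝ) + 2 * lam) * (gegenbauer lam n).eval t := by
  have h : ((n : ℝ) + 2) ≠ 0 := by positivity
  rw [gegenbauer]
  simp only [eval_sub, eval_mul, eval_C, eval_X]
  field_simp

open Polynomial in
lemma gegenbauer_deriv_rec (lam : ℝ) (n : ℕ) (t : ℝ) :
    ((n : ℝ) + 2) * (derivative (gegenbauer lam (n + 2))).eval t =
      2 * ((n : ℝ) + 1 + lam) * ((gegenbauer lam (n + 1)).eval t +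
        t * (derivative (gegenbauer lam (n + 1))).eval t) -
        ((n : ℝ) + 2 * lam) * (derivative (gegenbauer lam n)).eval t := by
  have h : ((n : ℝ) + 2) ≠ 0 := by positivity
  rw [gegenbauer]
  simp only [derivative_sub, derivative_mul, derivative_C, derivative_X,
    eval_add, eval_sub, eval_mul, eval_C, eval_X, eval_zero, eval_one]
  field_simp
  ring

open Polynomial in
/-- The two classical first-order relations `t C_{n+1}' - C_n' = (n+1) C_{n+1}` and
`C_{n+1}' - t C_n' = (n+2λ) C_n`; each follows from the other by the recurrence. -/
lemma gegenbauer_deriv_rel (lam : ℝ) (n : ℕ) (t : ℝ) :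
    t * (derivative (gegenbauer lam (n + 1))).eval t - (derivative (gegenbauer lam n)).eval t =
      ((n : ℝ) + 1) * (gegenbauer lam (n + 1)).eval t ∧
    (derivative (gegenbauer lam (n + 1))).eval t - t * (derivative (gegenbauer lam n)).eval t =
      ((n : ℝ) + 2 * lam) * (gegenbauer lam n).eval t ∧
    (t ^ 2 - 1) * (derivative (gegenbauer lam (n + 1))).eval t =
      ((n : ℝ) + 1) * t * (gegenbauer lam (n + 1)).eval t -
        ((n : ℝ) + 2 * lam) * (gegenbauer lam n).eval t := by
  induction n with
  | zero =>
    simp only [gegenbauer, zero_add, derivative_mul, derivative_C, derivative_X, derivative_one,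
      eval_add, eval_mul, eval_C, eval_X, eval_zero, eval_one, Nat.cast_zero]
    refine ⟨by ring, by ring, by ring⟩
  | succ n ih =>
    obtain ⟨hA, hB, hD⟩ := ih
    have h : ((n : ℝ) + 2) ≠ 0 := by positivity
    have r := gegenbauer_rec lam n t
    have r' := gegenbauer_deriv_rec lam n t
    have hB' : (derivative (gegenbauer lam (n + 2))).eval t -
        t * (derivative (gegenbauer lam (n + 1))).eval t =
        ((n : ℝ) + 1 + 2 * lam) * (gegenbauer lam (n + 1)).eval t := by
      apply mul_left_cancel₀ h
      linear_combination r' + ((n : ℝ) + 2 * lam) * hA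
    have hA' : t * (derivative (gegenbauer lam (n + 2))).eval t -
        (derivative (gegenbauer lam (n + 1))).eval t =
        ((n : ℝ) + 2) * (gegenbauer lam (n + 2)).eval t := by
      linear_combination t * hB' + hD - r
    refine ⟨?_, ?_, ?_⟩
    · push_cast
      linear_combination hA'
    · push_cast
      linear_combination hB'
    · push_cast
      linear_combination t * hA' - hB'

open Polynomial in
lemma gegenbauer_ode (lam : ℝ) (n : ℕ) (t : ℝ) :
    (1 - t ^ 2) * (derivative (derivative (gegenbauer lam n))).eval t =
      (2 * lam + 1) * t * (derivative (gegenbauer lam n)).eval t -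
        (n : ℝ) * ((n : ℝ) + 2 * lam) * (gegenbauer lam n).eval t := by
  cases n with
  | zero => simp [gegenbauer]
  | succ n =>
    have hA : X * derivative (gegenbauer lam (n + 1)) - derivative (gegenbauer lam n) =
        C ((n : ℝ) + 1) * gegenbauer lam (n + 1) := by
      refine Polynomial.funext fun s => ?_
      simpa using (gegenbauer_deriv_rel lam n s).1
    have hB : derivative (gegenbauer lam (n + 1)) - X * derivative (gegenbauer lam n) =
        C ((n : ℝ) + 2 * lam) * gegenbauer lam n := by
      refine Polynomial.funext fun s => ?_
      simpa using (gegenbauer_deriv_rel lam n s).2.1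
    have hA' := congrArg (fun q => (derivative q).eval t) hA
    have hB' := congrArg (fun q => (derivative q).eval t) hB
    have hA0 := (gegenbauer_deriv_rel lam n t).1
    simp only [derivative_sub, derivative_mul, derivative_C, derivative_X, eval_add, eval_sub,
      eval_mul, eval_C, eval_X, eval_zero, eval_one] at hA' hB'
    push_cast
    linear_combination hB' - t * hA' - ((n : ℝ) + 2 * lam + 1) * hA0

lemma gegenbauer_one_succ (lam : ℝ) (n : ℕ) :
    ((n : ℝ) + 1) * (gegenbauer lam (n + 1)).eval 1 =
      ((n : ℝ) + 2 * lam) * (gegenbauer lam n).eval 1 := by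
  have := (gegenbauer_deriv_rel lam n 1).2.2
  linear_combination -this

lemma gegenbauer_neg_one_succ (lam : ℝ) (n : ℕ) :
    ((n : ℝ) + 1) * (gegenbauer lam (n + 1)).eval (-1) =
      -(((n : ℝ) + 2 * lam) * (gegenbauer lam n).eval (-1)) := by
  have := (gegenbauer_deriv_rel lam n (-1)).2.2
  linear_combination this

lemma gegenbauer_one_pos {lam : ℝ} (hl : 0 < lam) (n : ℕ) : 0 < (gegenbauer lam n).eval 1 := by
  induction n with
  | zero => simp [gegenbauer]
  | succ n ih =>
    have h := gegenbauer_one_succ lam n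
    have : 0 < ((n : ℝ) + 1) * (gegenbauer lam (n + 1)).eval 1 := by rw [h]; positivity
    exact pos_of_mul_pos_right this (by positivity)

lemma gegenbauer_neg_one_sq (lam : ℝ) (n : ℕ) :
    ((gegenbauer lam n).eval (-1)) ^ 2 = ((gegenbauer lam n).eval 1) ^ 2 := by
  induction n with
  | zero => simp [gegenbauer]
  | succ n ih =>
    have h : ((n : ℝ) + 1) ^ 2 ≠ 0 := by positivity
    apply mul_left_cancel₀ h
    rw [← mul_pow, ← mul_pow, gegenbauer_one_succ, gegenbauer_neg_one_succ, neg_sq, mul_pow,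
      mul_pow, ih]

open Polynomial in
/-- On `[-1,1]` the modulus of `C_n^λ` is largest at the endpoints. The function
`n(n+2λ) C_n² + (1-t²) C_n'²` dominates `n(n+2λ) C_n²`, agrees with it at `±1`, and has derivative
`4λ t C_n'²`, so it decreases on `[-1,0]` and increases on `[0,1]`. -/
lemma abs_gegenbauer_le {lam : ℝ} (hl : 0 < lam) (n : ℕ) {t : ℝ} (ht : t ∈ Set.Icc (-1 : ℝ) 1) :
    |(gegenbauer lam n).eval t| ≤ (gegenbauer lam n).eval 1 := by
  rcases Nat.eq_zero_or_pos n with rfl | hn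
  · simp [gegenbauer]
  set P := gegenbauer lam n with hP
  set m : ℝ := (n : ℝ) * ((n : ℝ) + 2 * lam) with hm
  have hn' : (0 : ℝ) < n := by exact_mod_cast hn
  have hmpos : 0 < m := by positivity
  set φ : ℝ → ℝ := fun t => m * (P.eval t) ^ 2 + (1 - t ^ 2) * ((derivative P).eval t) ^ 2 with hφ
  have hd : ∀ s, HasDerivAt φ (4 * lam * s * ((derivative P).eval s) ^ 2) s := by
    intro s
    have h1 := ((P.hasDerivAt s).pow 2).const_mul m
    have h2 := ((hasDerivAt_id s).pow 2).const_sub 1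
    have h3 := ((derivative P).hasDerivAt s).pow 2
    have h4 := h1.add (h2.mul h3)
    have ode := gegenbauer_ode lam n s
    rw [← hP, ← hm] at ode
    refine HasDerivAt.congr_deriv h4 ?_
    simp only [id, Pi.pow_apply, Nat.cast_ofNat]
    norm_num
    linear_combination 2 * (derivative P).eval s * ode
  have hcont : Continuous φ := by
    rw [hφ]; fun_prop
  have hb : φ t ≤ m * (P.eval 1) ^ 2 := by
    rcases le_total 0 t with h0 | h0
    · have hmono : MonotoneOn φ (Set.Icc 0 1) := by
        refine monotoneOn_of_deriv_nonneg (convex_Icc 0 1) hcont.continuousOn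
          (fun s _ => (hd s).differentiableAt.differentiableWithinAt) fun s hs => ?_
        rw [interior_Icc] at hs
        rw [(hd s).deriv]
        have := hs.1
        positivity
      have := hmono ⟨h0, ht.2⟩ ⟨zero_le_one, le_rfl⟩ ht.2
      simpa [hφ] using this
    · have hmono : AntitoneOn φ (Set.Icc (-1) 0) := by
        refine antitoneOn_of_deriv_nonpos (convex_Icc (-1) 0) hcont.continuousOn
          (fun s _ => (hd s).differentiableAt.differentiableWithinAt) fun s hs => ?_
        rw [interior_Icc] at hs
        rw [(hd s).deriv]
        have h1 : 0 < -s := by linarith [hs.2]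
        have : 0 ≤ 4 * lam * (-s) * ((derivative P).eval s) ^ 2 := by positivity
        linarith
      have := hmono ⟨le_rfl, by norm_num⟩ ⟨ht.1, h0⟩ ht.1
      rw [← gegenbauer_neg_one_sq lam n]
      simpa [hφ] using this
  have h1 : m * (P.eval t) ^ 2 ≤ m * (P.eval 1) ^ 2 := by
    refine le_trans ?_ hb
    have : 0 ≤ 1 - t ^ 2 := by nlinarith [ht.1, ht.2]
    simp only [hφ]
    nlinarith [mul_nonneg this (sq_nonneg ((derivative P).eval t))]
  have h2 := le_of_mul_le_mul_left h1 hmpos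
  exact abs_le_of_sq_le_sq h2 (gegenbauer_one_pos hl n).le

lemma gegenbauer_one_eq_choose (k l : ℕ) :
    (gegenbauer (((k : ℝ) + 1) / 2) l).eval 1 = ((l + k).choose l : ℝ) := by
  induction l with
  | zero => simp [gegenbauer]
  | succ l ih =>
    have h : ((l : ℝ) + 1) ≠ 0 := by positivity
    apply mul_left_cancel₀ h
    rw [gegenbauer_one_succ, ih]
    have := Nat.add_one_mul_choose_eq (l + k) l
    have h2 : ((l + k + 1 : ℕ) : ℝ) * ((l + k).choose l : ℝ) =
      ((l + k + 1).choose (l + 1) : ℝ) * ((l + 1 : ℕ) : ℝ) := by exact_mod_cast this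
    rw [show l + 1 + k = l + k + 1 by ring]
    push_cast at h2
    linear_combination h2

/-- The dimension factor turns the normalized polynomial back into `C_l^λ`:
`Z_{d,l} P_l = (l+λ)/λ · C_l^λ` with `λ = (d-1)/2`. -/
lemma harmDim_mul_normGegenbauer (k l : ℕ) (t : ℝ) :
    harmDim (k + 2) l * normGegenbauer (k + 2) l t =
      ((l : ℝ) + ((k : ℝ) + 1) / 2) / (((k : ℝ) + 1) / 2) *
        (gegenbauer (((k : ℝ) + 1) / 2) l).eval t := by
  have hl : (((k + 2 : ℕ) : ℝ) - 1) / 2 = ((k : ℝ) + 1) / 2 := by push_cast; ring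
  rw [normGegenbauer, hl]
  have hpos := gegenbauer_one_pos (lam := ((k : ℝ) + 1) / 2) (by positivity) l
  rw [mul_div_assoc', div_eq_iff hpos.ne']
  suffices h : harmDim (k + 2) l = ((l : ℝ) + ((k : ℝ) + 1) / 2) / (((k : ℝ) + 1) / 2) *
      (gegenbauer (((k : ℝ) + 1) / 2) l).eval 1 by rw [h]; ring
  rw [gegenbauer_one_eq_choose, harmDim]
  split_ifs with h0
  · subst h0
    have : ((k : ℝ) + 1) ≠ 0 := by positivity
    simp
    field_simp
  · have h1 : ((l + k + 1).choose l : ℝ) * ((k : ℝ) + 1) =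
        ((l : ℝ) + k + 1) * ((l + k).choose l : ℝ) := by
      have := Nat.choose_mul_succ_eq (l + k) l
      have e : l + k + 1 - l = k + 1 := by omega
      rw [e] at this
      have h2 : ((l + k).choose l : ℝ) * ((l + k + 1 : ℕ) : ℝ) =
        ((l + k + 1).choose l : ℝ) * ((k + 1 : ℕ) : ℝ) := by exact_mod_cast this
      push_cast at h2
      linear_combination -h2
    rw [show l + (k + 2) - 1 = l + k + 1 by omega]
    have hk : ((k : ℝ) + 1) ≠ 0 := by positivity
    have hlk : ((l : ℝ) + k + 1) ≠ 0 := by positivity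
    have e2 : ((l + k + 1).choose l : ℝ) =
        ((l : ℝ) + k + 1) * ((l + k).choose l : ℝ) / ((k : ℝ) + 1) := by
      rw [eq_div_iff hk, h1]
    rw [e2]
    push_cast
    have e3 : (l : ℝ) + (k + 2) - 1 = (l : ℝ) + k + 1 := by ring
    rw [e3]
    field_simp
    ring

/-! ### Orthogonality and multiplication by `1 - t` -/

section zonal

open Polynomial

/-- The integral of a polynomial in `t = cos θ` against the zonal weight `sin^{k+1} θ` of
`S^{k+2}`. -/
noncomputable def zonalInt (k : ℕ) (P : ℝ[X]) : ℝ :=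
  ∫ θ in (0 : ℝ)..π, P.eval (cos θ) * sin θ ^ (k + 1)

lemma zonalInt_integrable (k : ℕ) (P : ℝ[X]) :
    IntervalIntegrable (fun θ => P.eval (cos θ) * sin θ ^ (k + 1)) volume 0 π :=
  Continuous.intervalIntegrable (by fun_prop) _ _

lemma zonalInt_add (k : ℕ) (P Q : ℝ[X]) : zonalInt k (P + Q) = zonalInt k P + zonalInt k Q := by
  rw [zonalInt, zonalInt, zonalInt,
    ← intervalIntegral.integral_add (zonalInt_integrable k P) (zonalInt_integrable k Q)]
  simp only [eval_add, add_mul]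

lemma zonalInt_C_mul (k : ℕ) (c : ℝ) (P : ℝ[X]) : zonalInt k (C c * P) = c * zonalInt k P := by
  rw [zonalInt, zonalInt, ← intervalIntegral.integral_const_mul]
  simp only [eval_mul, eval_C, mul_assoc]

lemma zonalInt_zero (k : ℕ) : zonalInt k 0 = 0 := by simp [zonalInt]

lemma zonalInt_sum {ι : Type*} (k : ℕ) (s : Finset ι) (f : ι → ℝ[X]) :
    zonalInt k (∑ i ∈ s, f i) = ∑ i ∈ s, zonalInt k (f i) := by
  classical
  induction s using Finset.induction_on with
  | empty => simp [zonalInt_zero]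
  | insert i s hi ih => rw [Finset.sum_insert hi, Finset.sum_insert hi, zonalInt_add, ih]

/-- The integrand is the derivative of `sin^{k+2} θ · Q(cos θ)`, which vanishes at `0` and `π`. -/
lemma zonalInt_div_form (k : ℕ) (Q : ℝ[X]) :
    zonalInt k (C ((k : ℝ) + 2) * X * Q - (1 - X ^ 2) * derivative Q) = 0 := by
  have hd : ∀ θ ∈ Set.uIcc 0 π, HasDerivAt (fun θ => sin θ ^ (k + 2) * Q.eval (cos θ))
      ((C ((k : ℝ) + 2) * X * Q - (1 - X ^ 2) * derivative Q).eval (cos θ) * sin θ ^ (k + 1)) θ := by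
    intro θ _
    have h1 := (hasDerivAt_sin θ).pow (k + 2)
    have h2 := (Q.hasDerivAt (cos θ)).comp θ (hasDerivAt_cos θ)
    refine HasDerivAt.congr_deriv (h1.mul h2) ?_
    have h3 := sin_sq_add_cos_sq θ
    simp only [eval_sub, eval_mul, eval_C, eval_X, eval_one, eval_pow, Pi.pow_apply]
    rw [show k + 2 - 1 = k + 1 by omega]
    push_cast
    have h4 : 1 - cos θ ^ 2 = sin θ ^ 2 := by linarith
    rw [h4]
    ring
  rw [zonalInt, intervalIntegral.integral_eq_sub_of_hasDerivAt hd (zonalInt_integrable k _)]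
  simp

/-- The Gegenbauer parameter `λ = (d-1)/2` for `d = k+2`. -/
noncomputable def gparam (k : ℕ) : ℝ := ((k : ℝ) + 1) / 2

lemma gparam_pos (k : ℕ) : 0 < gparam k := by rw [gparam]; positivity

/-- Orthogonality from the Wronskian: distinct degrees have distinct eigenvalues. -/
lemma zonalInt_gegenbauer_ne (k : ℕ) {m n : ℕ} (h : m ≠ n) :
    zonalInt k (gegenbauer (gparam k) m * gegenbauer (gparam k) n) = 0 := by
  set lam := gparam k with hlam
  have hl : 0 < lam := gparam_pos k
  have hk : (k : ℝ) + 2 = 2 * lam + 1 := by rw [hlam, gparam]; ring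
  set P := gegenbauer lam m with hP
  set R := gegenbauer lam n with hR
  have key := zonalInt_div_form k (derivative P * R - derivative R * P)
  have e : C ((k : ℝ) + 2) * X * (derivative P * R - derivative R * P) -
      (1 - X ^ 2) * derivative (derivative P * R - derivative R * P) =
      C ((m : ℝ) * (m + 2 * lam) - (n : ℝ) * (n + 2 * lam)) * (P * R) := by
    refine Polynomial.funext fun t => ?_
    have o1 := gegenbauer_ode lam m t
    have o2 := gegenbauer_ode lam n t
    rw [← hP] at o1
    rw [← hR] at o2
    rw [hk]
    simp only [derivative_sub, derivative_mul, eval_add, eval_sub, eval_mul, eval_C, eval_X,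
      eval_pow, eval_one]
    linear_combination P.eval t * o2 - R.eval t * o1
  rw [e, zonalInt_C_mul] at key
  refine (mul_eq_zero.mp key).resolve_left ?_
  have : (m : ℝ) * (m + 2 * lam) - (n : ℝ) * (n + 2 * lam) = ((m : ℝ) - n) * (m + n + 2 * lam) := by
    ring
  rw [this]
  refine mul_ne_zero (sub_ne_zero.mpr (by exact_mod_cast h)) ?_
  positivity

lemma zonalInt_gegenbauer_sq (k n : ℕ) :
    ((n : ℝ) + gparam k) * zonalInt k (gegenbauer (gparam k) n * gegenbauer (gparam k) n) =
      gparam k * zonalInt k 1 * (gegenbauer (gparam k) n).eval 1 := by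
  set lam := gparam k with hlam
  have hl : 0 < lam := gparam_pos k
  set G := gegenbauer lam with hG
  have rec2 : ∀ n : ℕ, C ((n : ℝ) + 2) * G (n + 2) =
      C (2 * ((n : ℝ) + 1 + lam)) * (X * G (n + 1)) - C ((n : ℝ) + 2 * lam) * G n := by
    intro n
    refine Polynomial.funext fun t => ?_
    have := gegenbauer_rec lam n t
    simp only [eval_sub, eval_mul, eval_C, eval_X]
    linear_combination this
  induction n with
  | zero => simp [hG, gegenbauer]
  | succ n ih =>
    -- both expressions compute `∫ t C_{n+1} C_n`, via the recurrence at either factor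
    have h1 : 2 * ((n : ℝ) + 1 + lam) * zonalInt k (X * G (n + 1) * G n) =
        ((n : ℝ) + 2 * lam) * zonalInt k (G n * G n) := by
      have e : C (2 * ((n : ℝ) + 1 + lam)) * (X * G (n + 1) * G n) =
          C ((n : ℝ) + 2) * (G (n + 2) * G n) + C ((n : ℝ) + 2 * lam) * (G n * G n) := by
        linear_combination -(G n) * rec2 n
      have := congrArg (zonalInt k) e
      rw [zonalInt_add, zonalInt_C_mul, zonalInt_C_mul, zonalInt_C_mul,
        zonalInt_gegenbauer_ne k (by omega : n + 2 ≠ n)] at this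
      linarith
    have h2 : 2 * ((n : ℝ) + lam) * zonalInt k (X * G (n + 1) * G n) =
        ((n : ℝ) + 1) * zonalInt k (G (n + 1) * G (n + 1)) := by
      cases n with
      | zero =>
        have e : C (2 * lam) * (X * G 1 * G 0) = G 1 * G 1 := by
          simp only [hG, gegenbauer]; ring
        have := congrArg (zonalInt k) e
        rw [zonalInt_C_mul] at this
        simpa using this
      | succ n =>
        have e : C (2 * ((n : ℝ) + 1 + lam)) * (X * G (n + 2) * G (n + 1)) =
          C ((n : ℝ) + 2) * (G (n + 2) * G (n + 2)) + C ((n : ℝ) + 2 * lam) * (G n * G (n + 2)) := by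
          linear_combination -(G (n + 2)) * rec2 n
        have := congrArg (zonalInt k) e
        rw [zonalInt_add, zonalInt_C_mul, zonalInt_C_mul, zonalInt_C_mul,
          zonalInt_gegenbauer_ne k (by omega : n ≠ n + 2)] at this
        push_cast
        linarith
    have h3 := gegenbauer_one_succ lam n
    have hne : ((n : ℝ) + 1) ≠ 0 := by positivity
    apply mul_left_cancel₀ hne
    push_cast
    have h4 : ((n : ℝ) + 1) * (lam * zonalInt k 1 * (G (n + 1)).eval 1) =
        ((n : ℝ) + 2 * lam) * (lam * zonalInt k 1 * (G n).eval 1) := by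
      linear_combination lam * zonalInt k 1 * h3
    rw [h4, ← ih]
    linear_combination -((n : ℝ) + 1 + lam) * h2 + ((n : ℝ) + lam) * h1

/-- The zonal polynomial `∑_{l<N} a_l (l+λ) C_l^λ`; its coefficients are taken relative to the
reproducing kernels `(l+λ) C_l^λ` (up to a factor) of the spaces of spherical harmonics. -/
noncomputable def zonalSum (k : ℕ) (a : ℕ → ℝ) (N : ℕ) : ℝ[X] :=
  ∑ l ∈ Finset.range N, C (a l * ((l : ℝ) + gparam k)) * gegenbauer (gparam k) l

lemma zonalSum_eval (k : ℕ) (a : ℕ → ℝ) (N : ℕ) (t : ℝ) :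
    (zonalSum k a N).eval t =
      ∑ l ∈ Finset.range N, a l * ((l : ℝ) + gparam k) * (gegenbauer (gparam k) l).eval t := by
  simp [zonalSum, eval_finsetSum]

lemma zonalInt_zonalSum_mul (k : ℕ) (a b : ℕ → ℝ) (N : ℕ) :
    zonalInt k (zonalSum k a N * zonalSum k b N) = gparam k * zonalInt k 1 *
      ∑ l ∈ Finset.range N, a l * b l * (((l : ℝ) + gparam k) * (gegenbauer (gparam k) l).eval 1) := by
  rw [zonalSum, zonalSum, Finset.sum_mul_sum, zonalInt_sum, Finset.mul_sum]
  refine Finset.sum_congr rfl fun l hl => ?_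
  rw [zonalInt_sum, Finset.sum_eq_single l]
  · have e : C (a l * ((l : ℝ) + gparam k)) * gegenbauer (gparam k) l *
        (C (b l * ((l : ℝ) + gparam k)) * gegenbauer (gparam k) l) =
        C (a l * b l * ((l : ℝ) + gparam k) * ((l : ℝ) + gparam k)) *
          (gegenbauer (gparam k) l * gegenbauer (gparam k) l) := by
      simp only [C_mul]; ring
    rw [e, zonalInt_C_mul]
    linear_combination (a l * b l * ((l : ℝ) + gparam k)) * zonalInt_gegenbauer_sq k l
  · intro m _ hm
    have e : C (a l * ((l : ℝ) + gparam k)) * gegenbauer (gparam k) l *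
        (C (b m * ((m : ℝ) + gparam k)) * gegenbauer (gparam k) m) =
        C (a l * ((l : ℝ) + gparam k) * (b m * ((m : ℝ) + gparam k))) *
          (gegenbauer (gparam k) l * gegenbauer (gparam k) m) := by
      simp only [C_mul]; ring
    rw [e, zonalInt_C_mul, zonalInt_gegenbauer_ne k hm.symm, mul_zero]
  · exact fun h => absurd hl h

/-- Multiplication by `1 - t`, read on the coefficients of `zonalSum`: a second-difference type
operator. At `l = 0` the factor `l` removes the value at the truncated index `0 - 1`. -/
noncomputable def coefOp (k : ℕ) (a : ℕ → ℝ) (l : ℕ) : ℝ :=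
  a l - ((l : ℝ) * a (l - 1) + ((l : ℝ) + 2 * gparam k) * a (l + 1)) / (2 * ((l : ℝ) + gparam k))

lemma one_sub_mul_zonalSum (k : ℕ) (a : ℕ → ℝ) (N : ℕ) (h : ∀ l, N ≤ l → a l = 0) :
    (1 - X) * zonalSum k a N = zonalSum k (coefOp k a) (N + 1) := by
  refine Polynomial.funext fun t => ?_
  set lam := gparam k with hlam
  have hl : 0 < lam := gparam_pos k
  have key : ∀ M : ℕ, t * ∑ l ∈ Finset.range (M + 1),
      a l * ((l : ℝ) + lam) * (gegenbauer lam l).eval t =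
      ∑ l ∈ Finset.range (M + 1), ((l : ℝ) * a (l - 1) + ((l : ℝ) + 2 * lam) * a (l + 1)) / 2 *
        (gegenbauer lam l).eval t +
      (((M : ℝ) + 1) * a M * (gegenbauer lam (M + 1)).eval t -
        ((M : ℝ) + 2 * lam) * a (M + 1) * (gegenbauer lam M).eval t) / 2 := by
    intro M
    induction M with
    | zero =>
      simp [gegenbauer]
      ring
    | succ M ih =>
      rw [Finset.sum_range_succ, mul_add, ih, Finset.sum_range_succ _ (M + 1)]
      have r := gegenbauer_rec lam M t
      simp only [Nat.add_sub_cancel]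
      push_cast
      linear_combination (-a (M + 1) / 2) * r
  have h1 := key N
  rw [h N le_rfl, h (N + 1) (by omega)] at h1
  rw [eval_mul, zonalSum_eval, zonalSum_eval, eval_sub, eval_one, eval_X]
  have h2 : ∑ l ∈ Finset.range N, a l * ((l : ℝ) + lam) * (gegenbauer lam l).eval t =
      ∑ l ∈ Finset.range (N + 1), a l * ((l : ℝ) + lam) * (gegenbauer lam l).eval t := by
    rw [Finset.sum_range_succ, h N le_rfl]; simp
  rw [h2, sub_mul, h1, one_mul, ← hlam]
  simp only [mul_zero, zero_mul, sub_zero, zero_div, add_zero]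
  rw [← Finset.sum_sub_distrib]
  refine Finset.sum_congr rfl fun l _ => ?_
  have : (l : ℝ) + lam ≠ 0 := by positivity
  rw [coefOp, ← hlam]
  field_simp

/-- The quadratic form of multiplication by `1 - t` is a weighted sum of squared first
differences. -/
lemma zonalInt_one_sub_mul_sq (k : ℕ) (a : ℕ → ℝ) (N : ℕ) (h : ∀ l, N ≤ l → a l = 0) :
    zonalInt k ((1 - X) * zonalSum k a N * zonalSum k a N) = gparam k * zonalInt k 1 / 2 *
      ∑ l ∈ Finset.range N,
        ((l : ℝ) + 1) * (gegenbauer (gparam k) (l + 1)).eval 1 * (a (l + 1) - a l) ^ 2 := by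
  set lam := gparam k with hlam
  have hl : 0 < lam := gparam_pos k
  have hN : zonalSum k a N = zonalSum k a (N + 1) := by
    rw [zonalSum, zonalSum, Finset.sum_range_succ, h N le_rfl]; simp
  rw [one_sub_mul_zonalSum k a N h, hN, zonalInt_zonalSum_mul, ← hlam, div_mul_eq_mul_div,
    mul_div_assoc]
  congr 1
  rw [Finset.sum_range_succ, h N le_rfl, mul_zero, zero_mul, add_zero]
  have key : ∀ M : ℕ, ∑ l ∈ Finset.range M,
      coefOp k a l * a l * (((l : ℝ) + lam) * (gegenbauer lam l).eval 1) =
      (∑ l ∈ Finset.range M,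
        ((l : ℝ) + 1) * (gegenbauer lam (l + 1)).eval 1 * (a (l + 1) - a l) ^ 2) / 2 -
      (M : ℝ) * (gegenbauer lam M).eval 1 * a M * (a M - a (M - 1)) / 2 := by
    intro M
    induction M with
    | zero => simp
    | succ M ih =>
      rw [Finset.sum_range_succ, ih, Finset.sum_range_succ]
      have r := gegenbauer_one_succ lam M
      have hne : (M : ℝ) + lam ≠ 0 := by positivity
      have hc : coefOp k a M * ((M : ℝ) + lam) = ((M : ℝ) + lam) * a M -
          ((M : ℝ) * a (M - 1) + ((M : ℝ) + 2 * lam) * a (M + 1)) / 2 := by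
        rw [coefOp, ← hlam]
        field_simp
      simp only [Nat.add_sub_cancel]
      push_cast
      linear_combination (a M * (gegenbauer lam M).eval 1) * hc +
        (a M * a (M + 1) / 2 - a M ^ 2 / 2) * r
  rw [key N, h N le_rfl]
  ring

end zonal

/-! ### Finite differences -/

/-- `DiffBound h M r m b` says that the `i`-th forward difference of `b` is bounded by
`M h^{m+i}` for every `i ≤ r`, as for samples at step `h` of a function of size `h^m` with `r`
bounded derivatives. -/
def DiffBound (h M : ℝ) : ℕ → ℕ → (ℕ → ℝ) → Prop
  | 0, m, b => ∀ l, |b l| ≤ M * h ^ m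
  | r + 1, m, b => (∀ l, |b l| ≤ M * h ^ m) ∧ DiffBound h M r (m + 1) (fun l => b (l + 1) - b l)

namespace DiffBound

variable {h M M' : ℝ} {r m m' : ℕ} {b b' : ℕ → ℝ}

lemma bound (H : DiffBound h M r m b) (l : ℕ) : |b l| ≤ M * h ^ m := by
  cases r with
  | zero => exact H l
  | succ r => exact H.1 l

lemma pred : ∀ {r m : ℕ} {b : ℕ → ℝ}, DiffBound h M (r + 1) m b → DiffBound h M r m b
  | 0, _, _, H => H.1
  | _ + 1, _, _, H => ⟨H.1, H.2.pred⟩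

lemma mono (h0 : 0 ≤ h) (hM : M ≤ M') :
    ∀ {r m : ℕ} {b : ℕ → ℝ}, DiffBound h M r m b → DiffBound h M' r m b
  | 0, _, _, H => fun l => (H l).trans (by gcongr)
  | _ + 1, _, _, H => ⟨fun l => (H.1 l).trans (by gcongr), H.2.mono h0 hM⟩

lemma shift : ∀ {r m : ℕ} {b : ℕ → ℝ}, DiffBound h M r m b →
    DiffBound h M r m (fun l => b (l + 1))
  | 0, _, _, H => fun l => H (l + 1)
  | _ + 1, _, _, H => ⟨fun l => H.1 (l + 1), H.2.shift⟩

lemma add : ∀ {r m : ℕ} {b b' : ℕ → ℝ}, DiffBound h M r m b → DiffBound h M' r m b' →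
    DiffBound h (M + M') r m (fun l => b l + b' l)
  | 0, _, _, _, H, H' => fun l => by
      rw [add_mul]; exact (abs_add_le _ _).trans (add_le_add (H l) (H' l))
  | r + 1, m, b, b', H, H' => by
      refine ⟨fun l => ?_, ?_⟩
      · rw [add_mul]; exact (abs_add_le _ _).trans (add_le_add (H.1 l) (H'.1 l))
      · have := H.2.add H'.2
        convert this using 2
        ring

lemma const_mul (c : ℝ) : ∀ {r m : ℕ} {b : ℕ → ℝ}, DiffBound h M r m b →
    DiffBound h (|c| * M) r m (fun l => c * b l)
  | 0, _, _, H => fun l => by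
      rw [abs_mul, mul_assoc]; exact mul_le_mul_of_nonneg_left (H l) (abs_nonneg c)
  | r + 1, m, b, H => by
      refine ⟨fun l => ?_, ?_⟩
      · rw [abs_mul, mul_assoc]; exact mul_le_mul_of_nonneg_left (H.1 l) (abs_nonneg c)
      · have := H.2.const_mul c
        convert this using 2
        ring

/-- The discrete Leibniz rule. -/
lemma mul (h0 : 0 ≤ h) (hM : 0 ≤ M) (hM' : 0 ≤ M') : ∀ {r m m' : ℕ} {b b' : ℕ → ℝ},
    DiffBound h M r m b → DiffBound h M' r m' b' →
    DiffBound h (2 ^ r * (M * M')) r (m + m') (fun l => b l * b' l)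
  | 0, m, m', b, b', H, H' => fun l => by
      rw [abs_mul, pow_zero, one_mul, pow_add, mul_mul_mul_comm]
      exact mul_le_mul (H l) (H' l) (abs_nonneg _) (by positivity)
  | r + 1, m, m', b, b', H, H' => by
      have h1 := H.pred.shift.mul h0 hM hM' H'.2
      have h2 := H.2.mul h0 hM hM' H'.pred
      refine ⟨fun l => ?_, ?_⟩
      · rw [abs_mul, pow_add]
        calc |b l| * |b' l| ≤ (M * h ^ m) * (M' * h ^ m') :=
              mul_le_mul (H.1 l) (H'.1 l) (abs_nonneg _) (by positivity)
          _ = 1 * (M * M' * (h ^ m * h ^ m')) := by ring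
          _ ≤ 2 ^ (r + 1) * (M * M' * (h ^ m * h ^ m')) := by
              gcongr; exact one_le_pow₀ (by norm_num)
          _ = _ := by ring
      · rw [show m + (m' + 1) = m + m' + 1 by ring] at h1
        rw [show m + 1 + m' = m + m' + 1 by ring] at h2
        have h3 := h1.add h2
        have e : (2 : ℝ) ^ (r + 1) * (M * M') = 2 ^ r * (M * M') + 2 ^ r * (M * M') := by ring
        rw [e]
        convert h3 using 2
        ring

end DiffBound

lemma diffBound_inv (R : ℝ) (hR : 0 ≤ R) (r : ℕ) : ∃ K : ℝ, 0 ≤ K ∧ ∀ h c : ℝ, 0 ≤ h → 0 < c →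
    1 / c ≤ R * h → DiffBound h K r 1 (fun l => 1 / ((l : ℝ) + c)) := by
  have base : ∀ h c : ℝ, 0 < c → 1 / c ≤ R * h → ∀ l : ℕ, |1 / ((l : ℝ) + c)| ≤ R * h ^ 1 := by
    intro h c hc hle l
    rw [abs_of_pos (by positivity), pow_one]
    refine le_trans ?_ hle
    gcongr
    linarith [(Nat.cast_nonneg l : (0 : ℝ) ≤ l)]
  induction r with
  | zero => exact ⟨R, hR, fun h c h0 hc hle => base h c hc hle⟩
  | succ r ih =>
    obtain ⟨K, hK, H⟩ := ih
    refine ⟨R + |(-1)| * (2 ^ r * (K * K)), by positivity, fun h c h0 hc hle => ⟨fun l => ?_, ?_⟩⟩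
    · refine (base h c hc hle l).trans ?_
      gcongr
      exact le_add_of_nonneg_right (by positivity)
    · have h1 := H h c h0 hc hle
      have h2 := ((h1.mul h0 hK hK h1.shift).const_mul (-1)).mono
        (M' := R + |(-1)| * (2 ^ r * (K * K))) h0 (le_add_of_nonneg_left hR)
      convert h2 using 2 with l
      have e1 : (l : ℝ) + c ≠ 0 := by positivity
      have e2 : (l : ℝ) + 1 + c ≠ 0 := by positivity
      push_cast
      field_simp
      ring

/-- Multiplication by `1 - t` costs two differences and gains a factor `h²`, away from the
degrees small compared with `1/h`. -/
lemma diffBound_coefOp (k r : ℕ) (R M : ℝ) (hR : 0 ≤ R) (hM : 0 ≤ M) : ∃ M' : ℝ, 0 ≤ M' ∧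
    ∀ (h : ℝ) (L m : ℕ) (a : ℕ → ℝ), 0 ≤ h → 1 / ((L : ℝ) + 1) ≤ R * h →
      DiffBound h M (r + 2) m (fun l => a (l + L)) →
      DiffBound h M' r (m + 2) (fun l => coefOp k a (l + (L + 1))) := by
  obtain ⟨K, hK, H⟩ := diffBound_inv R hR r
  set lam := gparam k with hlam
  have hl : 0 < lam := gparam_pos k
  refine ⟨|(-1 / 2)| * M + |(-lam / 2)| * (2 ^ r * (K * (M + M))), by positivity,
    fun h L m a h0 hL Ha => ?_⟩
  have hinv := H h ((L : ℝ) + 1 + lam) h0 (by positivity) (by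
    refine le_trans (one_div_le_one_div_of_le (by positivity) ?_) hL
    linarith)
  have hD2 := (Ha.2.2).const_mul (-1 / 2)
  have hD1 := Ha.2.pred
  have hs := (hinv.mul h0 hK (by positivity) (hD1.shift.add hD1)).const_mul (-lam / 2)
  rw [show 1 + (m + 1) = m + 2 by ring] at hs
  have := DiffBound.add hD2 hs
  convert this using 2 with l
  rw [coefOp, ← hlam, show l + (L + 1) - 1 = l + L by omega,
    show l + (L + 1) + 1 = l + 1 + 1 + L by ring, show l + (L + 1) = l + 1 + L by ring]
  have e1 : (l : ℝ) + 1 + L + lam ≠ 0 := by positivity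
  have e2 : (l : ℝ) + (L + 1 + lam) ≠ 0 := by positivity
  push_cast
  field_simp
  ring

lemma diffBound_coefOp_iterate (k r : ℕ) (R M : ℝ) (hR : 0 ≤ R) (hM : 0 ≤ M) (j : ℕ) :
    ∃ M' : ℝ, 0 ≤ M' ∧ ∀ (h : ℝ) (L m : ℕ) (a : ℕ → ℝ), 0 ≤ h → 1 / ((L : ℝ) + 1) ≤ R * h →
      DiffBound h M (r + 2 * j) m (fun l => a (l + L)) →
      DiffBound h M' r (m + 2 * j) (fun l => (coefOp k)^[j] a (l + (L + j))) := by
  induction j generalizing r with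
  | zero => exact ⟨M, hM, fun h L m a _ _ H => H⟩
  | succ j ih =>
    obtain ⟨M₁, hM₁, H₁⟩ := ih (r + 2)
    obtain ⟨M₂, hM₂, H₂⟩ := diffBound_coefOp k r R M₁ hR hM₁
    refine ⟨M₂, hM₂, fun h L m a h0 hL H => ?_⟩
    have h1 := H₁ h L m a h0 hL (by
      rwa [show r + 2 + 2 * j = r + 2 * (j + 1) by ring])
    have h2 := H₂ h (L + j) (m + 2 * j) _ h0 (by
      refine le_trans ?_ hL
      push_cast
      gcongr
      linarith [(Nat.cast_nonneg j : (0 : ℝ) ≤ j)]) h1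
    rw [Function.iterate_succ']
    exact h2

lemma coefOp_iterate_eq_zero_of_lt (k : ℕ) (a : ℕ → ℝ) (A : ℕ) (h : ∀ l < A, a l = 0) (j : ℕ) :
    ∀ l, l + j < A → (coefOp k)^[j] a l = 0 := by
  induction j with
  | zero => exact fun l hl => h l hl
  | succ j ih =>
    intro l hl
    rw [Function.iterate_succ', Function.comp, coefOp, ih l (by omega), ih (l - 1) (by omega),
      ih (l + 1) (by omega)]
    simp

lemma coefOp_iterate_eq_zero_of_ge (k : ℕ) (a : ℕ → ℝ) (N : ℕ) (h : ∀ l, N ≤ l → a l = 0) (j : ℕ) :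
    ∀ l, N + j ≤ l → (coefOp k)^[j] a l = 0 := by
  induction j with
  | zero => exact fun l hl => h l hl
  | succ j ih =>
    intro l hl
    rw [Function.iterate_succ', Function.comp, coefOp, ih l (by omega), ih (l - 1) (by omega),
      ih (l + 1) (by omega)]
    simp

lemma diffBound_of_contDiff (h M c : ℝ) (h0 : 0 ≤ h) (r : ℕ) : ∀ (m : ℕ) (g : ℝ → ℝ),
    ContDiff ℝ r g → (∀ i ≤ r, ∀ x, |iteratedDeriv i g x| ≤ M * h ^ m) →
    DiffBound h M r m (fun l => g ((l : ℝ) * h + c)) := by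
  induction r with
  | zero => intro m g _ hb l; simpa using hb 0 le_rfl ((l : ℝ) * h + c)
  | succ r ih =>
    intro m g hg hb
    refine ⟨fun l => by simpa using hb 0 (by omega) ((l : ℝ) * h + c), ?_⟩
    have hg' : ContDiff ℝ r g := hg.of_le (by exact_mod_cast Nat.le_succ r)
    have hgs : ContDiff ℝ r (fun x => g (x + h)) := hg'.comp (contDiff_id.add contDiff_const)
    have h1 := ih (m + 1) (fun x => g (x + h) - g x) (hgs.sub hg') (by
      intro i hi x
      have hsub : iteratedDeriv i (fun x => g (x + h) - g x) x =
          iteratedDeriv i g (x + h) - iteratedDeriv i g x := by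
        have e := iteratedDeriv_fun_sub (n := i) (x := x) (f := fun x => g (x + h)) (g := g)
          ((hgs.of_le (by exact_mod_cast hi)).contDiffAt)
          ((hg'.of_le (by exact_mod_cast hi)).contDiffAt)
        rw [e, iteratedDeriv_comp_add_const]
      rw [hsub]
      have hdiff : Differentiable ℝ (iteratedDeriv i g) :=
        hg.differentiable_iteratedDeriv i (by exact_mod_cast Nat.lt_succ_of_le hi)
      have hmv := Convex.norm_image_sub_le_of_norm_deriv_le (f := iteratedDeriv i g)
        (s := Set.univ) (x := x) (y := x + h) (C := M * h ^ m)
        (fun y _ => hdiff y) (fun y _ => by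
          rw [← iteratedDeriv_succ]; exact hb (i + 1) (by omega) y)
        convex_univ trivial trivial
      rw [Real.norm_eq_abs, Real.norm_eq_abs, add_sub_cancel_left, abs_of_nonneg h0] at hmv
      rw [pow_succ, ← mul_assoc]
      exact hmv)
    convert h1 using 2 with l
    push_cast
    ring_nf

/-- Extended by zero to the negative half-line, a filter is `C^κ` with bounded derivatives. -/
lemma IsFilter.exists_extension {η : ℝ → ℝ} {κ : ℕ} (hη : IsFilter η κ) :
    ∃ g : ℝ → ℝ, ContDiff ℝ κ g ∧ (∀ x, 0 ≤ x → g x = η x) ∧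
      ∃ M : ℝ, 0 ≤ M ∧ ∀ i ≤ κ, ∀ x, |iteratedDeriv i g x| ≤ M := by
  set g : ℝ → ℝ := fun x => if x < 0 then 0 else η x with hg
  have hpos : ∀ x, 0 ≤ x → g x = η x := fun x hx => if_neg (not_lt.mpr hx)
  have hzero : ∀ x, x ∉ Set.Icc (1 / 2 : ℝ) 2 → g x = 0 := by
    intro x hx
    by_cases h : x < 0
    · exact if_pos h
    · rw [hpos x (not_lt.mp h)]; exact hη.supp x (not_lt.mp h) hx
  have hsm : ContDiff ℝ κ g := by
    rw [contDiff_iff_contDiffAt]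
    intro x
    rcases lt_or_ge x (1 / 2) with hx | hx
    · have : g =ᶠ[nhds x] fun _ => 0 := by
        filter_upwards [Iio_mem_nhds hx] with y hy
        exact hzero y fun h => absurd h.1 (not_le.mpr hy)
      exact contDiffAt_const.congr_of_eventuallyEq this
    · have h0 : (0 : ℝ) < x := by linarith
      have : g =ᶠ[nhds x] η := by
        filter_upwards [Ioi_mem_nhds h0] with y hy
        exact hpos y (le_of_lt hy)
      exact (hη.smooth.contDiffAt (Ici_mem_nhds h0)).congr_of_eventuallyEq this
  have hcs : HasCompactSupport g :=
    HasCompactSupport.intro (isCompact_Icc (a := (1 / 2 : ℝ)) (b := 2)) hzero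
  have hbd : ∀ i ≤ κ, ∃ M : ℝ, ∀ x, |iteratedDeriv i g x| ≤ M := by
    intro i hi
    have hc : Continuous (iteratedFDeriv ℝ i g) :=
      hsm.continuous_iteratedFDeriv (by exact_mod_cast hi)
    obtain ⟨C, hC⟩ := (hcs.iteratedFDeriv (𝕜 := ℝ) i).exists_bound_of_continuous hc
    refine ⟨C, fun x => ?_⟩
    rw [← Real.norm_eq_abs, ← norm_iteratedFDeriv_eq_norm_iteratedDeriv]
    exact hC x
  refine ⟨g, hsm, hpos, ?_⟩
  choose! B hB using hbd
  refine ⟨∑ i ∈ Finset.range (κ + 1), |B i|, by positivity, fun i hi x => ?_⟩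
  exact (hB i hi x).trans ((le_abs_self _).trans
    (Finset.single_le_sum (f := fun i => |B i|) (fun _ _ => abs_nonneg _)
      (Finset.mem_range.mpr (by omega))))

/-! ### The supremum and `L¹` bounds on `[0, π]` -/

section bounds

open Polynomial

/-- The coefficients of the filtered kernel. -/
noncomputable def filterCoef (η : ℝ → ℝ) (n : ℕ) (l : ℕ) : ℝ := η ((l : ℝ) / (n : ℝ))

lemma filterCoef_eq_zero_of_ge {η : ℝ → ℝ} {κ : ℕ} (hη : IsFilter η κ) {n : ℕ} (hn : 1 ≤ n) :
    ∀ l, 2 * n + 1 ≤ l → filterCoef η n l = 0 := by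
  intro l hl
  have hn' : (0 : ℝ) < n := by exact_mod_cast hn
  refine hη.supp _ (by positivity) fun h => ?_
  have := h.2
  rw [div_le_iff₀ hn'] at this
  have h2 : ((2 * n + 1 : ℕ) : ℝ) ≤ l := by exact_mod_cast hl
  push_cast at h2
  linarith

lemma filterCoef_eq_zero_of_lt {η : ℝ → ℝ} {κ : ℕ} (hη : IsFilter η κ) {n : ℕ} (hn : 1 ≤ n) :
    ∀ l, l < (n + 1) / 2 → filterCoef η n l = 0 := by
  intro l hl
  have hn' : (0 : ℝ) < n := by exact_mod_cast hn
  refine hη.supp _ (by positivity) fun h => ?_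
  have := h.1
  rw [le_div_iff₀ hn'] at this
  have h1 : 2 * l < n := by omega
  have h2 : 2 * (l : ℝ) < n := by exact_mod_cast h1
  linarith

lemma filteredKernel_eq {η : ℝ → ℝ} {κ : ℕ} (hη : IsFilter η κ) (k : ℕ) {n : ℕ} (hn : 1 ≤ n)
    (t : ℝ) : filteredKernel (k + 2) η n t =
      1 / (sphereVol (k + 2) * gparam k) * (zonalSum k (filterCoef η n) (2 * n + 1)).eval t := by
  rw [filteredKernel, tsum_eq_sum (s := Finset.range (2 * n + 1)), zonalSum_eval, Finset.mul_sum]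
  · refine Finset.sum_congr rfl fun l _ => ?_
    have h := harmDim_mul_normGegenbauer k l t
    rw [mul_assoc, div_mul_eq_mul_div, h, filterCoef, ← gparam, one_div, mul_inv]
    ring
  · intro l hl
    have := filterCoef_eq_zero_of_ge hη hn l (by simpa using hl)
    rw [filterCoef] at this
    rw [this, zero_mul, zero_mul]

lemma growth_le (k q : ℕ) : ∃ B : ℝ, 0 < B ∧ ∀ n l : ℕ, 1 ≤ n → l ≤ q * n →
    ((l : ℝ) + gparam k) * (gegenbauer (gparam k) l).eval 1 ≤ B * (n : ℝ) ^ (k + 1) := by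
  refine ⟨((q : ℝ) + k + 1) * ((q : ℝ) + k + 1) ^ k, by positivity, fun n l hn hl => ?_⟩
  have hn' : (1 : ℝ) ≤ n := by exact_mod_cast hn
  have hl' : (l : ℝ) ≤ q * n := by exact_mod_cast hl
  have hk0 : (0 : ℝ) ≤ k := Nat.cast_nonneg k
  have hkn : (k : ℝ) ≤ k * n := le_mul_of_one_le_right hk0 hn'
  have hp := gegenbauer_one_eq_choose k l
  rw [← gparam] at hp
  have hc : ((l + k).choose l : ℝ) ≤ ((l : ℝ) + k) ^ k := by
    rw [Nat.choose_symm_add]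
    exact_mod_cast Nat.choose_le_pow (l + k) k
  rw [hp]
  have h1 : (l : ℝ) + gparam k ≤ ((q : ℝ) + k + 1) * n := by
    rw [gparam]; nlinarith
  have h2 : (l : ℝ) + k ≤ ((q : ℝ) + k + 1) * n := by nlinarith
  have hg := gparam_pos k
  calc ((l : ℝ) + gparam k) * ((l + k).choose l : ℝ)
      ≤ (((q : ℝ) + k + 1) * n) * (((q : ℝ) + k + 1) * n) ^ k := by
        gcongr
        exact hc.trans (by gcongr)
    _ = _ := by rw [mul_pow]; ring

lemma IsFilter.exists_bound {η : ℝ → ℝ} {κ : ℕ} (hη : IsFilter η κ) :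
    ∃ M : ℝ, 0 ≤ M ∧ ∀ x, 0 ≤ x → |η x| ≤ M := by
  obtain ⟨g, -, hpos, M, hM, hb⟩ := hη.exists_extension
  exact ⟨M, hM, fun x hx => by simpa [hpos x hx] using hb 0 (Nat.zero_le _) x⟩

lemma zonalSum_sup_bound {η : ℝ → ℝ} {κ : ℕ} (hη : IsFilter η κ) (k : ℕ) :
    ∃ A : ℝ, 0 < A ∧ ∀ n : ℕ, 1 ≤ n → ∀ t ∈ Set.Icc (-1 : ℝ) 1,
      |(zonalSum k (filterCoef η n) (2 * n + 1)).eval t| ≤ A * (n : ℝ) ^ (k + 2) := by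
  obtain ⟨M, hM, hb⟩ := hη.exists_bound
  obtain ⟨B, hB, hg⟩ := growth_le k 2
  refine ⟨3 * ((M + 1) * B), by positivity, fun n hn t ht => ?_⟩
  have hn' : (1 : ℝ) ≤ n := by exact_mod_cast hn
  rw [zonalSum_eval]
  refine (Finset.abs_sum_le_sum_abs _ _).trans ?_
  have hterm : ∀ l ∈ Finset.range (2 * n + 1), |filterCoef η n l * ((l : ℝ) + gparam k) *
      (gegenbauer (gparam k) l).eval t| ≤ (M + 1) * (B * (n : ℝ) ^ (k + 1)) := by
    intro l hl
    have hpos : 0 < (l : ℝ) + gparam k := by have := gparam_pos k; positivity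
    rw [mul_assoc, abs_mul, abs_mul, abs_of_pos hpos]
    have h1 : |filterCoef η n l| ≤ M + 1 := (hb _ (by positivity)).trans (by linarith)
    have h2 := hg n l hn (by have := Finset.mem_range.mp hl; omega)
    have h3 := abs_gegenbauer_le (gparam_pos k) l ht
    exact mul_le_mul h1 ((mul_le_mul_of_nonneg_left h3 hpos.le).trans h2) (by positivity)
      (by positivity)
  refine (Finset.sum_le_card_nsmul _ _ _ hterm).trans ?_
  rw [Finset.card_range, nsmul_eq_mul]
  push_cast
  have : 2 * (n : ℝ) + 1 ≤ 3 * n := by linarith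
  calc (2 * (n : ℝ) + 1) * ((M + 1) * (B * (n : ℝ) ^ (k + 1)))
      ≤ 3 * n * ((M + 1) * (B * (n : ℝ) ^ (k + 1))) := by gcongr
    _ = _ := by ring

lemma one_sub_pow_mul_zonalSum (k : ℕ) (a : ℕ → ℝ) (N : ℕ) (h : ∀ l, N ≤ l → a l = 0) (j : ℕ) :
    (1 - X) ^ j * zonalSum k a N = zonalSum k ((coefOp k)^[j] a) (N + j) := by
  induction j with
  | zero => simp
  | succ j ih =>
    rw [pow_succ', mul_assoc, ih,
      one_sub_mul_zonalSum k _ _ (coefOp_iterate_eq_zero_of_ge k a N h j),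
      Function.iterate_succ', Function.comp, add_assoc]

lemma zonalInt_one_nonneg (k : ℕ) : 0 ≤ zonalInt k 1 := by
  refine intervalIntegral.integral_nonneg pi_pos.le fun θ hθ => ?_
  have := sin_nonneg_of_mem_Icc hθ
  simp only [eval_one, one_mul]
  positivity

/-- The iterated multiplication operator applied to the filter coefficients, with `ε` remaining
differences, is bounded by the powers of `1/n` that smoothness predicts. -/
lemma coefOp_filterCoef_diffBound {η : ℝ → ℝ} {κ : ℕ} (hη : IsFilter η κ) (k j ε : ℕ)
    (hs : 2 * j + ε ≤ κ) : ∃ M : ℝ, 0 ≤ M ∧ ∀ n : ℕ, 1 ≤ n →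
      DiffBound (1 / (n : ℝ)) M ε (2 * j)
        (fun l => (coefOp k)^[j] (filterCoef η n) (l + (n / 4 + j))) := by
  obtain ⟨g, hg, hpos, M, hM, hb⟩ := hη.exists_extension
  obtain ⟨M', hM', H⟩ := diffBound_coefOp_iterate k ε 4 M (by norm_num) hM j
  refine ⟨M', hM', fun n hn => ?_⟩
  have hn' : (0 : ℝ) < n := by exact_mod_cast hn
  have h1 := H (1 / (n : ℝ)) (n / 4) 0 (filterCoef η n) (by positivity) (by
    rw [mul_one_div, div_le_div_iff₀ (by positivity) hn']
    have : n ≤ 4 * (n / 4 + 1) := by omega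
    have h2 : (n : ℝ) ≤ 4 * (((n / 4 : ℕ) : ℝ) + 1) := by exact_mod_cast this
    linarith) (by
    have h3 := diffBound_of_contDiff (1 / (n : ℝ)) M (((n / 4 : ℕ) : ℝ) / n) (by positivity)
      (ε + 2 * j) 0 g (hg.of_le (by exact_mod_cast (by omega : ε + 2 * j ≤ κ)))
      (fun i hi x => by simpa using hb i (by omega) x)
    convert h3 using 2 with l
    rw [filterCoef, hpos _ (by positivity)]
    push_cast
    congr 1
    ring)
  rwa [zero_add] at h1

/-- The weighted `L²` bound, with one derivative of the filter spent per power of `1 - t`. -/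
lemma zonalInt_weighted_bound {η : ℝ → ℝ} {κ : ℕ} (hη : IsFilter η κ) (k s : ℕ) (hs : s ≤ κ) :
    ∃ (B : ℝ) (N₀ : ℕ), 0 ≤ B ∧ ∀ n : ℕ, 1 ≤ n → N₀ ≤ n →
      zonalInt k ((1 - X) ^ s * (zonalSum k (filterCoef η n) (2 * n + 1) *
        zonalSum k (filterCoef η n) (2 * n + 1))) * (n : ℝ) ^ (2 * s) ≤ B * (n : ℝ) ^ (k + 2) := by
  have hA0 := zonalInt_one_nonneg k
  have hg := gparam_pos k
  rcases Nat.even_or_odd' s with ⟨j, rfl | rfl⟩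
  · obtain ⟨M, hM, H⟩ := coefOp_filterCoef_diffBound hη k j 0 hs
    obtain ⟨B, hB, hgr⟩ := growth_le k (3 + j)
    refine ⟨gparam k * zonalInt k 1 * ((3 + j : ℝ) * (M ^ 2 * B)), 8 * j + 8, by positivity,
      fun n hn hn0 => ?_⟩
    have hn' : (0 : ℝ) < n := by exact_mod_cast hn
    have hsupp := filterCoef_eq_zero_of_ge hη hn
    have hlow := coefOp_iterate_eq_zero_of_lt k _ _ (filterCoef_eq_zero_of_lt hη hn) j
    set b := (coefOp k)^[j] (filterCoef η n) with hb
    have hbb : ∀ l, |b l| ≤ M * (1 / (n : ℝ)) ^ (2 * j) := by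
      intro l
      rcases lt_or_ge l (n / 4 + j) with h | h
      · rw [hlow l (by omega), abs_zero]; positivity
      · have := (H n hn).bound (l - (n / 4 + j))
        rwa [Nat.sub_add_cancel h] at this
    have e : (1 - X : ℝ[X]) ^ (2 * j) * (zonalSum k (filterCoef η n) (2 * n + 1) *
        zonalSum k (filterCoef η n) (2 * n + 1)) =
        zonalSum k b (2 * n + 1 + j) * zonalSum k b (2 * n + 1 + j) := by
      rw [hb, ← one_sub_pow_mul_zonalSum k _ _ hsupp j]; ring
    rw [e, zonalInt_zonalSum_mul, mul_assoc, mul_assoc _ _ ((n : ℝ) ^ (k + 2))]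
    refine mul_le_mul_of_nonneg_left ?_ (by positivity)
    have hsum : ∑ l ∈ Finset.range (2 * n + 1 + j),
        b l * b l * (((l : ℝ) + gparam k) * (gegenbauer (gparam k) l).eval 1) ≤
        (2 * n + 1 + j : ℕ) • ((M * (1 / (n : ℝ)) ^ (2 * j)) ^ 2 * (B * (n : ℝ) ^ (k + 1))) := by
      refine (Finset.sum_le_card_nsmul _ _ _ fun l hl => ?_).trans_eq (by rw [Finset.card_range])
      have h1 : b l * b l ≤ (M * (1 / (n : ℝ)) ^ (2 * j)) ^ 2 := by
        rw [← sq, ← sq_abs]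
        exact pow_le_pow_left₀ (abs_nonneg _) (hbb l) 2
      refine mul_le_mul h1 (hgr n l hn ?_) ?_ (by positivity)
      · have := Finset.mem_range.mp hl
        nlinarith
      · have := (gegenbauer_one_pos hg l).le
        positivity
    have hcard : ((2 * n + 1 + j : ℕ) : ℝ) ≤ (3 + j) * n := by
      have : 2 * n + 1 + j ≤ (3 + j) * n := by nlinarith
      exact_mod_cast this
    rw [nsmul_eq_mul] at hsum
    calc _ ≤ ((2 * n + 1 + j : ℕ) : ℝ) *
          ((M * (1 / (n : ℝ)) ^ (2 * j)) ^ 2 * (B * (n : ℝ) ^ (k + 1))) * (n : ℝ) ^ (2 * (2 * j)) := by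
          gcongr
      _ ≤ (3 + j) * n *
          ((M * (1 / (n : ℝ)) ^ (2 * j)) ^ 2 * (B * (n : ℝ) ^ (k + 1))) * (n : ℝ) ^ (2 * (2 * j)) := by
          gcongr
      _ = (3 + j) * (M ^ 2 * B) * (n : ℝ) ^ (k + 2) *
          (((1 / (n : ℝ)) ^ (2 * j) * (n : ℝ) ^ (2 * j)) ^ 2) := by ring
      _ = _ := by rw [← mul_pow, one_div_mul_cancel hn'.ne']; simp
  · obtain ⟨M, hM, H⟩ := coefOp_filterCoef_diffBound hη k j 1 hs
    obtain ⟨B, hB, hgr⟩ := growth_le k (3 + j)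
    refine ⟨gparam k * zonalInt k 1 / 2 * ((3 + j : ℝ) * (M ^ 2 * (2 * B))), 8 * j + 8,
      by positivity, fun n hn hn0 => ?_⟩
    have hn' : (0 : ℝ) < n := by exact_mod_cast hn
    have hsupp := filterCoef_eq_zero_of_ge hη hn
    have hlow := coefOp_iterate_eq_zero_of_lt k _ _ (filterCoef_eq_zero_of_lt hη hn) j
    have hhigh := coefOp_iterate_eq_zero_of_ge k _ _ hsupp j
    set b := (coefOp k)^[j] (filterCoef η n) with hb
    have hbb : ∀ l, |b (l + 1) - b l| ≤ M * (1 / (n : ℝ)) ^ (2 * j + 1) := by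
      intro l
      rcases lt_or_ge l (n / 4 + j) with h | h
      · rw [hlow l (by omega), hlow (l + 1) (by omega), sub_zero, abs_zero]; positivity
      · have := (H n hn).2 (l - (n / 4 + j))
        simp only at this
        rwa [show l - (n / 4 + j) + 1 + (n / 4 + j) = l + 1 by omega,
          Nat.sub_add_cancel h] at this
    have e : (1 - X : ℝ[X]) ^ (2 * j + 1) * (zonalSum k (filterCoef η n) (2 * n + 1) *
        zonalSum k (filterCoef η n) (2 * n + 1)) =
        (1 - X) * zonalSum k b (2 * n + 1 + j) * zonalSum k b (2 * n + 1 + j) := by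
      rw [hb, ← one_sub_pow_mul_zonalSum k _ _ hsupp j]; ring
    rw [e, zonalInt_one_sub_mul_sq k b _ hhigh, mul_assoc, mul_assoc _ _ ((n : ℝ) ^ (k + 2))]
    refine mul_le_mul_of_nonneg_left ?_ (by positivity)
    have hsum : ∑ l ∈ Finset.range (2 * n + 1 + j),
        ((l : ℝ) + 1) * (gegenbauer (gparam k) (l + 1)).eval 1 * (b (l + 1) - b l) ^ 2 ≤
        (2 * n + 1 + j : ℕ) •
          ((2 * B * (n : ℝ) ^ (k + 1)) * (M * (1 / (n : ℝ)) ^ (2 * j + 1)) ^ 2) := by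
      refine (Finset.sum_le_card_nsmul _ _ _ fun l hl => ?_).trans_eq (by rw [Finset.card_range])
      have h1 : (b (l + 1) - b l) ^ 2 ≤ (M * (1 / (n : ℝ)) ^ (2 * j + 1)) ^ 2 := by
        rw [← sq_abs]
        exact pow_le_pow_left₀ (abs_nonneg _) (hbb l) 2
      have hp := gegenbauer_one_pos hg l
      refine mul_le_mul ?_ h1 (sq_nonneg _) (by positivity)
      rw [gegenbauer_one_succ]
      have h2 := hgr n l hn (by
        have := Finset.mem_range.mp hl
        nlinarith)
      have h3 : 0 ≤ (l : ℝ) * (gegenbauer (gparam k) l).eval 1 := by positivity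
      linarith
    have hcard : ((2 * n + 1 + j : ℕ) : ℝ) ≤ (3 + j) * n := by
      have : 2 * n + 1 + j ≤ (3 + j) * n := by nlinarith
      exact_mod_cast this
    rw [nsmul_eq_mul] at hsum
    calc _ ≤ ((2 * n + 1 + j : ℕ) : ℝ) *
          ((2 * B * (n : ℝ) ^ (k + 1)) * (M * (1 / (n : ℝ)) ^ (2 * j + 1)) ^ 2) *
            (n : ℝ) ^ (2 * (2 * j + 1)) := by
          gcongr
      _ ≤ (3 + j) * n *
          ((2 * B * (n : ℝ) ^ (k + 1)) * (M * (1 / (n : ℝ)) ^ (2 * j + 1)) ^ 2) *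
            (n : ℝ) ^ (2 * (2 * j + 1)) := by
          gcongr
      _ = (3 + j) * (M ^ 2 * (2 * B)) * (n : ℝ) ^ (k + 2) *
          (((1 / (n : ℝ)) ^ (2 * j + 1) * (n : ℝ) ^ (2 * j + 1)) ^ 2) := by ring
      _ = _ := by rw [← mul_pow, one_div_mul_cancel hn'.ne']; simp

lemma pow_le_one_add_pow {y : ℝ} (hy : 0 ≤ y) {a b : ℕ} (h : a ≤ b) : y ^ a ≤ 1 + y ^ b := by
  rcases le_total y 1 with h1 | h1
  · linarith [pow_le_one₀ (n := a) hy h1, pow_nonneg hy b]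
  · linarith [pow_le_pow_right₀ h1 h]

/-- The dual weight `1/(1 + (n²(1-t))^s)` has integral `O(n^{-(k+2)})` since `2s ≥ k+3`. -/
lemma dual_weight_le (k s : ℕ) (hs : k + 3 ≤ 2 * s) : ∃ D : ℝ, 0 ≤ D ∧ ∀ n : ℕ, 1 ≤ n →
    ∀ θ ∈ Set.Icc (0 : ℝ) π, (n : ℝ) ^ (k + 2) *
      (sin θ ^ (k + 1) / (1 + ((n : ℝ) ^ 2 * (1 - cos θ)) ^ s)) ≤
      D * (n * (1 + ((n : ℝ) * θ) ^ 2)⁻¹) := by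
  set c : ℝ := (2 / π ^ 2) ^ s with hc
  have hpi := pi_pos
  have hc0 : 0 < c := by positivity
  have hc1 : c ≤ 1 := by
    refine pow_le_one₀ (by positivity) ?_
    rw [div_le_one (by positivity)]
    nlinarith [pi_gt_three]
  refine ⟨2 / c, by positivity, fun n hn θ hθ => ?_⟩
  have hn' : (0 : ℝ) < n := by exact_mod_cast hn
  have hθ0 := hθ.1
  set y : ℝ := n * θ with hy
  have hy0 : 0 ≤ y := by positivity
  have hcos : 2 / π ^ 2 * θ ^ 2 ≤ 1 - cos θ := by
    have := cos_le_one_sub_mul_cos_sq (x := θ) (by rw [abs_of_nonneg hθ0]; exact hθ.2)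
    linarith
  have hV : c * (1 + y ^ (2 * s)) ≤ 1 + ((n : ℝ) ^ 2 * (1 - cos θ)) ^ s := by
    have h1 : c * y ^ (2 * s) ≤ ((n : ℝ) ^ 2 * (1 - cos θ)) ^ s := by
      rw [hc, pow_mul, ← mul_pow]
      refine pow_le_pow_left₀ (by positivity) ?_ s
      rw [hy]
      calc 2 / π ^ 2 * ((n : ℝ) * θ) ^ 2 = (n : ℝ) ^ 2 * (2 / π ^ 2 * θ ^ 2) := by ring
        _ ≤ _ := by gcongr
    linarith
  have hsin0 := sin_nonneg_of_mem_Icc hθ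
  have hsin : sin θ ^ (k + 1) ≤ θ ^ (k + 1) := pow_le_pow_left₀ hsin0 (sin_le hθ0) _
  have hyy : y ^ (k + 1) * (1 + y ^ 2) ≤ 2 * (1 + y ^ (2 * s)) := by
    have h1 := pow_le_one_add_pow hy0 (by omega : k + 1 ≤ 2 * s)
    have h2 := pow_le_one_add_pow hy0 hs
    calc y ^ (k + 1) * (1 + y ^ 2) = y ^ (k + 1) + y ^ (k + 3) := by ring
      _ ≤ _ := by linarith
  have hVpos : 0 < c * (1 + y ^ (2 * s)) := by positivity
  calc (n : ℝ) ^ (k + 2) * (sin θ ^ (k + 1) / (1 + ((n : ℝ) ^ 2 * (1 - cos θ)) ^ s))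
      ≤ (n : ℝ) ^ (k + 2) * (θ ^ (k + 1) / (c * (1 + y ^ (2 * s)))) := by gcongr
    _ = n * (y ^ (k + 1) / (c * (1 + y ^ (2 * s)))) := by rw [hy]; ring
    _ ≤ n * (2 / c * (1 + y ^ 2)⁻¹) := by
        gcongr
        rw [div_le_iff₀ hVpos]
        have h3 : (0 : ℝ) < 1 + y ^ 2 := by positivity
        have e : 2 / c * (1 + y ^ 2)⁻¹ * (c * (1 + y ^ (2 * s))) =
          2 * (1 + y ^ (2 * s)) / (1 + y ^ 2) := by field_simp
        rw [e, le_div_iff₀ h3]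
        exact hyy
    _ = _ := by ring

lemma integral_lorentz_le {n : ℕ} (hn : 1 ≤ n) :
    ∫ θ in (0 : ℝ)..π, (n : ℝ) * (1 + ((n : ℝ) * θ) ^ 2)⁻¹ ≤ π / 2 := by
  have hn' : (n : ℝ) ≠ 0 := by positivity
  rw [intervalIntegral.integral_const_mul,
    intervalIntegral.integral_comp_mul_left (fun x => (1 + x ^ 2)⁻¹) hn', integral_inv_one_add_sq,
    smul_eq_mul, mul_inv_cancel_left₀ hn', mul_zero, arctan_zero, sub_zero]
  exact (arctan_lt_pi_div_two _).le

/-- The `L¹` bound: for large `n` by the weighted `L²` bounds with `s = ⌊k/2⌋ + 2` powers of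
`1 - t`, for the remaining `n` by the supremum bound. -/
lemma zonalSum_L1_bound {η : ℝ → ℝ} {κ : ℕ} (hη : IsFilter η κ) (k : ℕ) (hκ : k / 2 + 2 ≤ κ) :
    ∃ B : ℝ, 0 < B ∧ ∀ n : ℕ, 1 ≤ n →
      ∫ θ in (0 : ℝ)..π, |(zonalSum k (filterCoef η n) (2 * n + 1)).eval (cos θ)| *
        sin θ ^ (k + 1) ≤ B := by
  set s := k / 2 + 2 with hs
  obtain ⟨A, hA, hsup⟩ := zonalSum_sup_bound hη k
  obtain ⟨B₀, N₀, hB₀, H₀⟩ := zonalInt_weighted_bound hη k 0 (Nat.zero_le _)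
  obtain ⟨B₁, N₁, hB₁, H₁⟩ := zonalInt_weighted_bound hη k s hκ
  obtain ⟨D, hD, HD⟩ := dual_weight_le k s (by omega)
  have hpi := pi_pos
  refine ⟨(B₀ + B₁) / 2 + D * (π / 2) / 2 + π * (A * ((N₀ : ℝ) + N₁ + 1) ^ (k + 2)),
    by positivity, fun n hn => ?_⟩
  have hn' : (0 : ℝ) < n := by exact_mod_cast hn
  set P := zonalSum k (filterCoef η n) (2 * n + 1) with hP
  have hcont : Continuous fun θ => |P.eval (cos θ)| * sin θ ^ (k + 1) := by fun_prop
  by_cases hN : N₀ ≤ n ∧ N₁ ≤ n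
  · -- pointwise arithmetic-geometric mean inequality against the weight `1 + (n²(1-t))^s`
    have e0 := H₀ n hn hN.1
    have e1 := H₁ n hn hN.2
    rw [← hP] at e0 e1
    simp only [pow_zero, one_mul, mul_zero, mul_one] at e0
    set f₀ : ℝ → ℝ := fun θ => (P * P).eval (cos θ) * sin θ ^ (k + 1) with hf₀
    set f₁ : ℝ → ℝ := fun θ => ((1 - X) ^ s * (P * P)).eval (cos θ) * sin θ ^ (k + 1) with hf₁
    set f₂ : ℝ → ℝ := fun θ => (n : ℝ) * (1 + ((n : ℝ) * θ) ^ 2)⁻¹ with hf₂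
    have c0 : Continuous f₀ := by rw [hf₀]; fun_prop
    have c1 : Continuous f₁ := by rw [hf₁]; fun_prop
    have c2 : Continuous f₂ := by
      rw [hf₂]
      refine continuous_const.mul (Continuous.inv₀ (by fun_prop) fun θ => by positivity)
    have hpt : ∀ θ ∈ Set.Icc (0 : ℝ) π, |P.eval (cos θ)| * sin θ ^ (k + 1) ≤
        1 / (2 * (n : ℝ) ^ (k + 2)) * f₀ θ +
          ((n : ℝ) ^ (2 * s) / (2 * (n : ℝ) ^ (k + 2)) * f₁ θ + D / 2 * f₂ θ) := by
      intro θ hθ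
      have h1 := HD n hn θ hθ
      have hsin : 0 ≤ sin θ ^ (k + 1) := pow_nonneg (sin_nonneg_of_mem_Icc hθ) _
      have hcos : 0 ≤ 1 - cos θ := by linarith [cos_le_one θ]
      set V : ℝ := 1 + ((n : ℝ) ^ 2 * (1 - cos θ)) ^ s with hV
      have hVpos : 0 < V := by positivity
      set m : ℝ := (n : ℝ) ^ (k + 2) with hm
      have hmpos : 0 < m := by positivity
      set u := |P.eval (cos θ)| with hu
      have amgm : u ≤ V * u ^ 2 / (2 * m) + m / (2 * V) := by
        rw [div_add_div _ _ (by positivity) (by positivity), le_div_iff₀ (by positivity)]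
        nlinarith [sq_nonneg (V * u - m)]
      have hu2 : u ^ 2 = P.eval (cos θ) * P.eval (cos θ) := by rw [hu, sq_abs, sq]
      calc u * sin θ ^ (k + 1) ≤ (V * u ^ 2 / (2 * m) + m / (2 * V)) * sin θ ^ (k + 1) := by gcongr
        _ = V * u ^ 2 / (2 * m) * sin θ ^ (k + 1) + (m * (sin θ ^ (k + 1) / V)) / 2 := by
            field_simp
        _ ≤ V * u ^ 2 / (2 * m) * sin θ ^ (k + 1) + (D * f₂ θ) / 2 := by gcongr
        _ = _ := by
            rw [hf₀, hf₁, hu2, hV, mul_pow, ← pow_mul]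
            simp only [eval_mul, eval_pow, eval_sub, eval_one, eval_X]
            ring
    calc _ ≤ ∫ θ in (0 : ℝ)..π, (1 / (2 * (n : ℝ) ^ (k + 2)) * f₀ θ +
          ((n : ℝ) ^ (2 * s) / (2 * (n : ℝ) ^ (k + 2)) * f₁ θ + D / 2 * f₂ θ)) :=
          intervalIntegral.integral_mono_on hpi.le (hcont.intervalIntegrable _ _)
            (Continuous.intervalIntegrable (by fun_prop) _ _) hpt
      _ = 1 / (2 * (n : ℝ) ^ (k + 2)) * zonalInt k (P * P) +
          ((n : ℝ) ^ (2 * s) / (2 * (n : ℝ) ^ (k + 2)) * zonalInt k ((1 - X) ^ s * (P * P)) +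
            D / 2 * ∫ θ in (0 : ℝ)..π, f₂ θ) := by
          rw [intervalIntegral.integral_add (Continuous.intervalIntegrable (by fun_prop) _ _)
            (Continuous.intervalIntegrable (by fun_prop) _ _),
            intervalIntegral.integral_add (Continuous.intervalIntegrable (by fun_prop) _ _)
            (Continuous.intervalIntegrable (by fun_prop) _ _),
            intervalIntegral.integral_const_mul, intervalIntegral.integral_const_mul,
            intervalIntegral.integral_const_mul]
          rfl
      _ ≤ B₀ / 2 + (B₁ / 2 + D / 2 * (π / 2)) := by
          have hm : (0 : ℝ) < 2 * (n : ℝ) ^ (k + 2) := by positivity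
          refine add_le_add ?_ (add_le_add ?_ ?_)
          · rw [div_mul_eq_mul_div, div_le_iff₀ hm]; linarith
          · rw [div_mul_eq_mul_div, div_le_iff₀ hm]; linarith
          · exact mul_le_mul_of_nonneg_left (integral_lorentz_le hn) (by positivity)
      _ ≤ _ := by
          have : 0 ≤ π * (A * ((N₀ : ℝ) + N₁ + 1) ^ (k + 2)) := by positivity
          linarith
  · have hle : (n : ℝ) ≤ (N₀ : ℝ) + N₁ + 1 := by
      have : n ≤ N₀ + N₁ + 1 := by omega
      exact_mod_cast this
    calc _ ≤ ∫ _ in (0 : ℝ)..π, A * ((N₀ : ℝ) + N₁ + 1) ^ (k + 2) := by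
          refine intervalIntegral.integral_mono_on hpi.le (hcont.intervalIntegrable _ _)
            (Continuous.intervalIntegrable (by fun_prop) _ _) fun θ hθ => ?_
          have h1 := hsup n hn (cos θ) ⟨neg_one_le_cos θ, cos_le_one θ⟩
          have h2 : sin θ ^ (k + 1) ≤ 1 := pow_le_one₀ (sin_nonneg_of_mem_Icc hθ) (sin_le_one θ)
          calc _ ≤ |P.eval (cos θ)| * 1 := by gcongr
            _ ≤ A * (n : ℝ) ^ (k + 2) := by rw [mul_one]; exact h1
            _ ≤ _ := by gcongr
      _ = π * (A * ((N₀ : ℝ) + N₁ + 1) ^ (k + 2)) := by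
          rw [intervalIntegral.integral_const, sub_zero, smul_eq_mul]
      _ ≤ _ := by
          have : 0 ≤ (B₀ + B₁) / 2 + D * (π / 2) / 2 := by positivity
          linarith

end bounds

/-! ### Zonal integrals over the sphere -/

/-- Stereographic coordinates from the pole `v`: a `1`-Lipschitz map of `ℝ^d` whose disc of radius
`2` covers the hemisphere opposite to `v`. -/
lemma exists_stereo_chart (d : ℕ) (v : UnitSphere d) :
    ∃ Φ : EuclideanSpace ℝ (Fin d) → UnitSphere d, LipschitzWith 1 Φ ∧
      (∀ w, sdot v (Φ w) = (‖w‖ ^ 2 - 4) / (‖w‖ ^ 2 + 4)) ∧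
      ∀ y, sdot v y ≤ 0 → ∃ w, ‖w‖ ≤ 2 ∧ Φ w = y := by
  have hv : ‖(v : EuclideanSpace ℝ (Fin (d + 1)))‖ = 1 := by simp
  have hv0 : (v : EuclideanSpace ℝ (Fin (d + 1))) ≠ 0 := by
    intro h; rw [h] at hv; simp at hv
  have : Fact (Module.finrank ℝ (EuclideanSpace ℝ (Fin (d + 1))) = d + 1) := ⟨by simp⟩
  let ι := (OrthonormalBasis.fromOrthogonalSpanSingleton (𝕜 := ℝ) d hv0).repr.symm
  have hvv : ⟪(v : EuclideanSpace ℝ (Fin (d + 1))), (v : EuclideanSpace ℝ (Fin (d + 1)))⟫ = 1 := by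
    rw [real_inner_self_eq_norm_sq, hv]; norm_num
  have hval : ∀ w, ((stereoInvFun hv (ι w) : UnitSphere d) : EuclideanSpace ℝ (Fin (d + 1))) =
      (‖w‖ ^ 2 + 4)⁻¹ • ((4 : ℝ) • (ι w : EuclideanSpace ℝ (Fin (d + 1))) +
        (‖w‖ ^ 2 - 4) • (v : EuclideanSpace ℝ (Fin (d + 1)))) := by
    intro w
    rw [stereoInvFun_apply, LinearIsometryEquiv.norm_map]
  have horth : ∀ w, ⟪(v : EuclideanSpace ℝ (Fin (d + 1))),
      (ι w : EuclideanSpace ℝ (Fin (d + 1)))⟫ = 0 := fun w =>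
    Submodule.mem_orthogonal_singleton_iff_inner_right.mp (ι w).2
  have hdot : ∀ w, sdot v (stereoInvFun hv (ι w)) = (‖w‖ ^ 2 - 4) / (‖w‖ ^ 2 + 4) := by
    intro w
    rw [sdot, hval, inner_smul_right, inner_add_right, inner_smul_right, inner_smul_right, horth,
      hvv]
    ring
  refine ⟨fun w => stereoInvFun hv (ι w), ?_, hdot, ?_⟩
  · refine LipschitzWith.of_dist_le_mul fun u w => ?_
    rw [NNReal.coe_one, one_mul, Subtype.dist_eq, dist_eq_norm, dist_eq_norm]
    refine abs_le_of_sq_le_sq' ?_ (norm_nonneg _) |>.2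
    have hin : ⟪(ι u : EuclideanSpace ℝ (Fin (d + 1))), (ι w : EuclideanSpace ℝ (Fin (d + 1)))⟫ =
        ⟪u, w⟫ := by
      rw [← Submodule.coe_inner, LinearIsometryEquiv.inner_map_map]
    have hn : ∀ w, ‖((stereoInvFun hv (ι w) : UnitSphere d) :
        EuclideanSpace ℝ (Fin (d + 1)))‖ = 1 := fun w =>
      mem_sphere_zero_iff_norm.mp (stereoInvFun hv (ι w)).2
    have hinner : ⟪((stereoInvFun hv (ι u) : UnitSphere d) : EuclideanSpace ℝ (Fin (d + 1))),
        ((stereoInvFun hv (ι w) : UnitSphere d) : EuclideanSpace ℝ (Fin (d + 1)))⟫ =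
        (16 * ⟪u, w⟫ + (‖u‖ ^ 2 - 4) * (‖w‖ ^ 2 - 4)) / ((‖u‖ ^ 2 + 4) * (‖w‖ ^ 2 + 4)) := by
      rw [hval, hval]
      simp only [inner_smul_right, inner_smul_left, inner_add_right, inner_add_left, hvv, hin,
        horth, real_inner_comm (v : EuclideanSpace ℝ (Fin (d + 1)))]
      simp only [conj_trivial]
      field_simp
      ring
    rw [norm_sub_sq_real, norm_sub_sq_real, hn, hn, hinner]
    have ha := sq_nonneg ‖u‖
    have hb := sq_nonneg ‖w‖
    have hd : 0 ≤ ‖u‖ ^ 2 - 2 * ⟪u, w⟫ + ‖w‖ ^ 2 := by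
      rw [← norm_sub_sq_real]; positivity
    set a := ‖u‖ ^ 2
    set b := ‖w‖ ^ 2
    set c := ⟪u, w⟫
    have e : 1 ^ 2 - 2 * ((16 * c + (a - 4) * (b - 4)) / ((a + 4) * (b + 4))) + 1 ^ 2 =
        16 * (a - 2 * c + b) / ((a + 4) * (b + 4)) := by
      field_simp
      ring
    rw [e, div_le_iff₀ (by positivity)]
    have : 16 ≤ (a + 4) * (b + 4) := by nlinarith [mul_nonneg ha hb]
    nlinarith
  · intro y hy
    have hne : (y : EuclideanSpace ℝ (Fin (d + 1))) ≠ v := by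
      intro h
      rw [sdot, h, hvv] at hy
      linarith
    refine ⟨ι.symm (stereoToFun (v : EuclideanSpace ℝ (Fin (d + 1))) y), ?_, ?_⟩
    · have h1 := hdot (ι.symm (stereoToFun (v : EuclideanSpace ℝ (Fin (d + 1))) y))
      rw [LinearIsometryEquiv.apply_symm_apply, stereo_left_inv hv hne] at h1
      rw [h1, div_nonpos_iff] at hy
      rcases hy with h | h
      · nlinarith [sq_nonneg ‖ι.symm (stereoToFun (v : EuclideanSpace ℝ (Fin (d + 1))) y)‖]
      · nlinarith [norm_nonneg (ι.symm (stereoToFun (v : EuclideanSpace ℝ (Fin (d + 1))) y))]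
    · simp only [LinearIsometryEquiv.apply_symm_apply]
      exact stereo_left_inv hv hne

lemma continuous_sdot {d : ℕ} (v : UnitSphere d) : Continuous (sdot v) := by
  unfold sdot; fun_prop

/-- Since the chart does not increase Hausdorff measure, a zonal integral over the hemisphere
opposite to `v` is at most the corresponding radial integral over a disc. -/
lemma hemisphere_lintegral_le (d : ℕ) (v : UnitSphere d) (G : ℝ → ℝ≥0∞) (hG : Measurable G) :
    ∫⁻ y in {y | sdot v y ≤ 0}, G (sdot v y) ∂(sphereMeasure d) ≤
      ∫⁻ w in Metric.closedBall (0 : EuclideanSpace ℝ (Fin d)) 2,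
        G ((‖w‖ ^ 2 - 4) / (‖w‖ ^ 2 + 4)) ∂μH[d] := by
  obtain ⟨Φ, hL, hdot, hcov⟩ := exists_stereo_chart d v
  have hm : (sphereMeasure d).restrict {y | sdot v y ≤ 0} ≤
      Measure.map Φ ((μH[d] : Measure (EuclideanSpace ℝ (Fin d))).restrict
        (Metric.closedBall 0 2)) := by
    refine Measure.le_iff.mpr fun A hA => ?_
    rw [Measure.restrict_apply hA, Measure.map_apply hL.continuous.measurable hA,
      Measure.restrict_apply (hL.continuous.measurable hA)]
    have hsub : A ∩ {y | sdot v y ≤ 0} ⊆ Φ '' (Φ ⁻¹' A ∩ Metric.closedBall 0 2) := by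
      rintro y ⟨hyA, hy⟩
      obtain ⟨w, hw, rfl⟩ := hcov y hy
      exact ⟨w, ⟨hyA, by simpa using hw⟩, rfl⟩
    refine (measure_mono hsub).trans ?_
    have := hL.hausdorffMeasure_image_le (d := (d : ℝ)) (Nat.cast_nonneg d)
      (Φ ⁻¹' A ∩ Metric.closedBall 0 2)
    simpa [sphereMeasure] using this
  refine (lintegral_mono' hm le_rfl).trans ?_
  rw [lintegral_map (f := fun y => G (sdot v y)) (hG.comp (continuous_sdot v).measurable)
    hL.continuous.measurable]
  simp only [hdot]
  exact le_rfl

lemma continuous_stereo_height : Continuous fun r : ℝ => (r ^ 2 - 4) / (r ^ 2 + 4) :=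
  Continuous.div (by fun_prop) (by fun_prop) fun r => by positivity

/-- Polar coordinates in the disc, then the substitution `θ = 2 arctan (r/2)`. -/
lemma disc_lintegral_le (k : ℕ) (F : ℝ → ℝ) (hF : Continuous F) (hF0 : ∀ t, 0 ≤ F t) :
    ∫⁻ w in Metric.closedBall (0 : EuclideanSpace ℝ (Fin (k + 2))) 2,
        ENNReal.ofReal (F ((‖w‖ ^ 2 - 4) / (‖w‖ ^ 2 + 4))) ∂μH[(k + 2 : ℕ)] ≤
      ENNReal.ofReal ((k + 2 : ℕ) * (μH[(k + 2 : ℕ)] : Measure (EuclideanSpace ℝ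
        (Fin (k + 2)))).real (Metric.ball 0 1) * (2 ^ (k + 2) *
          ∫ θ in (0 : ℝ)..π, F (-cos θ) * sin θ ^ (k + 1))) := by
  set μ : Measure (EuclideanSpace ℝ (Fin (k + 2))) := μH[(k + 2 : ℕ)] with hμ
  have hpi := pi_pos
  set f : ℝ → ℝ := fun r => F ((r ^ 2 - 4) / (r ^ 2 + 4)) with hf
  have hfc : Continuous f := hF.comp continuous_stereo_height
  have hfw : Continuous fun w : EuclideanSpace ℝ (Fin (k + 2)) => f ‖w‖ := hfc.comp continuous_norm
  have hint : IntegrableOn (fun w : EuclideanSpace ℝ (Fin (k + 2)) => f ‖w‖)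
      (Metric.closedBall 0 2) μ :=
    hfw.continuousOn.integrableOn_compact (isCompact_closedBall _ _)
  rw [← ofReal_integral_eq_lintegral_ofReal hint (Filter.Eventually.of_forall fun w => hF0 _)]
  refine ENNReal.ofReal_le_ofReal ?_
  have hind : ∫ w in Metric.closedBall 0 2, f ‖w‖ ∂μ =
      ∫ w, (Set.Iic (2 : ℝ)).indicator f ‖w‖ ∂μ := by
    rw [← integral_indicator Metric.isClosed_closedBall.measurableSet]
    congr 1
    ext w
    by_cases h : ‖w‖ ≤ 2
    · rw [Set.indicator_of_mem (by simpa using h), Set.indicator_of_mem (by simpa using h)]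
    · rw [Set.indicator_of_notMem (by simpa using h), Set.indicator_of_notMem (by simpa using h)]
  rw [hind, integral_fun_norm_addHaar]
  have hfin : Module.finrank ℝ (EuclideanSpace ℝ (Fin (k + 2))) = k + 2 := by simp
  rw [hfin, nsmul_eq_mul, smul_eq_mul, mul_assoc]
  refine mul_le_mul_of_nonneg_left (mul_le_mul_of_nonneg_left ?_ measureReal_nonneg)
    (Nat.cast_nonneg _)
  have hrad : ∫ y in Set.Ioi (0 : ℝ), y ^ (k + 2 - 1) • (Set.Iic (2 : ℝ)).indicator f y =
      ∫ r in (0 : ℝ)..2, r ^ (k + 1) * f r := by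
    rw [intervalIntegral.integral_of_le (by norm_num), ← Set.Ioi_inter_Iic,
      ← setIntegral_indicator measurableSet_Iic]
    congr 1
    ext y
    by_cases h : y ∈ Set.Iic (2 : ℝ)
    · rw [Set.indicator_of_mem h, Set.indicator_of_mem h]; rfl
    · rw [Set.indicator_of_notMem h, Set.indicator_of_notMem h, smul_zero]
  rw [hrad]
  set H : ℝ → ℝ := fun θ => F (-cos θ) * sin θ ^ (k + 1) with hH
  have hHc : Continuous H := by rw [hH]; fun_prop
  have hg : ∀ r ∈ Set.uIcc (0 : ℝ) 2,
      HasDerivAt (fun r : ℝ => 2 * arctan (r / 2)) (4 / (4 + r ^ 2)) r := by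
    intro r _
    have h1 := ((hasDerivAt_id r).div_const 2).arctan.const_mul 2
    refine h1.congr_deriv ?_
    simp only [id]
    field_simp
    ring
  have hgc : Continuous fun r : ℝ => 4 / (4 + r ^ 2) :=
    Continuous.div (by fun_prop) (by fun_prop) fun r => by positivity
  have hsub := intervalIntegral.integral_comp_mul_deriv (g := H) hg hgc.continuousOn hHc
  have hsin : ∀ r : ℝ, sin (2 * arctan (r / 2)) = 4 * r / (4 + r ^ 2) := by
    intro r
    have hp : (0 : ℝ) < 1 + (r / 2) ^ 2 := by positivity
    rw [sin_two_mul, sin_arctan, cos_arctan, mul_assoc, div_mul_div_comm, mul_self_sqrt hp.le]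
    field_simp
    ring
  have hcos : ∀ r : ℝ, -cos (2 * arctan (r / 2)) = (r ^ 2 - 4) / (r ^ 2 + 4) := by
    intro r
    rw [cos_two_mul, cos_sq_arctan]
    field_simp
    ring
  have h02 : (0 : ℝ) ≤ 2 := by norm_num
  have hone : (2 : ℝ) * arctan (2 / 2) = π / 2 := by rw [div_self two_ne_zero, arctan_one]; ring
  have hle : ∫ r in (0 : ℝ)..2, r ^ (k + 1) * f r ≤
      ∫ r in (0 : ℝ)..2, 2 ^ (k + 2) * ((H ∘ fun r => 2 * arctan (r / 2)) r * (4 / (4 + r ^ 2))) := by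
    refine intervalIntegral.integral_mono_on h02
      (Continuous.intervalIntegrable (by fun_prop) _ _)
      (Continuous.intervalIntegrable (continuous_const.mul
        ((hHc.comp (by fun_prop)).mul hgc)) _ _) fun r hr => ?_
    simp only [Function.comp, hH, hcos, hsin]
    have hr0 := hr.1
    have hq : 1 / 2 ≤ 4 / (4 + r ^ 2) := by
      rw [div_le_div_iff₀ (by norm_num) (by positivity)]
      nlinarith [hr.2]
    have h1 : 1 ≤ (2 : ℝ) ^ (k + 2) * (4 / (4 + r ^ 2)) ^ (k + 2) := by
      rw [← mul_pow]
      exact one_le_pow₀ (by linarith)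
    have h2 : 0 ≤ r ^ (k + 1) * f r := mul_nonneg (by positivity) (hF0 _)
    calc r ^ (k + 1) * f r ≤
          (2 : ℝ) ^ (k + 2) * (4 / (4 + r ^ 2)) ^ (k + 2) * (r ^ (k + 1) * f r) :=
          le_mul_of_one_le_left h2 h1
      _ = 2 ^ (k + 2) * (F ((r ^ 2 - 4) / (r ^ 2 + 4)) * (4 / (4 + r ^ 2) * r) ^ (k + 1) *
            (4 / (4 + r ^ 2))) := by rw [hf]; ring
      _ = _ := by rw [div_mul_eq_mul_div]
  refine hle.trans ?_
  rw [intervalIntegral.integral_const_mul, hsub, zero_div, arctan_zero, mul_zero, hone]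
  refine mul_le_mul_of_nonneg_left ?_ (by positivity)
  refine intervalIntegral.integral_mono_interval le_rfl (by positivity) (by linarith) ?_
    (hHc.intervalIntegrable _ _)
  refine (ae_restrict_iff' measurableSet_Ioc).mpr (Filter.Eventually.of_forall fun θ hθ => ?_)
  exact mul_nonneg (hF0 _) (pow_nonneg (sin_nonneg_of_mem_Icc ⟨hθ.1.le, hθ.2⟩) _)

lemma sphere_lintegral_le (k : ℕ) : ∃ C : ℝ, 0 < C ∧ ∀ (x : UnitSphere (k + 2)) (F : ℝ → ℝ),
    Continuous F → (∀ t, 0 ≤ F t) →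
    ∫⁻ y, ENNReal.ofReal (F (sdot x y)) ∂(sphereMeasure (k + 2)) ≤
      ENNReal.ofReal (C * ∫ θ in (0 : ℝ)..π, F (cos θ) * sin θ ^ (k + 1)) := by
  set D : ℝ := (k + 2 : ℕ) * (μH[(k + 2 : ℕ)] : Measure (EuclideanSpace ℝ
        (Fin (k + 2)))).real (Metric.ball 0 1) * 2 ^ (k + 2) with hD
  have hD0 : 0 ≤ D := by
    have : 0 ≤ (μH[(k + 2 : ℕ)] : Measure (EuclideanSpace ℝ
        (Fin (k + 2)))).real (Metric.ball 0 1) := measureReal_nonneg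
    positivity
  refine ⟨2 * D + 1, by positivity, fun x F hF hF0 => ?_⟩
  have hrefl : ∫ θ in (0 : ℝ)..π, F (-cos θ) * sin θ ^ (k + 1) =
      ∫ θ in (0 : ℝ)..π, F (cos θ) * sin θ ^ (k + 1) := by
    have := intervalIntegral.integral_comp_sub_left (a := 0) (b := π)
      (fun θ => F (cos θ) * sin θ ^ (k + 1)) π
    simpa [cos_pi_sub, sin_pi_sub] using this
  set I := ∫ θ in (0 : ℝ)..π, F (cos θ) * sin θ ^ (k + 1) with hI
  have hI0 : 0 ≤ I := intervalIntegral.integral_nonneg pi_pos.le fun θ hθ =>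
    mul_nonneg (hF0 _) (pow_nonneg (sin_nonneg_of_mem_Icc hθ) _)
  have hneg : ∀ y, sdot (-x) y = -sdot x y := fun y => by simp [sdot]
  have h1 := hemisphere_lintegral_le (k + 2) x (fun t => ENNReal.ofReal (F t))
    hF.measurable.ennreal_ofReal
  have h2 := hemisphere_lintegral_le (k + 2) (-x) (fun t => ENNReal.ofReal (F (-t)))
    (hF.comp continuous_neg).measurable.ennreal_ofReal
  have h3 := disc_lintegral_le k F hF hF0
  have h4 := disc_lintegral_le k (fun t => F (-t)) (hF.comp continuous_neg) (fun t => hF0 _)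
  simp only [neg_neg] at h4
  rw [hrefl, ← mul_assoc, ← hD] at h3
  rw [← hI, ← mul_assoc, ← hD] at h4
  simp only [hneg, neg_neg] at h2
  have hcov : (Set.univ : Set (UnitSphere (k + 2))) ⊆ {y | sdot x y ≤ 0} ∪ {y | -sdot x y ≤ 0} := by
    intro y _
    rcases le_total (sdot x y) 0 with h | h
    · exact Or.inl h
    · exact Or.inr (by simpa using h)
  calc ∫⁻ y, ENNReal.ofReal (F (sdot x y)) ∂(sphereMeasure (k + 2))
      = ∫⁻ y in Set.univ, ENNReal.ofReal (F (sdot x y)) ∂(sphereMeasure (k + 2)) := by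
        rw [setLIntegral_univ]
    _ ≤ ∫⁻ y in {y | sdot x y ≤ 0} ∪ {y | -sdot x y ≤ 0}, ENNReal.ofReal (F (sdot x y))
          ∂(sphereMeasure (k + 2)) := lintegral_mono_set hcov
    _ ≤ _ := lintegral_union_le _ _ _
    _ ≤ ENNReal.ofReal (D * I) + ENNReal.ofReal (D * I) :=
        add_le_add (h1.trans h3) (h2.trans h4)
    _ = ENNReal.ofReal (D * I + D * I) := (ENNReal.ofReal_add (by positivity) (by positivity)).symm
    _ ≤ _ := ENNReal.ofReal_le_ofReal (by nlinarith)

/-! ### Interpolation -/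

/-- A sup bound `M` and an `L¹` bound `B` give the `L_p` bound `M^{1-1/p} B^{1/p}`; for `p = ∞`
the convention `∞.toReal = 0` makes the right-hand side `M`. -/
lemma eLpNorm_le_of_sup_of_lintegral {α : Type*} [MeasurableSpace α] (μ : Measure α) (f : α → ℝ)
    {p : ℝ≥0∞} (hp : 1 ≤ p) {M B : ℝ} (hM : 0 ≤ M) (hB : 0 ≤ B) (hsup : ∀ y, |f y| ≤ M)
    (hL : ∫⁻ y, ENNReal.ofReal |f y| ∂μ ≤ ENNReal.ofReal B) :
    eLpNorm f p μ ≤ ENNReal.ofReal (M ^ (1 - 1 / p.toReal) * B ^ (1 / p.toReal)) := by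
  rcases eq_or_ne p ∞ with rfl | hpt
  · simp only [ENNReal.toReal_top, div_zero, sub_zero, rpow_one, rpow_zero, mul_one,
      eLpNorm_exponent_top]
    refine eLpNormEssSup_le_of_ae_bound (Filter.Eventually.of_forall fun y => ?_)
    rw [norm_eq_abs]
    exact hsup y
  have hp0 : p ≠ 0 := (zero_lt_one.trans_le hp).ne'
  set q := p.toReal with hq
  have hq1 : 1 ≤ q := by
    have := ENNReal.toReal_mono hpt hp
    simpa using this
  have hq0 : 0 < q := by linarith
  rw [eLpNorm_eq_lintegral_rpow_enorm_toReal hp0 hpt, ← hq]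
  have hpt' : ∀ y, ‖f y‖ₑ ^ q ≤ ENNReal.ofReal (M ^ (q - 1)) * ENNReal.ofReal |f y| := by
    intro y
    rw [← ofReal_norm, norm_eq_abs, ENNReal.ofReal_rpow_of_nonneg (abs_nonneg _) hq0.le,
      ← ENNReal.ofReal_mul (by positivity)]
    refine ENNReal.ofReal_le_ofReal ?_
    calc |f y| ^ q = |f y| ^ (q - 1 + 1) := by rw [sub_add_cancel]
      _ = |f y| ^ (q - 1) * |f y| := by
        rw [rpow_add_of_nonneg (abs_nonneg _) (by linarith) zero_le_one, rpow_one]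
      _ ≤ M ^ (q - 1) * |f y| :=
        mul_le_mul_of_nonneg_right (rpow_le_rpow (abs_nonneg _) (hsup y) (by linarith))
          (abs_nonneg _)
  have hint : ∫⁻ y, ‖f y‖ₑ ^ q ∂μ ≤ ENNReal.ofReal (M ^ (q - 1) * B) := by
    refine (lintegral_mono hpt').trans ?_
    rw [lintegral_const_mul' _ _ ENNReal.ofReal_ne_top, ENNReal.ofReal_mul (by positivity)]
    gcongr
  refine (ENNReal.rpow_le_rpow hint (by positivity)).trans ?_
  rw [ENNReal.ofReal_rpow_of_nonneg (by positivity) (by positivity),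
    mul_rpow (by positivity) hB, ← rpow_mul hM]
  have : (q - 1) * (1 / q) = 1 - 1 / q := by field_simp
  rw [this]

/-- `L_p`-norm bound for the filtered kernel: for `1 ≤ p ≤ ∞` and a filter
`η ∈ C^κ(ℝ₊)`, `κ ≥ ⌊(d+3)/2⌋`, constant on `[0,a]` for some `0 < a < 2`,
`‖K_n(x·)‖_{L_p(S^d)} ≤ c₁ n^{d(1-1/p)}` for all `x ∈ S^d` and `n ≥ 1`,
where `c₁` depends only on `d, η, κ, p`.  (For `p = ∞` one reads `1/p = 0`.) -/
theorem stmt_5 (d : ℕ) (hd : 2 ≤ d) (p : ℝ≥0∞) (hp : 1 ≤ p)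
    (κ : ℕ) (hκ : (d + 3) / 2 ≤ κ) (η : ℝ → ℝ) (hη : IsFilter η κ)
    (a : ℝ) (ha₀ : 0 < a) (ha₂ : a < 2)
    (hconst : ∀ t ∈ Set.Icc (0 : ℝ) a, η t = η 0) :
    ∃ c₁ > (0 : ℝ), ∀ (x : UnitSphere d) (n : ℕ), 1 ≤ n →
      eLpNorm (fun y : UnitSphere d => filteredKernel d η n (sdot x y)) p (sphereMeasure d) ≤
        ENNReal.ofReal (c₁ * (n : ℝ) ^ ((d : ℝ) * (1 - 1 / p.toReal))) := by
  obtain ⟨k, rfl⟩ : ∃ k, d = k + 2 := ⟨d - 2, by omega⟩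
  obtain ⟨A, hA, hsup⟩ := zonalSum_sup_bound hη k
  obtain ⟨B, hB, hL⟩ := zonalSum_L1_bound hη k (by omega)
  obtain ⟨C, hC, hsph⟩ := sphere_lintegral_le k
  -- adding `1` makes `c` positive without evaluating `sphereVol`
  set c : ℝ := |1 / (sphereVol (k + 2) * gparam k)| + 1 with hc
  have hc0 : 0 < c := by positivity
  refine ⟨(c * A) ^ (1 - 1 / p.toReal) * (c * (C * B)) ^ (1 / p.toReal), by positivity,
    fun x n hn => ?_⟩
  have habs : ∀ t, |filteredKernel (k + 2) η n t| ≤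
      c * |(zonalSum k (filterCoef η n) (2 * n + 1)).eval t| := by
    intro t
    rw [filteredKernel_eq hη k hn, abs_mul]
    exact mul_le_mul_of_nonneg_right (by linarith) (abs_nonneg _)
  have hM : ∀ y : UnitSphere (k + 2), |filteredKernel (k + 2) η n (sdot x y)| ≤
      c * A * (n : ℝ) ^ (k + 2) := by
    intro y
    have ht : sdot x y ∈ Set.Icc (-1 : ℝ) 1 := by
      have h := abs_real_inner_le_norm (x : EuclideanSpace ℝ (Fin (k + 2 + 1))) y
      rw [norm_eq_of_mem_sphere x, norm_eq_of_mem_sphere y, mul_one] at h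
      exact abs_le.mp h
    rw [mul_assoc]
    exact (habs _).trans (mul_le_mul_of_nonneg_left (hsup n hn _ ht) hc0.le)
  have hI : ∫⁻ y, ENNReal.ofReal |filteredKernel (k + 2) η n (sdot x y)|
      ∂(sphereMeasure (k + 2)) ≤ ENNReal.ofReal (c * (C * B)) := by
    refine (lintegral_mono fun y => ENNReal.ofReal_le_ofReal (habs _)).trans ?_
    simp only [ENNReal.ofReal_mul hc0.le]
    rw [lintegral_const_mul' _ _ ENNReal.ofReal_ne_top]
    gcongr
    refine (hsph x (fun t => |(zonalSum k (filterCoef η n) (2 * n + 1)).eval t|)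
      (by fun_prop) fun t => abs_nonneg _).trans (ENNReal.ofReal_le_ofReal ?_)
    exact mul_le_mul_of_nonneg_left (hL n hn) hC.le
  refine (eLpNorm_le_of_sup_of_lintegral _ _ hp (by positivity) (by positivity) hM hI).trans_eq ?_
  congr 1
  rw [mul_rpow (by positivity) (by positivity), ← rpow_natCast, ← rpow_mul (Nat.cast_nonneg n)]
  ring
end

section
/- If {X_N}_{N≥2} is a τ-quasi uniform sequence of point sets on S^d, then for every N ≥ 2 there exist weights w_i, i = 1,…,N, with 0 ≤ w_i ≤ c₂N^{−1}, such that ∫_{S^d} P(x) dω(x) = Σ_{x_i∈X_N} w_i P(x_i) for every spherical polynomial P of degree at most c₃N^{1/d}, where c₂ and c₃ are constants depending only on τ and d. -/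
/-!
The weights come from a separation argument in finite dimension. Partition the sphere into cells
around the nodes, contained in caps of radius `η = 2τr`, where `2r` bounds the chordal separation of
the nodes from below, and let `m i` be the measures of the cells. Weights in the box `[0, 2 m i]`
with prescribed moments exist unless a linear functional separates the moment vector from the
moments of the box (`exists_weights`), which means that `∫ f > ∑ i, m i * (f (x i) + |f (x i)|)` for
some polynomial `f` of low degree. So what has to be proved is the one-sided `L¹`
Marcinkiewicz–Zygmund inequality `integral_le_discrete`. It follows from an oscillation bound: if
`|f (x i) - f y| ≤ G y` for `y` in the `i`-th cell and `∫ G ≤ ½ ∫ |f|`, then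
`∫ f ≤ ∑ m i * f (x i) + ∫ G`, and `∫ |f| ≤ ∑ m i * |f (x i)| + ∫ G` gives
`∫ G ≤ ∑ m i * |f (x i)|`.

The function `G` has the form `∑ i, c i * |f (ρ i y)|` with rotations `ρ i` and constants `c i ≥ 0`
that do not depend on `f`, so that `∫ G = (∑ c i) ∫ |f|` by rotation invariance. To find it, restrict
`f` to the circles drawn by the rotations in a coordinate plane. There `f` is a trigonometric
polynomial of degree at most `n`; its increments are, by the Bernstein kernel and exact quadrature on
`4n` equidistant nodes, combinations of its values on the grid with masses `O(nη)` (`trigSpace_osc`).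
Two points of the sphere at distance at most `η` are joined by `d` rotations by angles `O(η)` in
coordinate planes (`exists_rot_eq`); composing the one-dimensional bounds gives `sphere_osc` with
total mass `O(nη)`.

Finally `N r ^ d = O(1)` by packing (`packing`), so that `nη` is small for `n` at most a small
multiple of `N ^ (1 / d)`, and `m i = O(η ^ d) = O(1 / N)` by the bound `measure_cap_le` on the
measure of a cap.
-/

open MeasureTheory ProbabilityTheory Real Filter
open scoped BigOperators ENNReal RealInnerProductSpace

noncomputable section

/-! ### Increments of trigonometric polynomials -/

/-- The character `t ↦ e^{imt}` of the circle. -/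
def ee (m : ℤ) (t : ℝ) : ℂ := Complex.exp (m * t * Complex.I)

lemma ee_add (m k : ℤ) (t : ℝ) : ee (m + k) t = ee m t * ee k t := by
  simp only [ee, ← Complex.exp_add]; congr 1; push_cast; ring

lemma ee_add_arg (m : ℤ) (s t : ℝ) : ee m (s + t) = ee m s * ee m t := by
  simp only [ee, ← Complex.exp_add]; congr 1; push_cast; ring

@[simp] lemma ee_zero (t : ℝ) : ee 0 t = 1 := by simp [ee]

@[simp] lemma ee_zero_arg (m : ℤ) : ee m 0 = 1 := by simp [ee]

lemma ee_conj (m : ℤ) (t : ℝ) : (starRingEnd ℂ) (ee m t) = ee (-m) t := by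
  simp only [ee, ← Complex.exp_conj]; congr 1; simp

lemma continuous_ee (m : ℤ) : Continuous (ee m) := by
  unfold ee; fun_prop

/-- The `k`-th node of the equidistant grid of `M` points on the circle. -/
def node (M k : ℕ) : ℝ := 2 * π * k / M

/-- Characters of order smaller than `M` in modulus are orthogonal on the grid of `M` nodes. -/
lemma sum_ee_node {M : ℕ} (m : ℤ) (hm : |m| < M) :
    ∑ k ∈ Finset.range M, ee m (node M k) = if m = 0 then (M : ℂ) else 0 := by
  have hM : M ≠ 0 := by
    rintro rfl; simp at hm; exact absurd hm (not_lt.2 (abs_nonneg m))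
  have hM' : (M : ℂ) ≠ 0 := by exact_mod_cast hM
  split_ifs with h
  · simp [h]
  · have hz : ∀ k, ee m (node M k) = (ee m (node M 1)) ^ k := by
      intro k
      simp only [ee, node, ← Complex.exp_nat_mul]
      congr 1; push_cast; field_simp
    have h1 : ee m (node M 1) ^ M = 1 := by
      rw [← hz, ee, Complex.exp_eq_one_iff]
      refine ⟨m, ?_⟩
      simp only [node]; push_cast; field_simp
    have h2 : ee m (node M 1) - 1 ≠ 0 := by
      rw [sub_ne_zero, ee, Ne, Complex.exp_eq_one_iff]
      rintro ⟨q, hq⟩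
      simp only [node] at hq
      push_cast at hq
      have hpi : (π : ℂ) ≠ 0 := by exact_mod_cast pi_ne_zero
      have h3 : (m : ℂ) = q * M := by
        field_simp at hq
        linear_combination hq
      have h4 : m = q * M := by exact_mod_cast h3
      rcases eq_or_ne q 0 with hq0 | hq0
      · exact h (by rw [h4, hq0, zero_mul])
      · rw [h4, abs_mul] at hm
        have := Int.one_le_abs hq0
        have h5 : |(M : ℤ)| = M := abs_of_nonneg (by positivity)
        rw [h5] at hm
        nlinarith
    have := mul_geom_sum (ee m (node M 1)) M
    rw [h1, sub_self] at this
    rw [Finset.sum_congr rfl fun k _ => hz k]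
    exact (mul_eq_zero.1 this).resolve_left h2

/-- The Dirichlet sum `∑_{j<n} e^{iju}`. -/
def dir (n : ℕ) (u : ℝ) : ℂ := ∑ j ∈ Finset.range n, ee j u

/-- The Bernstein kernel `-2 sin(nu) |∑_{j<n} e^{iju}|²`: its `p`-th Fourier coefficient is `ip`
for `|p| ≤ n`, so that convolution with it differentiates trigonometric polynomials of degree at
most `n`. -/
def bker (n : ℕ) (u : ℝ) : ℝ := -2 * Real.sin (n * u) * Complex.normSq (dir n u)

lemma continuous_bker (n : ℕ) : Continuous (bker n) := by
  unfold bker dir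
  have := continuous_ee
  fun_prop

lemma normSq_dir (n : ℕ) (u : ℝ) : (Complex.normSq (dir n u) : ℂ) =
    ∑ j ∈ Finset.range n, ∑ l ∈ Finset.range n, ee ((j : ℤ) - l) u := by
  rw [← Complex.mul_conj, dir, map_sum, Finset.sum_mul_sum]
  refine Finset.sum_congr rfl fun j _ => Finset.sum_congr rfl fun l _ => ?_
  rw [ee_conj, sub_eq_add_neg, ee_add]

lemma bker_cast (n : ℕ) (u : ℝ) : (bker n u : ℂ) =
    ∑ j ∈ Finset.range n, ∑ l ∈ Finset.range n, Complex.I *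
      (ee ((n : ℤ) + (j - l)) u - ee (-(n : ℤ) + (j - l)) u) := by
  have h : ((-2 * Real.sin (n * u) : ℝ) : ℂ) = Complex.I * (ee n u - ee (-n) u) := by
    push_cast
    simp only [ee, Complex.sin]
    push_cast
    simp only [neg_mul]
    ring
  rw [bker, Complex.ofReal_mul, h, normSq_dir]
  simp_rw [Finset.mul_sum, ee_add _ ((_ : ℤ) - _), ← sub_mul, mul_assoc]

/-- Parseval on the grid for the Dirichlet sum. -/
lemma sum_normSq_dir (n : ℕ) (u : ℝ) {M : ℕ} (hM : n ≤ M) :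
    ∑ k ∈ Finset.range M, Complex.normSq (dir n (u - node M k)) = M * n := by
  have : ((∑ k ∈ Finset.range M, Complex.normSq (dir n (u - node M k)) : ℝ) : ℂ) = M * n := by
    push_cast
    simp_rw [normSq_dir]
    rw [Finset.sum_comm]
    have : ∀ j ∈ Finset.range n, ∑ k ∈ Finset.range M, ∑ l ∈ Finset.range n,
        ee ((j : ℤ) - l) (u - node M k) = M := by
      intro j hj
      rw [Finset.sum_comm]
      have h2 : ∀ l ∈ Finset.range n, ∑ k ∈ Finset.range M, ee ((j : ℤ) - l) (u - node M k) =
          if j = l then (M : ℂ) else 0 := by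
        intro l hl
        rw [Finset.mem_range] at hj hl
        have h3 : ∀ k, ee ((j : ℤ) - l) (u - node M k) =
            ee ((j : ℤ) - l) u * ee ((l : ℤ) - j) (node M k) := by
          intro k
          simp only [ee, ← Complex.exp_add]; congr 1; push_cast; ring
        simp_rw [h3, ← Finset.mul_sum]
        rw [sum_ee_node _ (by rw [abs_lt]; constructor <;> omega)]
        by_cases h : j = l
        · simp [h]
        · have : (l : ℤ) - j ≠ 0 := by omega
          simp [h, this]
      rw [Finset.sum_congr rfl h2, Finset.sum_ite_eq]
      simp [hj]
    rw [Finset.sum_congr rfl this]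
    simp [mul_comm]
  exact_mod_cast this

/-- The discrete `L¹` norm of the Bernstein kernel is `O(n)` times the number of nodes. -/
lemma sum_abs_bker (n : ℕ) (u : ℝ) {M : ℕ} (hM : n ≤ M) :
    ∑ k ∈ Finset.range M, |bker n (u - node M k)| ≤ 2 * (M * n) := by
  rw [← sum_normSq_dir n u hM, Finset.mul_sum]
  refine Finset.sum_le_sum fun k _ => ?_
  rw [bker, abs_mul, abs_of_nonneg (Complex.normSq_nonneg _)]
  refine mul_le_mul_of_nonneg_right ?_ (Complex.normSq_nonneg _)
  rw [abs_mul]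
  have := Real.abs_sin_le_one (n * (u - node M k))
  norm_num; linarith

/-- The multiplicity of the frequency `p` in the expansion `bker_cast` of the Bernstein kernel. -/
lemma count_aux (n : ℕ) (p : ℤ) (hp : |p| ≤ n) :
    ∑ j ∈ Finset.range n, ∑ l ∈ Finset.range n,
      ((if (n : ℤ) + (j - l) = p then (1 : ℤ) else 0) - if -(n : ℤ) + (j - l) = p then 1 else 0)
      = p := by
  rw [abs_le] at hp
  have h : ∀ j ∈ Finset.range n, ∑ l ∈ Finset.range n,
      ((if (n : ℤ) + (j - l) = p then (1 : ℤ) else 0) - if -(n : ℤ) + (j - l) = p then 1 else 0)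
      = (if (j : ℤ) < p then 1 else 0) - if (n : ℤ) + p ≤ j then 1 else 0 := by
    intro j hj
    rw [Finset.mem_range] at hj
    rw [Finset.sum_sub_distrib]
    congr 1
    · have : ∀ l ∈ Finset.range n, (if (n : ℤ) + (j - l) = p then (1 : ℤ) else 0) =
          if ((n : ℤ) + j - p).toNat = l then 1 else 0 := by
        intro l hl; congr 1; simp; omega
      rw [Finset.sum_congr rfl this, Finset.sum_ite_eq]
      congr 1; simp; omega
    · by_cases hj2 : (n : ℤ) + p ≤ j
      · have : ∀ l ∈ Finset.range n, (if -(n : ℤ) + (j - l) = p then (1 : ℤ) else 0) =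
          if ((j : ℤ) - n - p).toNat = l then 1 else 0 := by
          intro l hl; congr 1; simp; omega
        rw [Finset.sum_congr rfl this, Finset.sum_ite_eq]
        congr 1; simp; omega
      · rw [if_neg hj2]
        refine Finset.sum_eq_zero fun l _ => if_neg (by omega)
  rw [Finset.sum_congr rfl h, Finset.sum_sub_distrib]
  simp only [Finset.sum_boole]
  have h1 : (Finset.range n).filter (fun j : ℕ => (j : ℤ) < p) = Finset.range p.toNat := by
    ext j; simp; omega
  have h2 : (Finset.range n).filter (fun j : ℕ => (n : ℤ) + p ≤ j) =
      Finset.Ico ((n : ℤ) + p).toNat n := by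
    ext j; simp; omega
  rw [h1, h2, Finset.card_range, Nat.card_Ico]
  omega

/-- Exactness of the quadrature on `4n` nodes for the convolution with the Bernstein kernel. -/
lemma sum_bker_ee (n : ℕ) (p : ℤ) (hp : |p| ≤ n) (u : ℝ) :
    ∑ k ∈ Finset.range (4 * n), (bker n (u - node (4 * n) k) : ℂ) * ee p (node (4 * n) k) =
      (4 * n : ℕ) * (p * Complex.I * ee p u) := by
  have hp' := abs_le.1 hp
  simp_rw [bker_cast, Finset.sum_mul]
  rw [Finset.sum_comm]
  have key : ∀ j ∈ Finset.range n, ∀ l ∈ Finset.range n, ∀ σ : ℤ, |σ| = n →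
      ∑ k ∈ Finset.range (4 * n), ee (σ + (j - l)) (u - node (4 * n) k) * ee p (node (4 * n) k)
      = ((4 * n : ℕ) : ℂ) * ((if σ + (j - l) = p then (1 : ℤ) else 0 : ℤ) * ee p u) := by
    intro j hj l hl σ hσ
    rw [Finset.mem_range] at hj hl
    have h3 : ∀ k, ee (σ + (j - l)) (u - node (4 * n) k) * ee p (node (4 * n) k) =
        ee (σ + (j - l)) u * ee (p - (σ + (j - l))) (node (4 * n) k) := by
      intro k
      simp only [ee, ← Complex.exp_add]; congr 1; push_cast; ring
    simp_rw [h3, ← Finset.mul_sum]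
    have hs := abs_le.1 hσ.le
    rw [sum_ee_node _ (by rw [abs_lt]; constructor <;> (push_cast; omega))]
    by_cases h : σ + (j - l) = p
    · simp [h]; ring
    · have h' : ¬ (p - (σ + (j - l)) = 0) := by omega
      simp [h, h']
  have : ∀ j ∈ Finset.range n, ∑ k ∈ Finset.range (4 * n), ∑ l ∈ Finset.range n,
      Complex.I * (ee ((n : ℤ) + (j - l)) (u - node (4 * n) k)
        - ee (-(n : ℤ) + (j - l)) (u - node (4 * n) k)) * ee p (node (4 * n) k) =
      ((4 * n : ℕ) : ℂ) * Complex.I * ee p u * ((∑ l ∈ Finset.range n,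
      ((if (n : ℤ) + (j - l) = p then (1 : ℤ) else 0)
        - if -(n : ℤ) + (j - l) = p then 1 else 0) : ℤ) : ℂ) := by
    intro j hj
    rw [Finset.sum_comm, Int.cast_sum, Finset.mul_sum]
    refine Finset.sum_congr rfl fun l hl => ?_
    simp_rw [mul_assoc Complex.I, sub_mul, ← Finset.mul_sum, Finset.sum_sub_distrib]
    rw [key j hj l hl n (by simp), key j hj l hl (-n) (by simp)]
    push_cast; ring
  rw [Finset.sum_congr rfl this, ← Finset.mul_sum, ← Int.cast_sum, count_aux n p hp]
  ring

/-- The weight of the grid value `f (node (4 * n) k)` in the increment `f s - f 0` of a trigonometric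
polynomial `f` of degree at most `n`. -/
def shiftCoeff (n : ℕ) (s : ℝ) (k : ℕ) : ℝ :=
  (∫ u in (0 : ℝ)..s, bker n (u - node (4 * n) k)) / (4 * n)

/-- Integrating the quadrature formula for the derivative recovers the increment on `[0, s]`. -/
lemma sum_shiftCoeff_ee (n : ℕ) (hn : n ≠ 0) (p : ℤ) (hp : |p| ≤ n) (s : ℝ) :
    ∑ k ∈ Finset.range (4 * n), (shiftCoeff n s k : ℂ) * ee p (node (4 * n) k) = ee p s - 1 := by
  have hn' : (n : ℂ) ≠ 0 := by exact_mod_cast hn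
  have hc := continuous_bker n
  have h1 : ∀ k, (shiftCoeff n s k : ℂ) * ee p (node (4 * n) k) =
      (∫ u in (0 : ℝ)..s, (bker n (u - node (4 * n) k) : ℂ) * ee p (node (4 * n) k)) / (4 * n) := by
    intro k
    rw [intervalIntegral.integral_mul_const, intervalIntegral.integral_ofReal, shiftCoeff]
    push_cast; ring
  simp_rw [h1, ← Finset.sum_div]
  rw [← intervalIntegral.integral_finsetSum]
  · simp_rw [sum_bker_ee n p hp]
    have hd : ∀ u ∈ Set.uIcc 0 s, HasDerivAt (ee p) (p * Complex.I * ee p u) u := by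
      intro u _
      have : HasDerivAt (fun t : ℝ => (p * t * Complex.I : ℂ)) (p * Complex.I) u := by
        have := ((Complex.ofRealCLM.hasDerivAt (x := u)).const_mul (p : ℂ)).mul_const Complex.I
        simpa using this
      have := this.cexp
      rw [mul_comm]; exact this
    rw [intervalIntegral.integral_const_mul, intervalIntegral.integral_eq_sub_of_hasDerivAt hd
      (by have := continuous_ee p; exact (by fun_prop : Continuous _).intervalIntegrable _ _)]
    rw [ee_zero_arg]; push_cast; field_simp
  · intro k _
    exact (by fun_prop : Continuous _).intervalIntegrable _ _

/-- A common bound of the shift coefficients for all shifts of size at most `h`. -/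
def shiftBound (n : ℕ) (h : ℝ) (k : ℕ) : ℝ :=
  (∫ u in (-h)..h, |bker n (u - node (4 * n) k)|) / (4 * n)

lemma abs_shiftCoeff_le (n : ℕ) {s h : ℝ} (hs : |s| ≤ h) (k : ℕ) :
    |shiftCoeff n s k| ≤ shiftBound n h k := by
  have hc := continuous_bker n
  have hs' := abs_le.1 hs
  have h0 : 0 ≤ h := (abs_nonneg s).trans hs
  rw [shiftCoeff, shiftBound, abs_div, abs_of_nonneg (by positivity : (0 : ℝ) ≤ 4 * n)]
  refine div_le_div_of_nonneg_right ?_ (by positivity)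
  refine (intervalIntegral.norm_integral_le_abs_integral_norm (μ := volume)
    (f := fun u => bker n (u - node (4 * n) k)) (a := 0) (b := s)).trans ?_
  simp only [Real.norm_eq_abs]
  have hci : Continuous fun u => |bker n (u - node (4 * n) k)| := by fun_prop
  have hfi : IntervalIntegrable (fun u => |bker n (u - node (4 * n) k)|) volume (-h) h :=
    hci.intervalIntegrable _ _
  rcases le_total 0 s with h1 | h1
  · rw [abs_of_nonneg (intervalIntegral.integral_nonneg h1 fun u _ => abs_nonneg _)]
    exact intervalIntegral.integral_mono_interval (by linarith) h1 hs'.2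
      (Eventually.of_forall fun u => abs_nonneg _) hfi
  · rw [intervalIntegral.integral_symm, abs_neg,
      abs_of_nonneg (intervalIntegral.integral_nonneg h1 fun u _ => abs_nonneg _)]
    exact intervalIntegral.integral_mono_interval hs'.1 h1 h0
      (Eventually.of_forall fun u => abs_nonneg _) hfi

/-- The integral over `[-h, h]` of the uniform discrete `L¹` bound for the Bernstein kernel. -/
lemma sum_shiftBound_le (n : ℕ) (hn : n ≠ 0) {h : ℝ} (h0 : 0 ≤ h) :
    ∑ k ∈ Finset.range (4 * n), shiftBound n h k ≤ 4 * n * h := by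
  have hc := continuous_bker n
  have hci : ∀ k, Continuous fun u => |bker n (u - node (4 * n) k)| := fun k => by fun_prop
  have hn' : (0 : ℝ) < n := by exact_mod_cast Nat.pos_of_ne_zero hn
  simp_rw [shiftBound, ← Finset.sum_div]
  rw [← intervalIntegral.integral_finsetSum fun k _ => (hci k).intervalIntegrable _ _,
    div_le_iff₀ (by positivity)]
  have := intervalIntegral.integral_mono_on (μ := volume) (a := -h) (b := h) (by linarith)
    (f := fun u => ∑ k ∈ Finset.range (4 * n), |bker n (u - node (4 * n) k)|)
    (g := fun _ => 2 * (((4 * n : ℕ) : ℝ) * n))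
    ((continuous_finsetSum _ fun k _ => hci k).intervalIntegrable _ _)
    (by simp) (fun u _ => sum_abs_bker n u (by omega))
  refine this.trans (le_of_eq ?_)
  simp; ring

/-- Trigonometric polynomials of degree at most `n`. -/
def trigSpace (n : ℕ) : Submodule ℂ (ℝ → ℂ) :=
  Submodule.span ℂ {f | ∃ p : ℤ, |p| ≤ n ∧ f = ee p}

lemma ee_mem_trigSpace {n : ℕ} {p : ℤ} (hp : |p| ≤ n) : ee p ∈ trigSpace n :=
  Submodule.subset_span ⟨p, hp, rfl⟩

lemma trigSpace_mul {n m : ℕ} {f g : ℝ → ℂ} (hf : f ∈ trigSpace n) (hg : g ∈ trigSpace m) :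
    f * g ∈ trigSpace (n + m) := by
  have h := Submodule.mul_mem_mul hf hg
  rw [trigSpace, trigSpace, Submodule.span_mul_span] at h
  refine Submodule.span_mono ?_ h
  rintro _ ⟨_, ⟨p, hp, rfl⟩, _, ⟨q, hq, rfl⟩, rfl⟩
  refine ⟨p + q, (abs_add_le _ _).trans (by push_cast; omega), ?_⟩
  funext t; simp [ee_add]

lemma trigSpace_mono {n m : ℕ} (h : n ≤ m) : trigSpace n ≤ trigSpace m := by
  refine Submodule.span_mono ?_
  rintro _ ⟨p, hp, rfl⟩
  exact ⟨p, hp.trans (by exact_mod_cast h), rfl⟩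

lemma one_mem_trigSpace (n : ℕ) : (1 : ℝ → ℂ) ∈ trigSpace n := by
  have : (1 : ℝ → ℂ) = ee 0 := by funext t; simp
  rw [this]; exact ee_mem_trigSpace (by simp)

lemma trigSpace_shift {n : ℕ} (hn : n ≠ 0) {f : ℝ → ℂ} (hf : f ∈ trigSpace n) (s : ℝ) :
    ∑ k ∈ Finset.range (4 * n), (shiftCoeff n s k : ℂ) * f (node (4 * n) k) = f s - f 0 := by
  induction hf using Submodule.span_induction with
  | mem f h =>
    obtain ⟨p, hp, rfl⟩ := h
    rw [sum_shiftCoeff_ee n hn p hp, ee_zero_arg]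
  | zero => simp
  | add f g _ _ hf hg =>
    simp only [Pi.add_apply, mul_add, Finset.sum_add_distrib, hf, hg]; ring
  | smul c f _ hf =>
    simp only [Pi.smul_apply, smul_eq_mul, mul_left_comm _ c, ← Finset.mul_sum, hf]; ring

/-- The oscillation of a trigonometric polynomial on `[-h, h]` is dominated by a positive
combination of its absolute values on a grid. The coefficients do not depend on the polynomial, and
their sum is at most `4nh` by `sum_shiftBound_le`. -/
lemma trigSpace_osc {n : ℕ} (hn : n ≠ 0) {f : ℝ → ℝ}
    (hf : (fun t => (f t : ℂ)) ∈ trigSpace n) {s h : ℝ} (hs : |s| ≤ h) :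
    |f s - f 0| ≤ ∑ k ∈ Finset.range (4 * n), shiftBound n h k * |f (node (4 * n) k)| := by
  have h1 := trigSpace_shift hn hf s
  have h2 : f s - f 0 = ∑ k ∈ Finset.range (4 * n), shiftCoeff n s k * f (node (4 * n) k) := by
    exact_mod_cast h1.symm
  rw [h2]
  refine (Finset.abs_sum_le_sum_abs _ _).trans (Finset.sum_le_sum fun k _ => ?_)
  rw [abs_mul]
  exact mul_le_mul_of_nonneg_right (abs_shiftCoeff_le n hs k) (abs_nonneg _)

/-! ### Rotations and oscillation on the sphere -/

/-- The rotation by `θ` in the plane of the coordinates `a` and `j`, as a linear map. -/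
def rotL {d : ℕ} (a j : Fin (d + 1)) (θ : ℝ) :
    EuclideanSpace ℝ (Fin (d + 1)) →ₗ[ℝ] EuclideanSpace ℝ (Fin (d + 1)) where
  toFun x := x + ((cos θ - 1) * x a - sin θ * x j) • EuclideanSpace.single a 1
    + (sin θ * x a + (cos θ - 1) * x j) • EuclideanSpace.single j 1
  map_add' x y := by simp only [PiLp.add_apply]; module
  map_smul' r x := by
    simp only [PiLp.smul_apply, smul_eq_mul, RingHom.id_apply]; module

lemma rotL_apply {d : ℕ} (a j : Fin (d + 1)) (θ : ℝ) (x : EuclideanSpace ℝ (Fin (d + 1))) :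
    rotL a j θ x = x + ((cos θ - 1) * x a - sin θ * x j) • EuclideanSpace.single a 1
    + (sin θ * x a + (cos θ - 1) * x j) • EuclideanSpace.single j 1 := rfl

lemma rotL_fst {d : ℕ} {a j : Fin (d + 1)} (h : j ≠ a) (θ : ℝ)
    (x : EuclideanSpace ℝ (Fin (d + 1))) : rotL a j θ x a = cos θ * x a - sin θ * x j := by
  simp [rotL_apply, h.symm]; ring

lemma rotL_snd {d : ℕ} {a j : Fin (d + 1)} (h : j ≠ a) (θ : ℝ)
    (x : EuclideanSpace ℝ (Fin (d + 1))) : rotL a j θ x j = sin θ * x a + cos θ * x j := by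
  simp [rotL_apply, h]; ring

lemma rotL_other {d : ℕ} {a j i : Fin (d + 1)} (h : i ≠ a) (h' : i ≠ j) (θ : ℝ)
    (x : EuclideanSpace ℝ (Fin (d + 1))) : rotL a j θ x i = x i := by
  simp [rotL_apply, h, h']

lemma norm_rotL {d : ℕ} {a j : Fin (d + 1)} (h : j ≠ a) (θ : ℝ)
    (x : EuclideanSpace ℝ (Fin (d + 1))) : ‖rotL a j θ x‖ = ‖x‖ := by
  have h2 : ‖rotL a j θ x‖ ^ 2 = ‖x‖ ^ 2 := by
    rw [rotL_apply, norm_add_sq_real, norm_add_sq_real, inner_add_left, norm_smul, norm_smul]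
    simp only [inner_smul_right, inner_smul_left, EuclideanSpace.inner_single_right]
    simp [h]
    linear_combination (x a ^ 2 + x j ^ 2) * sin_sq_add_cos_sq θ
  exact (sq_eq_sq₀ (norm_nonneg _) (norm_nonneg _)).1 h2

/-- The rotation by `θ` in the plane of the coordinates `a` and `j`, as a linear isometry. -/
def rotE {d : ℕ} {a j : Fin (d + 1)} (h : j ≠ a) (θ : ℝ) :
    EuclideanSpace ℝ (Fin (d + 1)) ≃ₗᵢ[ℝ] EuclideanSpace ℝ (Fin (d + 1)) :=
  LinearIsometry.toLinearIsometryEquiv ⟨rotL a j θ, norm_rotL h θ⟩ rfl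

@[simp] lemma rotE_apply {d : ℕ} {a j : Fin (d + 1)} (h : j ≠ a) (θ : ℝ)
    (x : EuclideanSpace ℝ (Fin (d + 1))) : rotE h θ x = rotL a j θ x := rfl

/-- The functions on `ℝ^{d+1}` whose restriction to every ellipse is a trigonometric polynomial of
degree at most `n`. They include the polynomials of degree at most `n`, and the class is visibly
invariant under linear changes of variables. -/
def EllTrig (d n : ℕ) : Submodule ℝ (EuclideanSpace ℝ (Fin (d + 1)) → ℝ) where
  carrier := {f | ∀ A B C, (fun t : ℝ => (f (cos t • A + sin t • B + C) : ℂ)) ∈ trigSpace n}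
  add_mem' {f g} hf hg A B C := by
    convert (trigSpace n).add_mem (hf A B C) (hg A B C) using 1
    funext t; simp
  zero_mem' A B C := by
    convert (trigSpace n).zero_mem using 1
    funext t; simp
  smul_mem' r f hf A B C := by
    convert (trigSpace n).smul_mem (r : ℂ) (hf A B C) using 1
    funext t; simp

lemma EllTrig.comp_linear {d n : ℕ} {f : EuclideanSpace ℝ (Fin (d + 1)) → ℝ}
    (hf : f ∈ EllTrig d n)
    (φ : EuclideanSpace ℝ (Fin (d + 1)) →ₗ[ℝ] EuclideanSpace ℝ (Fin (d + 1))) :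
    (fun x => f (φ x)) ∈ EllTrig d n := by
  intro A B C
  simpa using hf (φ A) (φ B) (φ C)

lemma EllTrig.mul {d n m : ℕ} {f g : EuclideanSpace ℝ (Fin (d + 1)) → ℝ}
    (hf : f ∈ EllTrig d n) (hg : g ∈ EllTrig d m) : f * g ∈ EllTrig d (n + m) := by
  intro A B C
  simpa [Pi.mul_def] using trigSpace_mul (hf A B C) (hg A B C)

lemma EllTrig.one (d n : ℕ) : (1 : EuclideanSpace ℝ (Fin (d + 1)) → ℝ) ∈ EllTrig d n := by
  intro A B C
  convert one_mem_trigSpace n using 1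
  funext t; simp

lemma EllTrig.mono {d n m : ℕ} (h : n ≤ m) : EllTrig d n ≤ EllTrig d m :=
  fun _ hf A B C => trigSpace_mono h (hf A B C)

lemma EllTrig.coord {d : ℕ} (i : Fin (d + 1)) :
    (fun x : EuclideanSpace ℝ (Fin (d + 1)) => x i) ∈ EllTrig d 1 := by
  intro A B C
  have h1 : ee 1 ∈ trigSpace 1 := ee_mem_trigSpace (by simp)
  have h2 : ee (-1) ∈ trigSpace 1 := ee_mem_trigSpace (by simp)
  have h0 : (1 : ℝ → ℂ) ∈ trigSpace 1 := one_mem_trigSpace 1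
  have : (fun t : ℝ => (((cos t • A + sin t • B + C) i : ℝ) : ℂ)) =
      ((A i - Complex.I * B i) / 2 : ℂ) • ee 1 + ((A i + Complex.I * B i) / 2 : ℂ) • ee (-1)
        + (C i : ℂ) • (1 : ℝ → ℂ) := by
    funext t
    simp [ee, Complex.cos, Complex.sin]
    ring
  rw [this]
  exact add_mem (add_mem (Submodule.smul_mem _ _ h1) (Submodule.smul_mem _ _ h2))
    (Submodule.smul_mem _ _ h0)

lemma EllTrig.pow {d n : ℕ} {f : EuclideanSpace ℝ (Fin (d + 1)) → ℝ}
    (hf : f ∈ EllTrig d n) (k : ℕ) : f ^ k ∈ EllTrig d (k * n) := by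
  induction k with
  | zero => simpa using EllTrig.one d _
  | succ k ih =>
    rw [pow_succ, Nat.succ_mul]
    exact EllTrig.mul ih hf

/-- The monomial with exponents `k`, as a function on `ℝ^{d+1}`. -/
def monom {d : ℕ} (k : Fin (d + 1) → ℕ) (x : EuclideanSpace ℝ (Fin (d + 1))) : ℝ :=
  ∏ i, x i ^ k i

lemma continuous_monom {d : ℕ} (k : Fin (d + 1) → ℕ) : Continuous (monom k) := by
  unfold monom; fun_prop

lemma EllTrig.monom {d : ℕ} (k : Fin (d + 1) → ℕ) : monom k ∈ EllTrig d (∑ i, k i) := by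
  have h : ∀ s : Finset (Fin (d + 1)),
      (∏ i ∈ s, (fun x : EuclideanSpace ℝ (Fin (d + 1)) => x i) ^ k i) ∈
        EllTrig d (∑ i ∈ s, k i) := by
    intro s
    induction s using Finset.induction_on with
    | empty => simpa using EllTrig.one d 0
    | insert i s hi ih =>
      rw [Finset.prod_insert hi, Finset.sum_insert hi]
      exact EllTrig.mul (by simpa using EllTrig.pow (EllTrig.coord i) (k i)) ih
  have := h Finset.univ
  convert this using 1
  funext x
  simp [_root_.monom]

/-- One rotation by a small angle in a coordinate plane changes a function in the class by at most
a fixed positive combination of values at rotated points. -/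
lemma EllTrig.rot_osc {d n : ℕ} (hn : n ≠ 0) {f : EuclideanSpace ℝ (Fin (d + 1)) → ℝ}
    (hf : f ∈ EllTrig d n) (a j : Fin (d + 1)) {s h : ℝ} (hs : |s| ≤ h)
    (y : EuclideanSpace ℝ (Fin (d + 1))) :
    |f (rotL a j s y) - f y| ≤
      ∑ k : Fin (4 * n), shiftBound n h k * |f (rotL a j (node (4 * n) k) y)| := by
  have h1 : ∀ t, rotL a j t y = cos t • (y a • EuclideanSpace.single a (1 : ℝ)
        + y j • EuclideanSpace.single j 1)
      + sin t • (y a • EuclideanSpace.single j 1 - y j • EuclideanSpace.single a 1)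
      + (y - (y a • EuclideanSpace.single a 1 + y j • EuclideanSpace.single j 1)) := by
    intro t; rw [rotL_apply]; module
  have h2 : (fun t : ℝ => ((f (rotL a j t y) : ℝ) : ℂ)) ∈ trigSpace n := by
    simp_rw [h1]; exact hf _ _ _
  have h3 := trigSpace_osc hn h2 hs
  have h4 : rotL a j 0 y = y := by simp [rotL_apply]
  rw [h4] at h3
  rwa [Fin.sum_univ_eq_sum_range
    (fun k => shiftBound n h k * |f (rotL a j (node (4 * n) k) y)|) (4 * n)]

/-- The composition of the rotations by `s j` in the planes of the coordinates `a` and `j`, for `j`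
in a list, the last entry of the list acting first. -/
def rotList {d : ℕ} (a : Fin (d + 1)) (s : Fin (d + 1) → ℝ) :
    List (Fin (d + 1)) → EuclideanSpace ℝ (Fin (d + 1)) → EuclideanSpace ℝ (Fin (d + 1))
  | [], x => x
  | j :: J, x => rotL a j (s j) (rotList a s J x)

lemma shiftBound_nonneg (n : ℕ) {h : ℝ} (h0 : 0 ≤ h) (k : ℕ) : 0 ≤ shiftBound n h k :=
  (abs_nonneg _).trans (abs_shiftCoeff_le n (s := 0) (by simpa) k)

/-- Composing rotations by angles of size at most `h` multiplies the factors `1 + 4nh` of the single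
rotations. The isometries `ρ i` and the masses `c i` do not depend on the angles, nor on `f`. -/
lemma rotList_osc {d n : ℕ} (hn : n ≠ 0) {h : ℝ} (h0 : 0 ≤ h) (a : Fin (d + 1))
    (J : List (Fin (d + 1))) (hJ : a ∉ J) :
    ∃ (ι : Type) (_ : Fintype ι) (c : ι → ℝ)
      (ρ : ι → EuclideanSpace ℝ (Fin (d + 1)) ≃ₗᵢ[ℝ] EuclideanSpace ℝ (Fin (d + 1))),
      (∀ i, 0 ≤ c i) ∧ ∑ i, c i ≤ (1 + 4 * n * h) ^ J.length - 1 ∧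
      ∀ f ∈ EllTrig d n, ∀ x, ∀ s : Fin (d + 1) → ℝ, (∀ j, |s j| ≤ h) →
        |f (rotList a s J x) - f x| ≤ ∑ i, c i * |f (ρ i x)| := by
  induction J with
  | nil =>
    exact ⟨Empty, inferInstance, fun _ => 0, fun _ => LinearIsometryEquiv.refl ℝ _,
      by simp, by simp, by simp [rotList]⟩
  | cons j J ih =>
    have hja : j ≠ a := fun e => hJ (by simp [e])
    obtain ⟨ι, _, c, ρ, hc, hsum, hosc⟩ := ih (fun e => hJ (by simp [e]))
    let b : Fin (4 * n) → ℝ := fun k => shiftBound n h k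
    let R : Fin (4 * n) → EuclideanSpace ℝ (Fin (d + 1)) ≃ₗᵢ[ℝ] EuclideanSpace ℝ (Fin (d + 1)) :=
      fun k => rotE hja (node (4 * n) k)
    have hb : ∀ k, 0 ≤ b k := fun k => shiftBound_nonneg n h0 k
    have hbs : ∑ k, b k ≤ 4 * n * h := by
      rw [Fin.sum_univ_eq_sum_range (fun k => shiftBound n h k) (4 * n)]
      exact sum_shiftBound_le n hn h0
    refine ⟨Fin (4 * n) ⊕ (Fin (4 * n) × ι) ⊕ ι, inferInstance,
      Sum.elim b (Sum.elim (fun q => b q.1 * c q.2) c),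
      Sum.elim R (Sum.elim (fun q => (ρ q.2).trans (R q.1)) ρ), ?_, ?_, ?_⟩
    · rintro (k | ⟨k, i⟩ | i)
      · exact hb k
      · exact mul_nonneg (hb k) (hc i)
      · exact hc i
    · simp only [Fintype.sum_sum_type, Sum.elim_inl, Sum.elim_inr, Fintype.sum_prod_type,
        ← Finset.mul_sum, ← Finset.sum_mul, List.length_cons, pow_succ]
      have hcs : 0 ≤ ∑ i, c i := Finset.sum_nonneg fun i _ => hc i
      have hbs0 : 0 ≤ ∑ k, b k := Finset.sum_nonneg fun i _ => hb i
      have : (1 + ∑ i, c i) * (1 + ∑ k, b k) ≤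
          (1 + 4 * n * h) ^ J.length * (1 + 4 * n * h) := by
        apply mul_le_mul <;> linarith
      linarith
    · intro f hf x s hs
      simp only [Fintype.sum_sum_type, Sum.elim_inl, Sum.elim_inr, Fintype.sum_prod_type, rotList]
      set y := rotList a s J x
      have h1 := EllTrig.rot_osc hn hf a j (hs j) y
      have h2 := hosc f hf x s hs
      have h3 : ∀ k, |f (R k y)| ≤ |f (R k x)| + ∑ i, c i * |f (R k (ρ i x))| := by
        intro k
        have h4 := hosc (fun z => f (rotL a j (node (4 * n) k) z)) (EllTrig.comp_linear hf _) x s hs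
        have h5 := abs_sub_abs_le_abs_sub (f (R k y)) (f (R k x))
        have h6 : |f (R k y) - f (R k x)| ≤ ∑ i, c i * |f (R k (ρ i x))| := h4
        linarith
      have h7 : ∑ k, b k * |f (R k y)| ≤
          ∑ k, b k * |f (R k x)| + ∑ k, ∑ i, b k * c i * |f (R k (ρ i x))| := by
        rw [← Finset.sum_add_distrib]
        refine Finset.sum_le_sum fun k _ => ?_
        refine (mul_le_mul_of_nonneg_left (h3 k) (hb k)).trans (le_of_eq ?_)
        rw [mul_add, Finset.mul_sum]
        simp_rw [mul_assoc]
      have h8 := abs_sub_le (f (rotL a j (s j) y)) (f y) (f x)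
      have h9 : |f (rotL a j (s j) y) - f y| ≤ ∑ k, b k * |f (R k y)| := h1
      simp only [LinearIsometryEquiv.trans_apply]
      linarith

lemma rotList_congr {d : ℕ} (a : Fin (d + 1)) {s s' : Fin (d + 1) → ℝ}
    {J : List (Fin (d + 1))} (h : ∀ j ∈ J, s j = s' j) (x : EuclideanSpace ℝ (Fin (d + 1))) :
    rotList a s J x = rotList a s' J x := by
  induction J with
  | nil => rfl
  | cons j J ih =>
    simp only [rotList]
    rw [ih fun i hi => h i (by simp [hi]), h j (by simp)]

lemma norm_rotList {d : ℕ} (a : Fin (d + 1)) (s : Fin (d + 1) → ℝ)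
    {J : List (Fin (d + 1))} (h : a ∉ J) (x : EuclideanSpace ℝ (Fin (d + 1))) :
    ‖rotList a s J x‖ = ‖x‖ := by
  induction J with
  | nil => rfl
  | cons j J ih =>
    rw [rotList, norm_rotL (fun e => h (by simp [e])), ih fun e => h (by simp [e])]

/-- A small rotation in the plane of two coordinates `(p, q)`, with `|p|` bounded below, brings the
second coordinate to any prescribed nearby value. -/
lemma exists_angle {p q v c η : ℝ} (hp : c / 2 ≤ |p|) (hq : |q| ≤ 1) (hv : |v - q| ≤ η)
    (hc : 0 < c) (hη : 8 * η / c ≤ c / 4) (hc1 : c ≤ 1) :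
    ∃ s, |s| ≤ 8 * η / c ∧ sin s * p + cos s * q = v := by
  have hη0 : 0 ≤ η := (abs_nonneg _).trans hv
  set S := 8 * η / c with hS
  have hS0 : 0 ≤ S := by positivity
  have hSc : S * c = 8 * η := by rw [hS]; field_simp
  have hsin : S / 2 ≤ sin S := by
    have h1 := Real.mul_le_sin hS0 (by linarith [pi_gt_three])
    have h2 : 1 / 2 ≤ 2 / π := by
      rw [div_le_div_iff₀ (by norm_num) pi_pos]; linarith [pi_le_four]
    nlinarith
  have hcos : 1 - S ^ 2 / 2 ≤ cos S := Real.one_sub_sq_div_two_le_cos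
  have hcos1 := cos_le_one S
  have hq' := abs_le.1 hq
  have hv' := abs_le.1 hv
  have hcont : Continuous fun s => sin s * p + cos s * q := by fun_prop
  have hb1 : (1 - cos S) * q ≤ S ^ 2 / 2 := by nlinarith
  have hb2 : -(S ^ 2 / 2) ≤ (1 - cos S) * q := by nlinarith
  have hS2 : S ^ 2 ≤ S * (c / 4) := by nlinarith
  have key : v ∈ Set.uIcc (sin (-S) * p + cos (-S) * q) (sin S * p + cos S * q) := by
    rw [sin_neg, cos_neg]
    rcases abs_cases p with ⟨h, h'⟩ | ⟨h, h'⟩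
    · rw [h] at hp
      have : S / 2 * (c / 2) ≤ sin S * p := mul_le_mul hsin hp (by positivity) (by linarith)
      exact Set.Icc_subset_uIcc ⟨by nlinarith, by nlinarith⟩
    · rw [h] at hp
      have : S / 2 * (c / 2) ≤ sin S * (-p) := mul_le_mul hsin hp (by positivity) (by linarith)
      exact Set.Icc_subset_uIcc' ⟨by nlinarith, by nlinarith⟩
  obtain ⟨s, hs, hs'⟩ := intermediate_value_uIcc hcont.continuousOn key
  rw [Set.uIcc_of_le (by linarith)] at hs
  exact ⟨s, abs_le.2 hs, hs'⟩

lemma abs_coord_le {d : ℕ} (x : EuclideanSpace ℝ (Fin (d + 1))) (i : Fin (d + 1)) :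
    |x i| ≤ ‖x‖ := PiLp.norm_apply_le x i

/-- Successive small rotations move the coordinates of `x` listed in `J` to those of `y`, keeping
the coordinate `a` away from zero. -/
lemma exists_rotList {d : ℕ} (a : Fin (d + 1)) {x y : EuclideanSpace ℝ (Fin (d + 1))} {c η : ℝ}
    (hx : ‖x‖ = 1) (hc : 0 < c) (hc1 : c ≤ 1) (hxa : c ≤ |x a|) (hxy : ∀ j, |y j - x j| ≤ η)
    (J : List (Fin (d + 1))) (hnd : J.Nodup) (haJ : a ∉ J)
    (hη : 2 * (8 * η / c) * J.length ≤ c / 2) :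
    ∃ s : Fin (d + 1) → ℝ, (∀ j, |s j| ≤ 8 * η / c) ∧
      (∀ j ∈ J, rotList a s J x j = y j) ∧ (∀ j, j ∉ J → j ≠ a → rotList a s J x j = x j) ∧
      |rotList a s J x a - x a| ≤ 2 * (8 * η / c) * J.length := by
  have hη0 : 0 ≤ η := (abs_nonneg _).trans (hxy a)
  have hS0 : 0 ≤ 8 * η / c := by positivity
  induction J with
  | nil => exact ⟨fun _ => 0, by simpa using hS0, by simp, by simp [rotList], by simp [rotList]⟩
  | cons j J ih =>
    have hja : j ≠ a := fun e => haJ (by simp [e])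
    have haJ' : a ∉ J := fun e => haJ (by simp [e])
    rw [List.nodup_cons] at hnd
    push_cast [List.length_cons] at hη ⊢
    have hJ0 : (0 : ℝ) ≤ J.length := by positivity
    obtain ⟨s, hs, h1, h2, h3⟩ := ih hnd.2 haJ' (by nlinarith)
    set z := rotList a s J x with hz
    have hzn : ‖z‖ = 1 := by rw [hz, norm_rotList a s haJ', hx]
    have hSc : 8 * η / c ≤ c / 4 := by nlinarith
    have hza : c / 2 ≤ |z a| := by
      have := abs_sub_abs_le_abs_sub (x a) (z a)
      rw [abs_sub_comm] at this
      nlinarith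
    have hzj : z j = x j := h2 j hnd.1 hja
    obtain ⟨t, ht, ht'⟩ := exists_angle (q := z j) (v := y j) (η := η) hza
      (by rw [← hzn]; exact abs_coord_le z j) (by rw [hzj]; exact hxy j) hc hSc hc1
    have hcg : rotList a (Function.update s j t) J x = z := by
      refine rotList_congr a (fun i hi => ?_) x
      rw [Function.update_of_ne]
      rintro rfl; exact hnd.1 hi
    refine ⟨Function.update s j t, ?_, ?_, ?_, ?_⟩
    · intro i
      by_cases hi : i = j
      · subst hi; simpa using ht
      · rw [Function.update_of_ne hi]; exact hs i
    · intro i hi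
      rw [rotList, hcg, Function.update_self]
      by_cases hij : i = j
      · subst hij; rw [rotL_snd hja, ht']
      · have hiJ : i ∈ J := by simpa [hij] using hi
        rw [rotL_other (fun e => haJ' (by rwa [← e])) hij, h1 i hiJ]
    · intro i hi hia
      rw [List.mem_cons, not_or] at hi
      rw [rotList, hcg, Function.update_self, rotL_other hia hi.1, h2 i hi.2 hia]
    · rw [rotList, hcg, Function.update_self, rotL_fst hja]
      have e1 : |cos t * z a - sin t * z j - z a| ≤ 2 * (8 * η / c) := by
        have hc2 : 1 - t ^ 2 / 2 ≤ cos t := Real.one_sub_sq_div_two_le_cos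
        have hc3 := cos_le_one t
        have hs2 : |sin t| ≤ |t| := abs_sin_le_abs
        have hza1 : |z a| ≤ 1 := hzn ▸ abs_coord_le z a
        have hzj1 : |z j| ≤ 1 := hzn ▸ abs_coord_le z j
        have e2 : |(1 - cos t) * z a| ≤ |t| := by
          rw [abs_mul, abs_of_nonneg (by linarith)]
          have : t ^ 2 = |t| ^ 2 := (sq_abs t).symm
          have ht0 := abs_nonneg t
          have : |t| ≤ 1 := by linarith
          calc (1 - cos t) * |z a| ≤ (1 - cos t) * 1 :=
                mul_le_mul_of_nonneg_left hza1 (by linarith)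
            _ ≤ |t| := by nlinarith
        have e3 : |sin t * z j| ≤ |t| := by
          rw [abs_mul]
          calc |sin t| * |z j| ≤ |t| * 1 :=
                mul_le_mul hs2 hzj1 (abs_nonneg _) (abs_nonneg _)
            _ = |t| := mul_one _
        have : cos t * z a - sin t * z j - z a = -((1 - cos t) * z a) - sin t * z j := by ring
        rw [this]
        have e4 := abs_sub (-((1 - cos t) * z a)) (sin t * z j)
        rw [abs_neg] at e4
        linarith
      have := abs_sub_le (cos t * z a - sin t * z j) (z a) (x a)
      linarith

lemma norm_sq_split {d : ℕ} (x : EuclideanSpace ℝ (Fin (d + 1))) (a : Fin (d + 1)) :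
    ‖x‖ ^ 2 = x a ^ 2 + ∑ i ∈ Finset.univ.erase a, x i ^ 2 := by
  rw [EuclideanSpace.real_norm_sq_eq,
    Finset.add_sum_erase _ (fun i => x i ^ 2) (Finset.mem_univ a)]

/-- A unit vector has a coordinate of size at least `1 / (d + 1)`. -/
lemma exists_large_coord {d : ℕ} {x : EuclideanSpace ℝ (Fin (d + 1))} (hx : ‖x‖ = 1) :
    ∃ a, 1 / ((d : ℝ) + 1) ≤ |x a| := by
  by_contra! h
  have h1 : ‖x‖ ^ 2 = ∑ i, x i ^ 2 := EuclideanSpace.real_norm_sq_eq x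
  have h2 : ∑ i, x i ^ 2 < ∑ i : Fin (d + 1), (1 / ((d : ℝ) + 1)) := by
    refine Finset.sum_lt_sum_of_nonempty Finset.univ_nonempty fun i _ => ?_
    have h3 : |x i| ≤ 1 := hx ▸ abs_coord_le x i
    have := abs_nonneg (x i)
    calc x i ^ 2 = |x i| ^ 2 := (sq_abs _).symm
      _ ≤ |x i| := by nlinarith
      _ < _ := h i
  rw [← h1, hx] at h2
  have : (d : ℝ) + 1 ≠ 0 := by positivity
  simp [this] at h2

/-- Any two close points of the sphere are joined by a product of small rotations in the planes of
a fixed coordinate and of the others. -/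
lemma exists_rot_eq {d : ℕ} (a : Fin (d + 1)) {x y : EuclideanSpace ℝ (Fin (d + 1))} {c η : ℝ}
    (hx : ‖x‖ = 1) (hy : ‖y‖ = 1) (hc : 0 < c) (hc1 : c ≤ 1) (hxa : c ≤ |x a|)
    (hxy : ‖y - x‖ ≤ η) (hη : 2 * (8 * η / c) * d ≤ c / 2) (hη2 : η < c / 2) :
    ∃ s : Fin (d + 1) → ℝ, (∀ j, |s j| ≤ 8 * η / c) ∧
      rotList a s (Finset.univ.erase a).toList x = y := by
  have hxy' : ∀ j, |y j - x j| ≤ η := fun j => (abs_coord_le (y - x) j).trans hxy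
  have hlen : (Finset.univ.erase a).toList.length = d := by
    simp [Finset.card_erase_of_mem]
  have hmem : a ∉ (Finset.univ.erase a).toList := by simp
  obtain ⟨s, h1, h2, -, h3⟩ := exists_rotList a hx hc hc1 hxa hxy' _
    (Finset.nodup_toList (Finset.univ.erase a)) hmem (by rwa [hlen])
  refine ⟨s, h1, ?_⟩
  rw [hlen] at h3
  have hz : ‖rotList a s (Finset.univ.erase a).toList x‖ = 1 := by rw [norm_rotList a s hmem, hx]
  set z := rotList a s (Finset.univ.erase a).toList x
  have h4 : ∀ j, j ≠ a → z j = y j := fun j hj => h2 j (by simp [hj])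
  have h5 : z a ^ 2 = y a ^ 2 := by
    have e1 := norm_sq_split z a
    have e2 := norm_sq_split y a
    rw [Finset.sum_congr rfl (fun j hj => by rw [h4 j (Finset.ne_of_mem_erase hj)])] at e1
    rw [hz] at e1; rw [hy] at e2; linarith
  have h6 : z a = y a := by
    rcases sq_eq_sq_iff_eq_or_eq_neg.1 h5 with h | h
    · exact h
    · -- the coordinates `z a` and `y a` both have the sign of `x a`
      exfalso
      have e1 := abs_le.1 (h3.trans hη)
      have e2 := abs_le.1 (hxy' a)
      rcases abs_cases (x a) with ⟨e, _⟩ | ⟨e, _⟩ <;> rw [e] at hxa <;> linarith [e1.1, e1.2]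
  ext j
  by_cases hj : j = a
  · rw [hj, h6]
  · exact h4 j hj

/-- The oscillation of a polynomial at scale `η` on the sphere is dominated by a fixed positive
combination, of small total mass when `nη` is small, of its absolute values at rotated points. The
factor `d + 1` in the mass comes from adding up the bounds for all choices of the coordinate `a`
that has to be bounded away from zero. -/
lemma sphere_osc {d n : ℕ} (hn : n ≠ 0) {η : ℝ} (hη0 : 0 ≤ η)
    (hη : 32 * η * d * ((d : ℝ) + 1) ^ 2 ≤ 1) (hd : 1 ≤ d) :
    ∃ (ι : Type) (_ : Fintype ι) (c : ι → ℝ)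
      (ρ : ι → EuclideanSpace ℝ (Fin (d + 1)) ≃ₗᵢ[ℝ] EuclideanSpace ℝ (Fin (d + 1))),
      (∀ i, 0 ≤ c i) ∧
      ∑ i, c i ≤ ((d : ℝ) + 1) * ((1 + 4 * n * (8 * η * (d + 1))) ^ d - 1) ∧
      ∀ f ∈ EllTrig d n, ∀ x y, ‖x‖ = 1 → ‖y‖ = 1 → ‖y - x‖ ≤ η →
        |f y - f x| ≤ ∑ i, c i * |f (ρ i x)| := by
  have hh : 0 ≤ 8 * η * ((d : ℝ) + 1) := by positivity
  have hmem : ∀ a : Fin (d + 1), a ∉ (Finset.univ.erase a).toList := by simp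
  choose ι hι c ρ hc hsum hosc using fun a : Fin (d + 1) =>
    rotList_osc (n := n) hn hh a (Finset.univ.erase a).toList (hmem a)
  refine ⟨Σ a, ι a, inferInstance, fun q => c q.1 q.2, fun q => ρ q.1 q.2,
    fun q => hc _ _, ?_, ?_⟩
  · rw [Fintype.sum_sigma]
    have hlen : ∀ a : Fin (d + 1), (Finset.univ.erase a).toList.length = d := fun a => by
      simp [Finset.card_erase_of_mem]
    simp_rw [hlen] at hsum
    refine (Finset.sum_le_card_nsmul Finset.univ (fun a => ∑ i, c a i) _
      fun a _ => hsum a).trans (le_of_eq ?_)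
    simp
  · intro f hf x y hx hy hxy
    obtain ⟨a, ha⟩ := exists_large_coord hx
    have hd' : (1 : ℝ) ≤ d := by exact_mod_cast hd
    have e : 8 * η / (1 / ((d : ℝ) + 1)) = 8 * η * (d + 1) := by field_simp
    obtain ⟨s, hs, hs'⟩ := exists_rot_eq a hx hy (c := 1 / ((d : ℝ) + 1)) (by positivity)
      (by rw [div_le_one (by positivity)]; linarith) ha hxy
      (by rw [e, div_div, le_div_iff₀ (by positivity)]; linarith)
      (by
        rw [div_div, lt_div_iff₀ (by positivity)]
        have : η * ((d : ℝ) + 1) ≤ η * (d * ((d : ℝ) + 1) ^ 2) :=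
          mul_le_mul_of_nonneg_left (by nlinarith) hη0
        linarith)
    rw [e] at hs
    have := hosc a f hf x s hs
    rw [hs'] at this
    refine this.trans ?_
    rw [Fintype.sum_sigma]
    exact Finset.single_le_sum (f := fun a => ∑ i, c a i * |f (ρ a i x)|)
      (fun a _ => Finset.sum_nonneg fun i _ => mul_nonneg (hc a i) (abs_nonneg _))
      (Finset.mem_univ a)

/-! ### Surface measure -/

/-- The isometry of the sphere induced by a linear isometry of the ambient space. -/
def sphereIso {d : ℕ}
    (ρ : EuclideanSpace ℝ (Fin (d + 1)) ≃ₗᵢ[ℝ] EuclideanSpace ℝ (Fin (d + 1))) :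
    UnitSphere d ≃ᵢ UnitSphere d where
  toFun x := ⟨ρ x, by simp⟩
  invFun x := ⟨ρ.symm x, by simp⟩
  left_inv x := by simp
  right_inv x := by simp
  isometry_toFun := Isometry.of_dist_eq fun x y => by simp [Subtype.dist_eq]

/-- Rotation invariance of the surface measure. -/
lemma integral_sphere_comp {d : ℕ}
    (ρ : EuclideanSpace ℝ (Fin (d + 1)) ≃ₗᵢ[ℝ] EuclideanSpace ℝ (Fin (d + 1)))
    (f : EuclideanSpace ℝ (Fin (d + 1)) → ℝ) :
    ∫ y : UnitSphere d, f (ρ y) ∂(sphereMeasure d) =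
      ∫ y : UnitSphere d, f y ∂(sphereMeasure d) :=
  ((sphereIso ρ).measurePreserving_hausdorffMeasure (d : ℝ)).integral_comp
    (sphereIso ρ).toHomeomorph.measurableEmbedding (fun y : UnitSphere d => f y)

/-- Near a point whose coordinate `a` is not small, forgetting that coordinate is
bi-Lipschitz on the sphere. -/
lemma dist_le_proj {d : ℕ} (hd : 1 ≤ d) (a : Fin (d + 1))
    {x y z : EuclideanSpace ℝ (Fin (d + 1))} {r : ℝ}
    (hy : ‖y‖ = 1) (hz : ‖z‖ = 1) (hxa : 1 / ((d : ℝ) + 1) ≤ |x a|)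
    (hr : 4 * ((d : ℝ) + 1) * r ≤ 1) (hyx : ‖y - x‖ ≤ r) (hzx : ‖z - x‖ ≤ r) {m : ℝ}
    (hm : ∀ j, j ≠ a → |y j - z j| ≤ m) (hm0 : 0 ≤ m) :
    ‖y - z‖ ≤ 2 * d * ((d : ℝ) + 1) ^ 2 * m := by
  have hd' : (1 : ℝ) ≤ d := by exact_mod_cast hd
  set c := 1 / ((d : ℝ) + 1) with hc
  have hc0 : 0 < c := by positivity
  have hdc : ((d : ℝ) + 1) * c = 1 := by rw [hc]; field_simp
  have hrc : r ≤ c / 4 := by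
    rw [hc, div_div, le_div_iff₀ (by positivity)]; linarith
  have h1 := abs_le.1 ((abs_coord_le (y - x) a).trans hyx)
  have h2 := abs_le.1 ((abs_coord_le (z - x) a).trans hzx)
  simp only [PiLp.sub_apply] at h1 h2
  have h3 : c ≤ |y a + z a| := by
    rcases abs_cases (x a) with ⟨e, _⟩ | ⟨e, _⟩ <;> rw [e] at hxa
    · exact le_trans (by linarith) (le_abs_self _)
    · exact le_trans (by linarith) (neg_le_abs _)
  have h4 : |y a - z a| * |y a + z a| ≤ d * (2 * m) := by
    have e1 := norm_sq_split y a
    have e2 := norm_sq_split z a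
    rw [hy] at e1; rw [hz] at e2
    have e3 : (y a - z a) * (y a + z a) =
        ∑ i ∈ Finset.univ.erase a, (z i ^ 2 - y i ^ 2) := by
      rw [Finset.sum_sub_distrib]; linarith
    rw [← abs_mul, e3]
    refine (Finset.abs_sum_le_sum_abs _ _).trans ?_
    have : ∀ i ∈ Finset.univ.erase a, |z i ^ 2 - y i ^ 2| ≤ 2 * m := by
      intro i hi
      have e4 : z i ^ 2 - y i ^ 2 = -((y i - z i) * (y i + z i)) := by ring
      have e5 : |y i| ≤ 1 := hy ▸ abs_coord_le y i
      have e6 : |z i| ≤ 1 := hz ▸ abs_coord_le z i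
      rw [e4, abs_neg, abs_mul, mul_comm 2]
      exact mul_le_mul (hm i (Finset.ne_of_mem_erase hi)) ((abs_add_le _ _).trans (by linarith))
        (abs_nonneg _) hm0
    refine (Finset.sum_le_card_nsmul _ _ _ this).trans (le_of_eq ?_)
    simp [Finset.card_erase_of_mem]
  have h5 : |y a - z a| ≤ 2 * d * (d + 1) * m := by
    have : |y a - z a| * c ≤ d * (2 * m) :=
      (mul_le_mul_of_nonneg_left h3 (abs_nonneg _)).trans h4
    calc |y a - z a| = (|y a - z a| * c) * (d + 1) := by rw [mul_assoc, mul_comm c, hdc, mul_one]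
      _ ≤ d * (2 * m) * (d + 1) := by gcongr
      _ = _ := by ring
  have h6 : ∀ j, |(y - z) j| ≤ 2 * d * (d + 1) * m := by
    intro j
    by_cases hj : j = a
    · rw [hj]; exact h5
    · refine (hm j hj).trans ?_
      have : 1 ≤ 2 * (d : ℝ) * (d + 1) := by nlinarith
      nlinarith
  have h7 : ‖y - z‖ ^ 2 ≤ (2 * d * ((d : ℝ) + 1) ^ 2 * m) ^ 2 := by
    rw [EuclideanSpace.real_norm_sq_eq]
    have : ∀ j ∈ Finset.univ, (y - z) j ^ 2 ≤ (2 * d * (d + 1) * m) ^ 2 := fun j _ =>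
      sq_le_sq' (neg_le_of_abs_le (h6 j)) (le_of_abs_le (h6 j))
    refine (Finset.sum_le_card_nsmul _ _ _ this).trans ?_
    simp only [Finset.card_univ, Fintype.card_fin, nsmul_eq_mul]
    push_cast
    have e : (2 * d * ((d : ℝ) + 1) ^ 2 * m) ^ 2 =
      (d + 1) ^ 2 * (2 * d * (d + 1) * m) ^ 2 := by ring
    rw [e]
    exact mul_le_mul_of_nonneg_right (by nlinarith) (sq_nonneg _)
  exact (sq_le_sq₀ (norm_nonneg _) (by positivity)).1 h7

/-- The measure of a spherical cap of small radius `r` is at most a constant times `r ^ d`. -/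
lemma measure_cap_le {d : ℕ} (hd : 1 ≤ d) (x : UnitSphere d) {r : ℝ} (hr0 : 0 ≤ r)
    (hr : 4 * ((d : ℝ) + 1) * r ≤ 1) :
    sphereMeasure d (Metric.closedBall x r) ≤
      ENNReal.ofReal ((4 * d * ((d : ℝ) + 1) ^ 2) ^ d * r ^ d) := by
  obtain ⟨a, ha⟩ := exists_large_coord (x := (x : EuclideanSpace ℝ (Fin (d + 1)))) (by simp)
  let p : UnitSphere d → (Fin d → ℝ) :=
    fun y i => (y : EuclideanSpace ℝ (Fin (d + 1))) (a.succAbove i)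
  let q : Metric.closedBall x r → (Fin d → ℝ) := fun y => p y
  let K : NNReal := ⟨2 * d * ((d : ℝ) + 1) ^ 2, by positivity⟩
  have hq : AntilipschitzWith K q := by
    refine AntilipschitzWith.of_le_mul_dist fun y z => ?_
    have hy : ‖((y : UnitSphere d) : EuclideanSpace ℝ (Fin (d + 1))) - x‖ ≤ r := by
      have := y.2; rwa [Metric.mem_closedBall, Subtype.dist_eq, dist_eq_norm] at this
    have hz : ‖((z : UnitSphere d) : EuclideanSpace ℝ (Fin (d + 1))) - x‖ ≤ r := by
      have := z.2; rwa [Metric.mem_closedBall, Subtype.dist_eq, dist_eq_norm] at this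
    rw [Subtype.dist_eq, Subtype.dist_eq, dist_eq_norm]
    refine dist_le_proj hd a (by simp) (by simp) ha hr hy hz (fun j hj => ?_) dist_nonneg
    obtain ⟨i, rfl⟩ := Fin.exists_succAbove_eq hj
    exact (Real.dist_eq _ _).symm.le.trans (dist_le_pi_dist (q y) (q z) i)
  have h1 := hq.le_hausdorffMeasure_image (d := (d : ℝ)) (by positivity) Set.univ
  have h2 : μH[(d : ℝ)] (Set.univ : Set (Metric.closedBall x r)) =
      sphereMeasure d (Metric.closedBall x r) := by
    rw [sphereMeasure, ← isometry_subtype_coe.hausdorffMeasure_image (Or.inl (by positivity)),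
      Set.image_univ, Subtype.range_coe]
  have h3 : q '' Set.univ ⊆ Metric.closedBall (p x) r := by
    rintro _ ⟨y, -, rfl⟩
    rw [Metric.mem_closedBall, dist_pi_le_iff hr0]
    intro i
    rw [Real.dist_eq]
    have hy := y.2
    rw [Metric.mem_closedBall, Subtype.dist_eq, dist_eq_norm] at hy
    exact (abs_coord_le (_ - _) (a.succAbove i)).trans hy
  have h4 : (μH[(d : ℝ)] : Measure (Fin d → ℝ)) = volume := by
    rw [← hausdorffMeasure_pi_real, Fintype.card_fin]
  rw [h2, h4] at h1
  refine h1.trans ((mul_le_mul_right (measure_mono h3) _).trans ?_)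
  rw [Real.volume_pi_closedBall _ hr0, Fintype.card_fin, ENNReal.rpow_natCast]
  have hK : (K : ℝ≥0∞) = ENNReal.ofReal (2 * d * ((d : ℝ) + 1) ^ 2) := by
    rw [ENNReal.ofReal_eq_coe_nnreal (by positivity)]
    rfl
  rw [hK, ← ENNReal.ofReal_pow (by positivity), ← ENNReal.ofReal_mul (by positivity)]
  refine ENNReal.ofReal_le_ofReal (le_of_eq ?_)
  rw [← mul_pow, ← mul_pow]; congr 1; ring

lemma isFiniteMeasure_sphereMeasure {d : ℕ} (hd : 1 ≤ d) :
    IsFiniteMeasure (sphereMeasure d) := by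
  have hr : (0 : ℝ) < 1 / (4 * ((d : ℝ) + 1)) := by positivity
  have : IsLocallyFiniteMeasure (sphereMeasure d) := ⟨fun x =>
    ⟨_, Metric.closedBall_mem_nhds x hr, (measure_cap_le hd x hr.le
      (le_of_eq (by field_simp))).trans_lt ENNReal.ofReal_lt_top⟩⟩
  exact ⟨isCompact_univ.measure_lt_top⟩

/-! ### Packing, mesh norm and separation -/

lemma pow_diff_le {r : ℝ} (h0 : 0 ≤ r) (h1 : r ≤ 1) (m : ℕ) :
    (1 + r) ^ m - (1 - r) ^ m ≤ 2 * r * m * 2 ^ m := by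
  induction m with
  | zero => simp
  | succ m ih =>
    have e1 : (1 - r) ^ m ≤ 1 := pow_le_one₀ (by linarith) (by linarith)
    have e2 : (1 : ℝ) ≤ 2 ^ m := one_le_pow₀ (by norm_num)
    have e3 : (1 + r) ^ (m + 1) - (1 - r) ^ (m + 1) =
      (1 + r) * ((1 + r) ^ m - (1 - r) ^ m) + 2 * r * (1 - r) ^ m := by ring
    rw [e3]
    have e4 : (1 + r) * ((1 + r) ^ m - (1 - r) ^ m) ≤ 2 * (2 * r * m * 2 ^ m) :=
      mul_le_mul (by linarith) ih
        (sub_nonneg.2 (pow_le_pow_left₀ (by linarith) (by linarith) m)) (by norm_num)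
    have e5 : 2 * r * (1 - r) ^ m ≤ 2 * r * (2 * 2 ^ m) :=
      mul_le_mul_of_nonneg_left (by linarith) (by linarith)
    push_cast
    rw [pow_succ 2 m]
    linarith

/-- Packing bound: the balls of radius `r` around `2r`-separated points of the unit sphere are
disjoint and lie in the spherical shell `1 - r ≤ ‖y‖ ≤ 1 + r`, whose volume is `O(r)`. -/
lemma packing {d N : ℕ} (x : Fin N → EuclideanSpace ℝ (Fin (d + 1))) (hx : ∀ i, ‖x i‖ = 1)
    {r : ℝ} (hr0 : 0 < r) (hr1 : r ≤ 1) (hsep : ∀ i j, i ≠ j → 2 * r ≤ ‖x i - x j‖) :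
    N * r ^ d ≤ 2 * ((d : ℝ) + 1) * 2 ^ (d + 1) := by
  have hfr : Module.finrank ℝ (EuclideanSpace ℝ (Fin (d + 1))) = d + 1 := by simp
  set ω := volume.real (Metric.ball (0 : EuclideanSpace ℝ (Fin (d + 1))) 1) with hω
  have hω0 : 0 < ω := ENNReal.toReal_pos (Metric.measure_ball_pos _ _ one_pos).ne'
    measure_ball_lt_top.ne
  have hvol : ∀ (y : EuclideanSpace ℝ (Fin (d + 1))) {s : ℝ}, 0 ≤ s →
      volume.real (Metric.ball y s) = s ^ (d + 1) * ω := by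
    intro y s hs
    rw [measureReal_def, Measure.addHaar_ball _ _ hs, hfr, ENNReal.toReal_mul,
      ENNReal.toReal_ofReal (by positivity)]
    rfl
  have hdisj : Pairwise (Function.onFun Disjoint fun i => Metric.ball (x i) r) := by
    intro i j hij
    refine Metric.ball_disjoint_ball ?_
    rw [dist_eq_norm]; linarith [hsep i j hij]
  have hU : volume.real (⋃ i, Metric.ball (x i) r) = N * (r ^ (d + 1) * ω) := by
    rw [measureReal_iUnion_fintype hdisj (fun _ => measurableSet_ball)
      (fun _ => measure_ball_lt_top.ne)]
    simp [hvol _ hr0.le]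
  have hd2 : Disjoint (⋃ i, Metric.ball (x i) r) (Metric.ball 0 (1 - r)) := by
    rw [Set.disjoint_iUnion_left]
    intro i
    refine Metric.ball_disjoint_ball ?_
    rw [dist_zero_right, hx]; linarith
  have hsub : (⋃ i, Metric.ball (x i) r) ∪ Metric.ball 0 (1 - r) ⊆ Metric.ball 0 (1 + r) := by
    refine Set.union_subset (Set.iUnion_subset fun i => ?_)
      (Metric.ball_subset_ball (by linarith))
    refine Metric.ball_subset_ball' ?_
    rw [dist_zero_right, hx]; linarith
  have h1 := measureReal_mono hsub (measure_ball_lt_top (μ := volume)).ne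
  rw [measureReal_union hd2 measurableSet_ball
    ((measure_mono (Set.subset_union_left.trans hsub)).trans_lt measure_ball_lt_top).ne
    measure_ball_lt_top.ne, hU, hvol _ (by linarith), hvol _ (by linarith)] at h1
  have h2 : N * r ^ (d + 1) ≤ (1 + r) ^ (d + 1) - (1 - r) ^ (d + 1) := by
    refine le_of_mul_le_mul_right ?_ hω0
    linarith
  have h3 := h2.trans (pow_diff_le hr0.le hr1 (d + 1))
  push_cast at h3
  rw [pow_succ] at h3
  refine le_of_mul_le_mul_right ?_ hr0
  linarith

/-- Comparison of the chordal and geodesic distances. -/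
lemma norm_sub_le_geoDist {d : ℕ} (x y : UnitSphere d) :
    ‖(x : EuclideanSpace ℝ (Fin (d + 1))) - y‖ ≤ geoDist x y ∧
      geoDist x y ≤ 2 * ‖(x : EuclideanSpace ℝ (Fin (d + 1))) - y‖ := by
  have hb : |sdot x y| ≤ 1 := by
    have := abs_real_inner_le_norm (x : EuclideanSpace ℝ (Fin (d + 1))) y
    simpa [sdot] using this
  have hb' := abs_le.1 hb
  set θ := geoDist x y with hθ
  have h0 : 0 ≤ θ := arccos_nonneg _
  have hπ : θ ≤ π := arccos_le_pi _
  have hcos : cos θ = sdot x y := cos_arccos hb'.1 hb'.2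
  have hsin : 0 ≤ sin (θ / 2) := sin_nonneg_of_nonneg_of_le_pi (by linarith) (by linarith)
  have h1 : ‖(x : EuclideanSpace ℝ (Fin (d + 1))) - y‖ = 2 * sin (θ / 2) := by
    refine (sq_eq_sq₀ (norm_nonneg _) (by positivity)).1 ?_
    rw [norm_sub_sq_real]
    have e1 : cos θ = 1 - 2 * sin (θ / 2) ^ 2 := by
      have := cos_two_mul (θ / 2)
      rw [show 2 * (θ / 2) = θ by ring, cos_sq'] at this; linarith
    rw [hcos, sdot] at e1
    rw [e1]; simp; ring
  rw [h1]
  constructor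
  · have := sin_le (x := θ / 2) (by linarith)
    linarith
  · have e1 := mul_le_sin (x := θ / 2) (by linarith) (by linarith)
    have e2 : 1 / 2 ≤ 2 / π := by
      rw [div_le_div_iff₀ (by norm_num) pi_pos]; linarith [pi_le_four]
    nlinarith

/-- The mesh ratio bound in terms of chordal distances, with `r` half of the separation radius: the
comparison of distances costs a factor `2` in the separation. -/
lemma exists_sep {d N : ℕ} (hN : 2 ≤ N) {τ : ℝ} (x : Fin N → UnitSphere d)
    (hinj : Function.Injective x) (hτ : meshRatio x ≤ τ) :
    ∃ r : ℝ, 0 < r ∧ r ≤ 1 ∧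
      (∀ i j, i ≠ j → 2 * r ≤ ‖(x i : EuclideanSpace ℝ (Fin (d + 1))) - x j‖) ∧
      ∀ y : UnitSphere d, ∃ i, dist y (x i) ≤ 2 * τ * r := by
  have hne : Nonempty {q : Fin N × Fin N // q.1 ≠ q.2} :=
    ⟨⟨(⟨0, by omega⟩, ⟨1, by omega⟩), by simp⟩⟩
  have hne' : Nonempty (Fin N) := ⟨⟨0, by omega⟩⟩
  have hsep : ∀ i j, i ≠ j → sepRadius x ≤ ‖(x i : EuclideanSpace ℝ (Fin (d + 1))) - x j‖ := by
    intro i j hij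
    have h1 : ⨅ p : {q : Fin N × Fin N // q.1 ≠ q.2}, geoDist (x p.val.1) (x p.val.2) ≤
        geoDist (x i) (x j) := ciInf_le (Set.finite_range _).bddBelow
          (⟨(i, j), hij⟩ : {q : Fin N × Fin N // q.1 ≠ q.2})
    have h2 := (norm_sub_le_geoDist (x i) (x j)).2
    rw [sepRadius]; linarith
  have hpos : 0 < sepRadius x := by
    obtain ⟨p, hp⟩ := exists_eq_ciInf_of_finite
      (f := fun p : {q : Fin N × Fin N // q.1 ≠ q.2} => geoDist (x p.val.1) (x p.val.2))
    rw [sepRadius, ← hp]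
    have h1 := (norm_sub_le_geoDist (x p.val.1) (x p.val.2)).1
    have h2 : 0 < ‖(x p.val.1 : EuclideanSpace ℝ (Fin (d + 1))) - x p.val.2‖ := by
      rw [norm_pos_iff, sub_ne_zero]
      exact fun e => p.2 (hinj (Subtype.ext e))
    linarith
  refine ⟨sepRadius x / 2, by linarith, ?_, fun i j hij => by linarith [hsep i j hij], ?_⟩
  · have h1 := hsep ⟨0, by omega⟩ ⟨1, by omega⟩ (by simp)
    have h2 := norm_sub_le (x ⟨0, by omega⟩ : EuclideanSpace ℝ (Fin (d + 1))) (x ⟨1, by omega⟩)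
    simp only [norm_eq_of_mem_sphere] at h2
    linarith
  · intro y
    rw [meshRatio, div_le_iff₀ hpos] at hτ
    obtain ⟨i, hi⟩ := exists_eq_ciInf_of_finite (f := fun i => geoDist y (x i))
    refine ⟨i, ?_⟩
    have hb : BddAbove (Set.range fun y : UnitSphere d => ⨅ i, geoDist y (x i)) := by
      refine ⟨π, ?_⟩
      rintro _ ⟨z, rfl⟩
      exact (ciInf_le (Set.finite_range _).bddBelow ⟨0, by omega⟩).trans (arccos_le_pi _)
    have h1 : ⨅ i, geoDist y (x i) ≤ meshNorm x := le_ciSup hb y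
    rw [← hi] at h1
    rw [Subtype.dist_eq, dist_eq_norm]
    have h2 := (norm_sub_le_geoDist y (x i)).1
    linarith

/-! ### Existence of the weights -/

/-- Separation theorem behind the existence of the weights: a moment vector `v` is attained by
weights in the box `[0, 2 mᵢ]` as soon as no linear functional separates it from the moments of
the box. -/
lemma exists_weights {κ : Type*} [Fintype κ] {N : ℕ} (g : κ → Fin N → ℝ) (v : κ → ℝ)
    (m : Fin N → ℝ) (hm : ∀ i, 0 ≤ m i)
    (h : ∀ a : κ → ℝ, ∑ k, a k * v k ≤
      ∑ i, m i * (∑ k, a k * g k i + |∑ k, a k * g k i|)) :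
    ∃ w : Fin N → ℝ, (∀ i, 0 ≤ w i ∧ w i ≤ 2 * m i) ∧ ∀ k, ∑ i, w i * g k i = v k := by
  classical
  let T : (Fin N → ℝ) →ₗ[ℝ] (κ → ℝ) :=
    { toFun := fun w k => ∑ i, w i * g k i
      map_add' := fun w w' => by
        funext k; simp [add_mul, Finset.sum_add_distrib]
      map_smul' := fun c w => by
        funext k; simp [Finset.mul_sum, mul_assoc] }
  let B : Set (Fin N → ℝ) := Set.Icc 0 (fun i => 2 * m i)
  have hBc : IsCompact (T '' B) := isCompact_Icc.image T.continuous_of_finiteDimensional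
  have hBv : Convex ℝ (T '' B) := (convex_Icc _ _).linear_image T
  by_cases hv : v ∈ T '' B
  · obtain ⟨w, hw, hwv⟩ := hv
    exact ⟨w, fun i => ⟨hw.1 i, hw.2 i⟩, fun k => congrFun hwv k⟩
  · exfalso
    obtain ⟨f, u, hf, hu⟩ := geometric_hahn_banach_closed_point hBv hBc.isClosed hv
    let a : κ → ℝ := fun k => f (Pi.single k 1)
    have hfa : ∀ z : κ → ℝ, f z = ∑ k, a k * z k := by
      intro z
      have := LinearMap.pi_apply_eq_sum_univ (f : (κ → ℝ) →ₗ[ℝ] ℝ) z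
      simp only [ContinuousLinearMap.coe_coe, smul_eq_mul] at this
      rw [this]
      refine Finset.sum_congr rfl fun k _ => ?_
      rw [mul_comm]
      congr 2
      funext l
      simp [Pi.single_apply, eq_comm]
    let s : Fin N → ℝ := fun i => ∑ k, a k * g k i
    -- the weights of the box that maximise the separating functional
    let w : Fin N → ℝ := fun i => if 0 ≤ s i then 2 * m i else 0
    have hw : w ∈ B := by
      constructor <;> intro i <;> simp only [w, Pi.zero_apply] <;> split_ifs <;>
        linarith [hm i]
    have h1 := hf _ ⟨w, hw, rfl⟩
    have h2 : f (T w) = ∑ i, m i * (s i + |s i|) := by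
      rw [hfa]
      have e : ∀ k, a k * T w k = ∑ i, w i * (a k * g k i) := by
        intro k
        simp only [T, LinearMap.coe_mk, AddHom.coe_mk, Finset.mul_sum]
        exact Finset.sum_congr rfl fun i _ => by ring
      simp_rw [e]
      rw [Finset.sum_comm]
      refine Finset.sum_congr rfl fun i _ => ?_
      rw [← Finset.mul_sum]
      change w i * s i = _
      simp only [w]
      split_ifs with h3
      · rw [abs_of_nonneg h3]; ring
      · rw [abs_of_neg (not_le.1 h3)]; ring
    have h3 := h a
    rw [hfa v] at hu
    have h4 : ∑ i, m i * (s i + |s i|) = ∑ i, m i * (∑ k, a k * g k i + |∑ k, a k * g k i|) := rfl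
    linarith

/-- The sphere is partitioned into measurable cells, the fibres of `q`, contained in caps of radius
`η` around the nodes. -/
lemma exists_selection {d N : ℕ} (hN : 2 ≤ N) (x : Fin N → UnitSphere d) {η : ℝ}
    (hcov : ∀ y : UnitSphere d, ∃ i, dist y (x i) ≤ η) :
    ∃ q : UnitSphere d → Fin N, Measurable q ∧ ∀ y, dist y (x (q y)) ≤ η := by
  classical
  have : NeZero N := ⟨by omega⟩
  have hp : ∀ y : UnitSphere d, ∃ k : ℕ, dist y (x (Fin.ofNat N k)) ≤ η := by
    intro y
    obtain ⟨i, hi⟩ := hcov y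
    exact ⟨i, by simpa using hi⟩
  refine ⟨fun y => Fin.ofNat N (Nat.find (hp y)), ?_, fun y => Nat.find_spec (hp y)⟩
  exact (measurable_of_countable (Fin.ofNat N)).comp (measurable_find hp fun k =>
    (isClosed_le (continuous_id.dist continuous_const) continuous_const).measurableSet)

lemma integral_selection {d N : ℕ} [IsFiniteMeasure (sphereMeasure d)]
    {q : UnitSphere d → Fin N} (hq : Measurable q) (F : Fin N → ℝ) :
    ∫ y, F (q y) ∂(sphereMeasure d) = ∑ i, (sphereMeasure d).real (q ⁻¹' {i}) * F i := by
  rw [← integral_map hq.aemeasurable (measurable_of_countable F).aestronglyMeasurable,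
    integral_fintype .of_finite]
  refine Finset.sum_congr rfl fun i _ => ?_
  rw [map_measureReal_apply hq (measurableSet_singleton i), smul_eq_mul]

lemma integrable_sphere {d : ℕ} [IsFiniteMeasure (sphereMeasure d)] {f : UnitSphere d → ℝ}
    (hf : Continuous f) : Integrable f (sphereMeasure d) :=
  hf.integrable_of_hasCompactSupport (HasCompactSupport.of_compactSpace f)

/-- One-sided `L¹` Marcinkiewicz–Zygmund inequality: if the oscillation of `f` at the scale of the
cells has `L¹` norm at most half that of `f`, then the discretisation dominates the integral. -/
lemma integral_le_discrete {d N n : ℕ} [IsFiniteMeasure (sphereMeasure d)]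
    {x : Fin N → UnitSphere d} {η : ℝ} {q : UnitSphere d → Fin N} (hq : Measurable q)
    (hdist : ∀ y, dist y (x (q y)) ≤ η)
    {ι : Type} [Fintype ι] {c : ι → ℝ}
    {ρ : ι → EuclideanSpace ℝ (Fin (d + 1)) ≃ₗᵢ[ℝ] EuclideanSpace ℝ (Fin (d + 1))}
    (hsum : ∑ i, c i ≤ 1 / 2)
    (hosc : ∀ f ∈ EllTrig d n, ∀ x y, ‖x‖ = 1 → ‖y‖ = 1 → ‖y - x‖ ≤ η →
      |f y - f x| ≤ ∑ i, c i * |f (ρ i x)|)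
    {f : EuclideanSpace ℝ (Fin (d + 1)) → ℝ} (hf : f ∈ EllTrig d n) (hfc : Continuous f) :
    ∫ y : UnitSphere d, f y ∂(sphereMeasure d) ≤
      ∑ i, (sphereMeasure d).real (q ⁻¹' {i}) * (f (x i) + |f (x i)|) := by
  set μ := sphereMeasure d
  have hfs : Continuous fun y : UnitSphere d => f y := hfc.comp continuous_subtype_val
  have hGi : ∀ i, Integrable (fun y : UnitSphere d => c i * |f (ρ i y)|) μ := fun i =>
    integrable_sphere (continuous_const.mul
      (hfc.comp ((ρ i).continuous.comp continuous_subtype_val)).abs)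
  have hG : ∫ y : UnitSphere d, ∑ i, c i * |f (ρ i y)| ∂μ =
      (∑ i, c i) * ∫ y : UnitSphere d, |f y| ∂μ := by
    rw [integral_finsetSum _ fun i _ => hGi i, Finset.sum_mul]
    refine Finset.sum_congr rfl fun i _ => ?_
    rw [integral_const_mul]
    congr 1
    exact integral_sphere_comp (ρ i) fun z => |f z|
  have hGI : Integrable (fun y : UnitSphere d => ∑ i, c i * |f (ρ i y)|) μ :=
    integrable_finsetSum _ fun i _ => hGi i
  have hFI : ∀ F : Fin N → ℝ, Integrable (fun y => F (q y)) μ := fun F =>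
    (Integrable.of_finite (μ := μ.map q)).comp_measurable hq
  have hpt : ∀ y : UnitSphere d, |f (x (q y)) - f y| ≤ ∑ i, c i * |f (ρ i y)| := by
    intro y
    refine hosc f hf y (x (q y)) (by simp) (by simp) ?_
    have := hdist y
    rwa [Subtype.dist_eq, dist_comm, dist_eq_norm] at this
  have h1 : ∫ y : UnitSphere d, f y ∂μ ≤
      ∫ y, f (x (q y)) ∂μ + ∫ y : UnitSphere d, ∑ i, c i * |f (ρ i y)| ∂μ := by
    rw [← integral_add (hFI fun i => f (x i)) hGI]
    refine integral_mono (integrable_sphere hfs) ((hFI fun i => f (x i)).add hGI) fun y => ?_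
    have := (abs_le.1 (hpt y)).1
    simp only
    linarith
  have h2 : ∫ y : UnitSphere d, |f y| ∂μ ≤
      ∫ y, |f (x (q y))| ∂μ + ∫ y : UnitSphere d, ∑ i, c i * |f (ρ i y)| ∂μ := by
    rw [← integral_add (hFI fun i => |f (x i)|) hGI]
    refine integral_mono (integrable_sphere hfs.abs) ((hFI fun i => |f (x i)|).add hGI)
      fun y => ?_
    have e1 := hpt y
    have e2 := abs_sub_abs_le_abs_sub (f y) (f (x (q y)))
    rw [abs_sub_comm] at e2
    simp only
    linarith
  have h3 : (0 : ℝ) ≤ ∫ y : UnitSphere d, |f y| ∂μ := integral_nonneg fun _ => abs_nonneg _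
  have h4 : (∑ i, c i) * ∫ y : UnitSphere d, |f y| ∂μ ≤ 1 / 2 * ∫ y : UnitSphere d, |f y| ∂μ :=
    mul_le_mul_of_nonneg_right hsum h3
  have h5 : ∑ i, μ.real (q ⁻¹' {i}) * (f (x i) + |f (x i)|) =
      ∫ y, f (x (q y)) ∂μ + ∫ y, |f (x (q y))| ∂μ := by
    rw [integral_selection hq (fun i => f (x i)), integral_selection hq (fun i => |f (x i)|),
      ← Finset.sum_add_distrib]
    exact Finset.sum_congr rfl fun i _ => mul_add _ _ _
  rw [h5]
  rw [hG] at h1 h2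
  linarith

/-- Quadrature exact on monomials of partial degrees at most `L₀` is exact on polynomials of
degree at most `L₀`. -/
lemma exact_of_monom {d N L₀ : ℕ} [IsFiniteMeasure (sphereMeasure d)]
    {x : Fin N → UnitSphere d} {w : Fin N → ℝ}
    (hw : ∀ k : Fin (d + 1) → Fin (L₀ + 1), ∑ i, w i * monom (fun j => (k j : ℕ)) (x i) =
      ∫ y : UnitSphere d, monom (fun j => (k j : ℕ)) y ∂(sphereMeasure d))
    {L : ℕ} (hL : L ≤ L₀) {P : UnitSphere d → ℝ} (hP : P ∈ sphPoly d L) :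
    ∫ y, P y ∂(sphereMeasure d) = ∑ i, w i * P (x i) := by
  obtain ⟨p, hp, hPp⟩ := hP
  have hPe : ∀ y, P y = ∑ s ∈ p.support, p.coeff s * monom (fun j => s j) y := by
    intro y
    rw [hPp, MvPolynomial.eval_eq']
    rfl
  have hfi : ∀ s ∈ p.support, Integrable
      (fun y : UnitSphere d => p.coeff s * monom (fun j => s j) y) (sphereMeasure d) :=
    fun s _ => integrable_sphere
      (continuous_const.mul ((continuous_monom _).comp continuous_subtype_val))
  simp_rw [hPe]
  rw [integral_finsetSum _ hfi]
  simp_rw [Finset.mul_sum]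
  rw [Finset.sum_comm]
  refine Finset.sum_congr rfl fun s hs => ?_
  have hsL : ∀ j, s j < L₀ + 1 := by
    intro j
    have e1 := MvPolynomial.le_totalDegree hs
    have e2 : s j ≤ s.sum fun _ e => e := by
      by_cases hj : j ∈ s.support
      · exact Finset.single_le_sum (f := fun j => s j) (fun _ _ => Nat.zero_le _) hj
      · rw [Finsupp.notMem_support_iff.1 hj]; exact Nat.zero_le _
    omega
  have := hw fun j => ⟨s j, hsL j⟩
  simp only at this
  rw [integral_const_mul, ← this, Finset.mul_sum]
  exact Finset.sum_congr rfl fun i _ => by ring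

/-- The total mass in `sphere_osc` is at most `1 / 2` when `nη` is small in terms of `d`. -/
lemma total_mass_le {d n : ℕ} (hd : 1 ≤ d) {η : ℝ} (hη : 0 ≤ η)
    (hnη : n * η ≤ 1 / (128 * d * ((d : ℝ) + 1) ^ 2)) :
    ((d : ℝ) + 1) * ((1 + 4 * n * (8 * η * (d + 1))) ^ d - 1) ≤ 1 / 2 := by
  have hd' : (1 : ℝ) ≤ d := by exact_mod_cast hd
  set t : ℝ := 4 * n * (8 * η * (d + 1)) with ht
  have ht0 : 0 ≤ t := by positivity
  have h1 : d * t * (4 * ((d : ℝ) + 1)) ≤ 1 := by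
    rw [le_div_iff₀ (by positivity)] at hnη
    rw [ht]; linarith
  have h2 : d * t ≤ 1 := by nlinarith [mul_nonneg (by positivity : (0 : ℝ) ≤ d) ht0]
  have h3 : (1 + t) ^ d ≤ Real.exp (d * t) := by
    rw [Real.exp_nat_mul]
    exact pow_le_pow_left₀ (by linarith) (by linarith [Real.add_one_le_exp t]) d
  have h4 : |d * t| = d * t := abs_of_nonneg (by positivity)
  have h5 := Real.abs_exp_sub_one_le (x := d * t) (by rw [h4]; exact h2)
  rw [h4] at h5
  have h6 := (abs_le.1 h5).2
  calc ((d : ℝ) + 1) * ((1 + t) ^ d - 1) ≤ (d + 1) * (2 * (d * t)) := by gcongr; linarith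
    _ ≤ 1 / 2 := by linarith

/-- Positive quadrature for nodes of mesh size `η`, exact up to a degree `L₀` with `L₀ η` small, with
weights `O(η ^ d)`. -/
lemma exists_quadrature {d N L₀ : ℕ} (hd : 1 ≤ d) (hN : 2 ≤ N) (hL₀ : 1 ≤ L₀)
    (x : Fin N → UnitSphere d) {η : ℝ} (hη : 0 ≤ η)
    (hcov : ∀ y : UnitSphere d, ∃ i, dist y (x i) ≤ η)
    (hsmall : ((d + 1) * L₀ : ℕ) * η ≤ 1 / (128 * d * ((d : ℝ) + 1) ^ 2)) :
    ∃ w : Fin N → ℝ,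
      (∀ i, 0 ≤ w i ∧ w i ≤ 2 * ((4 * d * ((d : ℝ) + 1) ^ 2) ^ d * η ^ d)) ∧
      ∀ L ≤ L₀, ∀ P ∈ sphPoly d L,
        ∫ y, P y ∂(sphereMeasure d) = ∑ i, w i * P (x i) := by
  have := isFiniteMeasure_sphereMeasure hd
  have hd' : (1 : ℝ) ≤ d := by exact_mod_cast hd
  set n := (d + 1) * L₀ with hn
  have hn1 : 1 ≤ n := Nat.mul_pos (by omega) hL₀
  have hηs : η * (128 * d * ((d : ℝ) + 1) ^ 2) ≤ 1 := by
    rw [le_div_iff₀ (by positivity)] at hsmall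
    refine le_trans ?_ hsmall
    refine mul_le_mul_of_nonneg_right ?_ (by positivity)
    exact le_mul_of_one_le_left hη (by exact_mod_cast hn1)
  have hη32 : 32 * η * d * ((d : ℝ) + 1) ^ 2 ≤ 1 := by
    have : 0 ≤ η * (d * ((d : ℝ) + 1) ^ 2) := by positivity
    linarith
  have hη4 : 4 * ((d : ℝ) + 1) * η ≤ 1 := by
    have e : (d : ℝ) + 1 ≤ d * ((d : ℝ) + 1) ^ 2 := by nlinarith
    have := mul_le_mul_of_nonneg_right e hη
    have : 0 ≤ η * (d * ((d : ℝ) + 1) ^ 2) := by positivity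
    linarith
  obtain ⟨ι, hι, c, ρ, hc, hsum, hosc⟩ :=
    sphere_osc (d := d) (n := n) (by omega) hη hη32 hd
  have hsum' := hsum.trans (total_mass_le hd hη hsmall)
  obtain ⟨q, hq, hdist⟩ := exists_selection hN x hcov
  set m : Fin N → ℝ := fun i => (sphereMeasure d).real (q ⁻¹' {i}) with hm
  have hm0 : ∀ i, 0 ≤ m i := fun i => measureReal_nonneg
  have hmη : ∀ i, m i ≤ (4 * d * ((d : ℝ) + 1) ^ 2) ^ d * η ^ d := by
    intro i
    refine ENNReal.toReal_le_of_le_ofReal (by positivity) (le_trans (measure_mono ?_)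
      (measure_cap_le hd (x i) hη hη4))
    intro y hy
    have h1 := hdist y
    rw [Set.mem_preimage, Set.mem_singleton_iff] at hy
    rw [hy] at h1
    exact h1
  have hsep : ∀ a : (Fin (d + 1) → Fin (L₀ + 1)) → ℝ,
      ∑ k, a k * ∫ y : UnitSphere d, monom (fun j => (k j : ℕ)) y ∂(sphereMeasure d) ≤
        ∑ i, m i * (∑ k, a k * monom (fun j => (k j : ℕ)) (x i) +
          |∑ k, a k * monom (fun j => (k j : ℕ)) (x i)|) := by
    intro a
    let f : EuclideanSpace ℝ (Fin (d + 1)) → ℝ :=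
      ∑ k : Fin (d + 1) → Fin (L₀ + 1), a k • monom (fun j => (k j : ℕ))
    have hfv : ∀ z, f z = ∑ k, a k * monom (fun j => (k j : ℕ)) z := fun z => by
      simp [f, Finset.sum_apply]
    have hf : f ∈ EllTrig d n := by
      refine Submodule.sum_mem _ fun k _ => Submodule.smul_mem _ _ ?_
      refine EllTrig.mono ?_ (EllTrig.monom _)
      refine (Finset.sum_le_card_nsmul _ _ L₀ fun j _ => Nat.lt_succ_iff.1 (k j).2).trans ?_
      simp [hn]
    have hfc : Continuous f := by
      have : f = fun z => ∑ k, a k * monom (fun j => (k j : ℕ)) z := funext hfv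
      rw [this]
      exact continuous_finsetSum _ fun k _ => continuous_const.mul (continuous_monom _)
    have h1 := integral_le_discrete hq hdist hsum' hosc hf hfc
    simp only [hfv] at h1
    have hI : ∀ k ∈ Finset.univ, Integrable
        (fun y : UnitSphere d => a k * monom (fun j => (k j : ℕ)) y) (sphereMeasure d) :=
      fun k _ => integrable_sphere
        (continuous_const.mul ((continuous_monom _).comp continuous_subtype_val))
    rw [integral_finsetSum _ hI] at h1
    simp only [integral_const_mul] at h1
    exact h1
  obtain ⟨w, hw, hwe⟩ := exists_weights
    (fun (k : Fin (d + 1) → Fin (L₀ + 1)) i => monom (fun j => (k j : ℕ)) (x i))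
    (fun k => ∫ y : UnitSphere d, monom (fun j => (k j : ℕ)) y ∂(sphereMeasure d)) m hm0 hsep
  exact ⟨w, fun i => ⟨(hw i).1, (hw i).2.trans (by linarith [hmη i])⟩,
    fun L hL P hP => exact_of_monom hwe hL hP⟩

/-- Degree zero: equal weights. -/
lemma exists_quadrature_zero {d N : ℕ} (hN : 2 ≤ N) (x : Fin N → UnitSphere d)
    {P : UnitSphere d → ℝ} (hP : P ∈ sphPoly d 0) :
    ∫ y, P y ∂(sphereMeasure d) = ∑ i, (sphereMeasure d).real Set.univ / N * P (x i) := by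
  obtain ⟨p, hp, hPp⟩ := hP
  have hp0 := MvPolynomial.totalDegree_eq_zero_iff_eq_C.1 (Nat.le_zero.1 hp)
  have hc : ∀ y, P y = p.coeff 0 := fun y => by
    rw [hPp, hp0]; simp
  have hN0 : (N : ℝ) ≠ 0 := by positivity
  simp only [hc, integral_const, smul_eq_mul, Finset.sum_const, Finset.card_univ,
    Fintype.card_fin, nsmul_eq_mul]
  field_simp

end

/-- If `{X_N}` is a `τ`-quasi uniform sequence of point sets on `S^d`, then for every `N ≥ 2`
there exist weights `0 ≤ w_i ≤ c₂ N^{-1}` such that `∫_{S^d} P dω = Σ_i w_i P(x_i)` for every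
spherical polynomial `P` of degree at most `c₃ N^{1/d}`, with `c₂, c₃` depending only on `τ, d`. -/
theorem stmt_16 (d : ℕ) (hd : 2 ≤ d) (τ : ℝ) (hτ : 2 ≤ τ) :
    ∃ c₂ > (0 : ℝ), ∃ c₃ > (0 : ℝ),
      ∀ (N : ℕ), 2 ≤ N → ∀ x : Fin N → UnitSphere d,
        Function.Injective x → meshRatio x ≤ τ →
        ∃ w : Fin N → ℝ, (∀ i, 0 ≤ w i ∧ w i ≤ c₂ / (N : ℝ)) ∧
          ∀ L : ℕ, (L : ℝ) ≤ c₃ * (N : ℝ) ^ ((1 : ℝ) / (d : ℝ)) →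
            ∀ P ∈ sphPoly d L,
              ∫ y, P y ∂(sphereMeasure d) = ∑ i, w i * P (x i) := by
  have hd1 : 1 ≤ d := by omega
  have hd' : (1 : ℝ) ≤ d := by exact_mod_cast hd1
  have hτ0 : 0 < τ := by linarith
  set D₁ : ℝ := 2 * ((d : ℝ) + 1) * 2 ^ (d + 1) with hD₁
  have hD₁1 : 1 ≤ D₁ := by
    have : (1 : ℝ) ≤ 2 ^ (d + 1) := one_le_pow₀ (by norm_num)
    nlinarith
  set κ : ℝ := 1 / (128 * d * ((d : ℝ) + 1) ^ 2) with hκ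
  have hκ0 : 0 < κ := by positivity
  set A : ℝ := 2 * (4 * d * ((d : ℝ) + 1) ^ 2) ^ d * (2 * τ) ^ d * D₁ with hA
  have hA0 : 0 < A := by positivity
  set V : ℝ := (sphereMeasure d).real Set.univ with hV
  have hV0 : 0 ≤ V := measureReal_nonneg
  -- `c₃` is chosen so that `(d + 1) L₀ · 2τr ≤ κ` follows from the packing bound `N^{1/d} r ≤ D₁`;
  -- `V` in `c₂` serves only the constant polynomials, that is the case `c₃ N^{1/d} < 1`
  refine ⟨A + V, by linarith, κ / (2 * τ * (d + 1) * D₁), by positivity, ?_⟩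
  intro N hN x hinj hmesh
  have hN0 : (0 : ℝ) < N := by positivity
  set M : ℝ := (N : ℝ) ^ ((1 : ℝ) / (d : ℝ)) with hM
  have hM0 : 0 < M := by positivity
  have hMd : M ^ d = N := by
    rw [hM, one_div, Real.rpow_inv_natCast_pow hN0.le (by omega)]
  set c₃ : ℝ := κ / (2 * τ * (d + 1) * D₁) with hc₃
  have hc₃0 : 0 < c₃ := by positivity
  have hc₃e : c₃ * (2 * τ * (d + 1) * D₁) = κ := by rw [hc₃]; field_simp
  set L₀ : ℕ := ⌊c₃ * M⌋₊ with hL₀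
  have hfloor : (L₀ : ℝ) ≤ c₃ * M := Nat.floor_le (by positivity)
  rcases Nat.eq_zero_or_pos L₀ with h0 | hpos
  · refine ⟨fun _ => V / N, fun i => ⟨by positivity, 
      div_le_div_of_nonneg_right (by linarith) hN0.le⟩, fun L hL P hP => ?_⟩
    have : L = 0 := Nat.le_zero.1 (h0 ▸ Nat.le_floor hL)
    subst this
    exact exists_quadrature_zero hN x hP
  · obtain ⟨r, hr0, hr1, hsep, hcov⟩ := exists_sep hN x hinj hmesh
    have hpack : N * r ^ d ≤ D₁ :=
      packing (fun i => (x i : EuclideanSpace ℝ (Fin (d + 1)))) (by simp) hr0 hr1 hsep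
    have hMr : M * r ≤ D₁ := by
      refine le_of_pow_le_pow_left₀ (n := d) (by omega) (by linarith) ?_
      rw [mul_pow, hMd]
      exact hpack.trans (le_self_pow₀ hD₁1 (by omega))
    obtain ⟨w, hw, hwe⟩ := exists_quadrature (L₀ := L₀) hd1 hN hpos x
      (η := 2 * τ * r) (by positivity) hcov (by
        push_cast
        calc ((d : ℝ) + 1) * L₀ * (2 * τ * r) ≤ (d + 1) * (c₃ * M) * (2 * τ * r) := by gcongr
          _ = c₃ * (2 * τ * (d + 1) * (M * r)) := by ring
          _ ≤ c₃ * (2 * τ * (d + 1) * D₁) := by gcongr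
          _ = κ := hc₃e)
    refine ⟨w, fun i => ⟨(hw i).1, (hw i).2.trans ?_⟩, fun L hL P hP =>
      hwe L (Nat.le_floor hL) P hP⟩
    rw [le_div_iff₀ hN0]
    calc 2 * ((4 * d * ((d : ℝ) + 1) ^ 2) ^ d * (2 * τ * r) ^ d) * N
        = 2 * (4 * d * ((d : ℝ) + 1) ^ 2) ^ d * (2 * τ) ^ d * (N * r ^ d) := by
          rw [mul_pow (2 * τ) r]; ring
      _ ≤ A := by rw [hA]; gcongr
      _ ≤ A + V := by linarith
end
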